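/- Let 0 < α_1, α_3 < 1 and −1/2 < α_2 ≤ 0 with α_1 + α_2 + α_3 = 1. For any three measurable subsets E_1, E_2, E_3 of [0,∞) of finite measure such that |E_2| is maximal among |E_1|, |E_2|, |E_3|, there exists a major subset E_2' ⊆ E_2 (that is, |E_2'| ≥ |E_2|/2) such that for all measurable functions f_1, f_2, f_3 with |f_1| ≤ 1_{E_1}, |f_3| ≤ 1_{E_3}, and |f_2| ≤ 1_{E_2'}, one has |Λ_L(f_1, f_2, f_3)| ≤ C |E_1|^{α_1} |E_2|^{α_2} |E_3|^{α_3}, where C depends only on α_1, α_2, α_3 and is uniform in the parameter L ≥ 2 and in N. -/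

import Mathlib

open MeasureTheory Set ENNReal NNReal

noncomputable section

namespace Quartile

/-- The Walsh functions on `[0,1)` (extended by zero), in Walsh-Paley order,
defined by the recursion `W_{2l} = W_l(2x) + W_l(2x-1)`, `W_{2l+1} = W_l(2x) - W_l(2x-1)`. -/
def walsh (n : ℕ) (x : ℝ) : ℝ :=
  if h : n = 0 then (if 0 ≤ x ∧ x < 1 then 1 else 0)
  else if n % 2 = 0 then walsh (n / 2) (2 * x) + walsh (n / 2) (2 * x - 1)
  else walsh (n / 2) (2 * x) - walsh (n / 2) (2 * x - 1)
termination_by n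
decreasing_by
  all_goals exact Nat.div_lt_self (Nat.pos_of_ne_zero h) one_lt_two

/-- The dyadic interval `[2^k n, 2^k (n+1)) ⊆ [0,∞)`. -/
def dyadicI (k : ℤ) (n : ℕ) : Set ℝ := Ico ((2:ℝ)^k * n) ((2:ℝ)^k * (n+1))

/-- A tile: the dyadic rectangle `[2^k n, 2^k(n+1)) × [2^{-k} l, 2^{-k}(l+1))` of area one. -/
structure Tile where
  k : ℤ
  n : ℕ
  l : ℕ

namespace Tile

/-- The time interval `I_p` of a tile. -/
def timeI (p : Tile) : Set ℝ := Ico ((2:ℝ)^p.k * p.n) ((2:ℝ)^p.k * (p.n+1))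

/-- The frequency interval `ω_p` of a tile. -/
def freqI (p : Tile) : Set ℝ := Ico ((2:ℝ)^(-p.k) * p.l) ((2:ℝ)^(-p.k) * (p.l+1))

/-- The tile as a subset of the phase plane. -/
def toSet (p : Tile) : Set (ℝ × ℝ) := p.timeI ×ˢ p.freqI

/-- The Walsh wave packet `w_p` of a tile, `L²`-normalized. -/
def wp (p : Tile) (x : ℝ) : ℝ :=
  Real.sqrt ((2:ℝ)^(-p.k)) * walsh p.l ((2:ℝ)^(-p.k) * x - p.n)

end Tile

/-- The order on dyadic rectangles: `p ≤ q` iff `I_p ⊆ I_q` and `ω_q ⊆ ω_p`, for tiles. -/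
def tileLE (p q : Tile) : Prop := p.timeI ⊆ q.timeI ∧ q.freqI ⊆ p.freqI

/-- The inner product `⟨f, w_p⟩` of a function with a (real valued) wave packet. -/
def coef (f : ℝ → ℂ) (p : Tile) : ℂ := ∫ x, f x * (p.wp x : ℂ)

/-- The rank one projection `Π_p f = ⟨f, w_p⟩ w_p` associated to a single tile. -/
def projT (p : Tile) (f : ℝ → ℂ) (x : ℝ) : ℂ := coef f p * (p.wp x : ℂ)

/-- The projection associated to a collection of (pairwise disjoint) tiles. -/
def projSet (𝔭 : Set Tile) (f : ℝ → ℂ) (x : ℝ) : ℂ := ∑' p : 𝔭, projT p f x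

/-- The maximal tiles contained in a subset `S` of the phase plane; when `S` is a disjoint
union of tiles (of the kind appearing below) these form the canonical tiling of `S`. -/
def maxTiles (S : Set (ℝ × ℝ)) : Set Tile :=
  {p | p.toSet ⊆ S ∧ ∀ q : Tile, q.toSet ⊆ S → tileLE p q → q = p}

/-- The phase plane projection `Π_S` associated to a subset `S` of the phase plane,
computed with the canonical tiling of `S` by maximal tiles (the projection is independent
of the chosen tiling). -/
def piProj (S : Set (ℝ × ℝ)) (f : ℝ → ℂ) (x : ℝ) : ℂ := projSet (maxTiles S) f x

/-- A bitile: the dyadic rectangle `[2^k n, 2^k(n+1)) × [2^{1-k} l, 2^{1-k}(l+1))` of area two. -/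
structure Bitile where
  k : ℤ
  n : ℕ
  l : ℕ

namespace Bitile

/-- The time interval `I_P` of a bitile. -/
def timeI (P : Bitile) : Set ℝ := Ico ((2:ℝ)^P.k * P.n) ((2:ℝ)^P.k * (P.n+1))

/-- The frequency interval `ω_P` of a bitile. -/
def freqI (P : Bitile) : Set ℝ := Ico ((2:ℝ)^(1-P.k) * P.l) ((2:ℝ)^(1-P.k) * (P.l+1))

/-- The bitile as a subset of the phase plane. -/
def toSet (P : Bitile) : Set (ℝ × ℝ) := P.timeI ×ˢ P.freqI

/-- The lower tile `P_d` of a bitile. -/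
def d (P : Bitile) : Tile := ⟨P.k, P.n, 2*P.l⟩

/-- The upper tile `P_u` of a bitile. -/
def u (P : Bitile) : Tile := ⟨P.k, P.n, 2*P.l+1⟩

/-- The left tile of a bitile. -/
def left (P : Bitile) : Tile := ⟨P.k-1, 2*P.n, P.l⟩

/-- The right tile of a bitile. -/
def right (P : Bitile) : Tile := ⟨P.k-1, 2*P.n+1, P.l⟩

/-- The `L^∞`-normalized wave packet `φ_{P_d} = |I_P|^{1/2} w_{P_d}`. -/
def phid (P : Bitile) (x : ℝ) : ℝ := Real.sqrt ((2:ℝ)^P.k) * P.d.wp x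

end Bitile

/-- The order on dyadic rectangles, for bitiles. -/
def bitileLE (P Q : Bitile) : Prop := P.timeI ⊆ Q.timeI ∧ Q.freqI ⊆ P.freqI

/-- Strict order on bitiles. -/
def bitileLT (P Q : Bitile) : Prop := bitileLE P Q ∧ P ≠ Q

/-- A collection of bitiles is convex if together with `P₁ < P < P₂` for `P₁, P₂` in the
collection it contains `P`. -/
def IsConvex (PP : Set Bitile) : Prop :=
  ∀ P1 P2 P : Bitile, P1 ∈ PP → P2 ∈ PP → bitileLT P1 P → bitileLT P P2 → P ∈ PP

/-- A tree: a collection of bitiles with a (unique) maximal element `P_T = I_T × ω_T`. -/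
structure Tree where
  carrier : Set Bitile
  top : Bitile
  top_mem : top ∈ carrier
  le_top : ∀ P ∈ carrier, bitileLE P top

namespace Tree

/-- `T_d`: those bitiles of the tree whose lower tile frequency interval contains `ω_T`
(in the paper's notation, `P_T ≤ P_d`). -/
def Td (T : Tree) : Set Bitile := {P | P ∈ T.carrier ∧ T.top.freqI ⊆ P.d.freqI}

/-- `T_u`: those bitiles of the tree whose upper tile frequency interval contains `ω_T`
(in the paper's notation, `P_T ≤ P_u`). -/
def Tu (T : Tree) : Set Bitile := {P | P ∈ T.carrier ∧ T.top.freqI ⊆ P.u.freqI}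

/-- The region `⋃_{P ∈ T} P` of the phase plane occupied by a tree. -/
def unionSet (T : Tree) : Set (ℝ × ℝ) := ⋃ P ∈ T.carrier, P.toSet

/-- The phase plane projection `Π_T` of a (convex) tree. -/
def proj (T : Tree) (f : ℝ → ℂ) : ℝ → ℂ := piProj T.unionSet f

end Tree

/-- The vertical dilation `2^L S` of a subset of the phase plane. -/
def dilate (L : ℕ) (S : Set (ℝ × ℝ)) : Set (ℝ × ℝ) := (fun q => (q.1, (2:ℝ)^L * q.2)) '' S

/-- The enlarged tree `T^{(L)}` with respect to a frequency `ξ ∈ ω_T`: all bitiles `P` with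
`2^L ξ ∈ ω_P` contained in a rectangle `2^L P'` with `P' ∈ T`. -/
def Tree.enlarged (L : ℕ) (T : Tree) (ξ : ℝ) : Set Bitile :=
  {P | (2:ℝ)^L * ξ ∈ P.freqI ∧ ∃ P' ∈ T.carrier, P.toSet ⊆ dilate L P'.toSet}

/-- The region of the phase plane occupied by the enlarged tree `T^{(L)}`. -/
def Tree.enlargedSet (L : ℕ) (T : Tree) (ξ : ℝ) : Set (ℝ × ℝ) :=
  ⋃ P ∈ T.enlarged L ξ, P.toSet

/-- The left endpoint of `ω_T`, a canonical choice of `ξ ∈ ω_T`. -/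
def Tree.xiTop (T : Tree) : ℝ := (2:ℝ)^(1-T.top.k) * T.top.l

/-- The phase plane projection `Π_{T^{(L)}}` of the enlarged tree (independent of the
choice of `ξ ∈ ω_T`; we use the canonical choice).  For `L = 0` this is `Π_T`. -/
def Tree.projL (L : ℕ) (T : Tree) (f : ℝ → ℂ) : ℝ → ℂ := piProj (T.enlargedSet L T.xiTop) f

/-- `size^{(L)}(PP, f) = sup |I_T|^{-1/2} ‖Π_{T^{(L)}} f‖₂`, the supremum over convex trees
`T ⊆ PP`.  For `L = 0` this is the plain `size(PP, f)`. -/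
def size (L : ℕ) (PP : Set Bitile) (f : ℝ → ℂ) : ℝ≥0∞ :=
  ⨆ (T : Tree) (_ : T.carrier ⊆ PP ∧ IsConvex T.carrier),
    (ENNReal.ofReal (Real.sqrt ((2:ℝ)^T.top.k)))⁻¹ * eLpNorm (T.projL L f) 2 volume

/-- The quartile form `Λ_{PP}` restricted to a collection `PP` of bitiles. -/
def quartileFormOn (L : ℕ) (PP : Set Bitile) (f1 f2 f3 : ℝ → ℂ) : ℂ :=
  ∫ x, ∑' P : PP, (P.1.phid x : ℂ) * projT P.1.u f1 x *
      piProj (dilate L P.1.d.toSet) f2 x * piProj (dilate L P.1.d.toSet) f3 x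

/-- The bitiles contained in the strip `ℝ₊ × [0, 2^N)`. -/
def stripBitiles (N : ℕ) : Set Bitile := {P | P.freqI ⊆ Ico (0:ℝ) ((2:ℝ)^N)}

/-- The quartile form `Λ_L` (with frequency truncation parameter `N`). -/
def quartileForm (L N : ℕ) (f1 f2 f3 : ℝ → ℂ) : ℂ :=
  quartileFormOn L (stripBitiles N) f1 f2 f3

/-- The quartile form perturbed by a bounded sequence of coefficients `c_P`. -/
def quartileFormC (L N : ℕ) (c : Bitile → ℂ) (f1 f2 f3 : ℝ → ℂ) : ℂ :=
  ∫ x, ∑' P : stripBitiles N, c P.1 * (P.1.phid x : ℂ) * projT P.1.u f1 x *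
      piProj (dilate L P.1.d.toSet) f2 x * piProj (dilate L P.1.d.toSet) f3 x

/-- The counting function `Σ_{T ∈ 𝕋} 1_{I_T}` of a collection of trees. -/
def countingFn (𝕋 : Set Tree) (x : ℝ) : ℝ≥0∞ :=
  ∑' T : 𝕋, (T.1.top.timeI).indicator (fun _ => (1:ℝ≥0∞)) x

/-- The average of an `ℝ≥0∞`-valued function over a set. -/
def avgOn (I : Set ℝ) (g : ℝ → ℝ≥0∞) : ℝ≥0∞ := (volume I)⁻¹ * ∫⁻ x in I, g x

/-- The dyadic BMO norm on `[0,∞)` of an `ℝ≥0∞`-valued function. -/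
def dyadicBMO (g : ℝ → ℝ≥0∞) : ℝ≥0∞ :=
  ⨆ (k : ℤ) (n : ℕ), avgOn (dyadicI k n)
    (fun x => (g x - avgOn (dyadicI k n) g) + (avgOn (dyadicI k n) g - g x))

/-- The dyadic Hardy-Littlewood maximal function on `[0,∞)`. -/
def dyadicMax (f : ℝ → ℂ) (x : ℝ) : ℝ≥0∞ :=
  ⨆ (k : ℤ) (n : ℕ) (_ : x ∈ dyadicI k n),
    (volume (dyadicI k n))⁻¹ * ∫⁻ y in dyadicI k n, ‖f y‖₊

/-- The dyadic interval of length `2^j` containing `y ≥ 0`. -/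
def freqInterval (j : ℤ) (y : ℝ) : Set ℝ :=
  Ico ((2:ℝ)^j * ⌊y / (2:ℝ)^j⌋) ((2:ℝ)^j * (⌊y / (2:ℝ)^j⌋ + 1))

/-- The projection `Π_l := Π_{I_T × ω_l}`, where `ω_l` is the dyadic interval of
length `2^l` containing the frequency `y`. -/
def PiScale (T : Tree) (j : ℤ) (y : ℝ) (f : ℝ → ℂ) : ℝ → ℂ :=
  piProj (T.top.timeI ×ˢ freqInterval j y) f

/-- The difference projection `Π_l^Δ = Π_l - Π_{l-1}`. -/
def PiDelta (T : Tree) (j : ℤ) (y : ℝ) (f : ℝ → ℂ) (x : ℝ) : ℂ :=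
  PiScale T j y f x - PiScale T (j-1) y f x

/-!
Remove from `E₂` the union `Ω` of the dyadic intervals in which `E₁` or `E₃` is much denser
than its size relative to `E₂` allows; by the weak type bound for the dyadic maximal function this
costs at most half of `E₂`. A bitile whose time interval lies in `Ω` then contributes nothing, and
on the others the averages of `f₁`, `f₂`, `f₃` against wave packets are bounded by multiples of
`|E₁| / |E₂|`, `1` and `|E₃| / |E₂|`.

Only these averages enter the form: for a bitile `P`, splitting `2 ^ L P_d` in time shows that
`Π_{2^L P_d} f₂ · Π_{2^L P_d} f₃` is a step function, while `φ_{P_d} φ_{P_u}` is `1` on the left and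
`-1` on the right half of the time interval. On a tree the form telescopes along the two ways of
splitting a bitile, and a Bellman function bounds it by the product of the three sizes and the
length of the top, uniformly in `L`. A greedy selection of trees, controlled by Bessel's inequality,
lowers the sizes by a factor of two at a time; the resulting geometric series over the levels
converges because `α₁, α₃ < 1` and `α₁ + α₃ < 3/2`.
-/

/-! ### Dyadic intervals and the order on tiles -/

lemma mem_dyadicI_iff_floor {k : ℤ} {n : ℕ} {x : ℝ} :
    x ∈ dyadicI k n ↔ 0 ≤ x ∧ ⌊(2:ℝ) ^ (-k) * x⌋₊ = n := by
  have hpos : (0:ℝ) < 2 ^ k := by positivity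
  have hscale : x ∈ dyadicI k n ↔ n ≤ (2:ℝ) ^ (-k) * x ∧ (2:ℝ) ^ (-k) * x < n + 1 := by
    rw [dyadicI, mem_Ico, zpow_neg, inv_mul_eq_div, le_div_iff₀' hpos, div_lt_iff₀' hpos]
  rw [hscale]
  constructor
  · intro h
    have hx : 0 ≤ (2:ℝ) ^ (-k) * x := (Nat.cast_nonneg n).trans h.1
    exact ⟨nonneg_of_mul_nonneg_right hx (by positivity), (Nat.floor_eq_iff hx).2 h⟩
  · rintro ⟨hx, hn⟩
    exact (Nat.floor_eq_iff (by positivity)).1 hn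

lemma eq_of_mem_dyadicI {k : ℤ} {n n' : ℕ} {x : ℝ} (hx : x ∈ dyadicI k n)
    (hx' : x ∈ dyadicI k n') : n = n' :=
  (mem_dyadicI_iff_floor.1 hx).2.symm.trans (mem_dyadicI_iff_floor.1 hx').2

lemma dyadicI_subset_ancestor (k : ℤ) (n δ : ℕ) : dyadicI k n ⊆ dyadicI (k + δ) (n / 2 ^ δ) := by
  intro x hx
  rw [mem_dyadicI_iff_floor] at hx ⊢
  refine ⟨hx.1, ?_⟩
  rw [← hx.2, ← Nat.floor_div_natCast]
  congr 1
  rw [neg_add, zpow_add₀ two_ne_zero, zpow_neg _ (δ : ℤ), zpow_natCast]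
  push_cast
  ring

lemma left_mem_dyadicI (k : ℤ) (n : ℕ) : (2:ℝ) ^ k * n ∈ dyadicI k n :=
  left_mem_Ico.2 (by gcongr; linarith)

lemma volume_dyadicI (k : ℤ) (n : ℕ) : volume (dyadicI k n) = ENNReal.ofReal ((2:ℝ) ^ k) := by
  rw [dyadicI, Real.volume_Ico]
  congr 1
  ring

lemma dyadicI_subset_iff {k k' : ℤ} {n n' : ℕ} :
    dyadicI k n ⊆ dyadicI k' n' ↔ ∃ δ : ℕ, k' = k + δ ∧ n' = n / 2 ^ δ := by
  constructor
  · intro h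
    have hk : k ≤ k' := by
      have hvol := measure_mono h (μ := volume)
      rw [volume_dyadicI, volume_dyadicI, ENNReal.ofReal_le_ofReal_iff (by positivity)] at hvol
      exact (zpow_le_zpow_iff_right₀ _root_.one_lt_two).1 hvol
    obtain ⟨δ, rfl⟩ := Int.le.dest hk
    exact ⟨δ, rfl, eq_of_mem_dyadicI (h (left_mem_dyadicI k n))
      (dyadicI_subset_ancestor k n δ (left_mem_dyadicI k n))⟩
  · rintro ⟨δ, rfl, rfl⟩
    exact dyadicI_subset_ancestor k n δ

lemma dyadicI_subset_of_mem_of_mem {k k' : ℤ} {n n' : ℕ} (hk : k ≤ k') {x : ℝ}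
    (hx : x ∈ dyadicI k n) (hx' : x ∈ dyadicI k' n') : dyadicI k n ⊆ dyadicI k' n' := by
  obtain ⟨δ, rfl⟩ := Int.le.dest hk
  exact dyadicI_subset_iff.2 ⟨δ, rfl, eq_of_mem_dyadicI hx' (dyadicI_subset_ancestor k n δ hx)⟩

attribute [ext] Tile Bitile

lemma dyadicI_subset_and_subset_iff {k k' j j' : ℤ} {n n' l l' : ℕ} (h : k + j = k' + j') :
    dyadicI k n ⊆ dyadicI k' n' ∧ dyadicI j' l' ⊆ dyadicI j l ↔
      ∃ δ : ℕ, k' = k + δ ∧ n' = n / 2 ^ δ ∧ l = l' / 2 ^ δ := by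
  rw [dyadicI_subset_iff, dyadicI_subset_iff]
  constructor
  · rintro ⟨⟨δ, hk, hn⟩, δ', hj, hl⟩
    obtain rfl : δ = δ' := by omega
    exact ⟨δ, hk, hn, hl⟩
  · rintro ⟨δ, hk, hn, hl⟩
    exact ⟨⟨δ, hk, hn⟩, δ, by omega, hl⟩

lemma tileLE_iff {p q : Tile} :
    tileLE p q ↔ ∃ δ : ℕ, q.k = p.k + δ ∧ q.n = p.n / 2 ^ δ ∧ p.l = q.l / 2 ^ δ :=
  dyadicI_subset_and_subset_iff (by ring)

lemma bitileLE_iff {P Q : Bitile} :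
    bitileLE P Q ↔ ∃ δ : ℕ, Q.k = P.k + δ ∧ Q.n = P.n / 2 ^ δ ∧ P.l = Q.l / 2 ^ δ := by
  refine Iff.trans ?_ (dyadicI_subset_and_subset_iff (j := 1 - P.k) (j' := 1 - Q.k) (by ring))
  rfl

instance : PartialOrder Tile where
  le := tileLE
  le_refl _ := ⟨Subset.rfl, Subset.rfl⟩
  le_trans _ _ _ h h' := ⟨h.1.trans h'.1, h'.2.trans h.2⟩
  le_antisymm p q h h' := by
    obtain ⟨δ, hk, hn, hl⟩ := tileLE_iff.1 h
    obtain ⟨δ', hk', -⟩ := tileLE_iff.1 h'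
    obtain rfl : δ = 0 := by omega
    ext <;> simp_all

instance : PartialOrder Bitile where
  le := bitileLE
  le_refl _ := ⟨Subset.rfl, Subset.rfl⟩
  le_trans _ _ _ h h' := ⟨h.1.trans h'.1, h'.2.trans h.2⟩
  le_antisymm P Q h h' := by
    obtain ⟨δ, hk, hn, hl⟩ := bitileLE_iff.1 h
    obtain ⟨δ', hk', -⟩ := bitileLE_iff.1 h'
    obtain rfl : δ = 0 := by omega
    ext <;> simp_all

instance : DecidableEq Tile := Classical.decEq _
instance : DecidableEq Bitile := Classical.decEq _
instance : DecidableLE Tile := Classical.decRel _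
instance : DecidableLE Bitile := Classical.decRel _

namespace Tile

/-- The bitile with the same time interval which has the tile as its upper or lower half. -/
def bitile (p : Tile) : Bitile := ⟨p.k, p.n, p.l / 2⟩

/-- The vertical dilate `2 p` of a tile: the bitile over the same time interval whose frequency
interval is `2 ω_p`. -/
def double (p : Tile) : Bitile := ⟨p.k, p.n, p.l⟩

lemma le_iff {p q : Tile} :
    p ≤ q ↔ ∃ δ : ℕ, q.k = p.k + δ ∧ q.n = p.n / 2 ^ δ ∧ p.l = q.l / 2 ^ δ :=
  tileLE_iff

lemma eq_d_or_eq_u (p : Tile) : p = p.bitile.d ∨ p = p.bitile.u := by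
  rcases Nat.even_or_odd' p.l with ⟨l, hl | hl⟩
  · left; ext <;> simp only [bitile, Bitile.d]; omega
  · right; ext <;> simp only [bitile, Bitile.u]; omega

end Tile

namespace Bitile

variable {P Q : Bitile} {p q : Tile}

lemma le_iff : P ≤ Q ↔ ∃ δ : ℕ, Q.k = P.k + δ ∧ Q.n = P.n / 2 ^ δ ∧ P.l = Q.l / 2 ^ δ :=
  bitileLE_iff

@[simp] lemma d_bitile (P : Bitile) : P.d.bitile = P := by
  ext <;> simp [d, Tile.bitile]

@[simp] lemma u_bitile (P : Bitile) : P.u.bitile = P := by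
  ext <;> simp only [u, Tile.bitile]; omega

@[simp] lemma d_inj : P.d = Q.d ↔ P = Q :=
  ⟨fun h => by rw [← d_bitile P, h, d_bitile], fun h => h ▸ rfl⟩

@[simp] lemma u_inj : P.u = Q.u ↔ P = Q :=
  ⟨fun h => by rw [← u_bitile P, h, u_bitile], fun h => h ▸ rfl⟩

lemma d_ne_u : P.d ≠ Q.u := fun h => by
  have := congrArg Tile.l h
  simp only [d, u] at this
  omega

lemma le_left_or_le_right_iff :
    q ≤ P.left ∨ q ≤ P.right ↔
      ∃ δ : ℕ, P.k = q.k + (δ + 1 : ℕ) ∧ P.n = q.n / 2 ^ (δ + 1) ∧ q.l = P.l / 2 ^ δ := by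
  simp only [Tile.le_iff, left, right, pow_succ, ← Nat.div_div_eq_div_mul]
  constructor
  · rintro (⟨δ, hk, hn, hl⟩ | ⟨δ, hk, hn, hl⟩) <;> exact ⟨δ, by omega, by omega, hl⟩
  · rintro ⟨δ, hk, hn, hl⟩
    rcases Nat.mod_two_eq_zero_or_one (q.n / 2 ^ δ) with h | h
    · exact .inl ⟨δ, by omega, by omega, hl⟩
    · exact .inr ⟨δ, by omega, by omega, hl⟩

lemma le_iff_eq_or_of_bitile_eq (hp : p.bitile = P) :
    q ≤ p ↔ q = p ∨ q ≤ P.left ∨ q ≤ P.right := by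
  subst hp
  rw [le_left_or_le_right_iff, Tile.le_iff]
  simp only [Tile.bitile]
  constructor
  · rintro ⟨_ | δ, hk, hn, hl⟩
    · left; ext <;> simp_all
    · exact .inr ⟨δ, hk, hn, by rw [hl, pow_succ', Nat.div_div_eq_div_mul]⟩
  · rintro (rfl | ⟨δ, hk, hn, hl⟩)
    · exact ⟨0, by simp⟩
    · exact ⟨δ + 1, hk, hn, by rw [hl, pow_succ', Nat.div_div_eq_div_mul]⟩

lemma not_le_left_and_le_right : ¬ (q ≤ P.left ∧ q ≤ P.right) := by
  simp only [Tile.le_iff, left, right]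
  rintro ⟨⟨δ, hk, hn, -⟩, δ', hk', hn', -⟩
  obtain rfl : δ = δ' := by omega
  omega

lemma le_bitile_iff : Q ≤ p.bitile ↔ Q.d ≤ p ∨ Q.u ≤ p := by
  have half_div : ∀ a δ : ℕ, a / 2 / 2 ^ δ = a / 2 ^ δ / 2 := fun a δ => by
    rw [Nat.div_div_eq_div_mul, Nat.div_div_eq_div_mul, mul_comm]
  simp only [le_iff, Tile.le_iff, Tile.bitile, d, u, half_div]
  constructor
  · rintro ⟨δ, hk, hn, hl⟩
    rcases Nat.mod_two_eq_zero_or_one (p.l / 2 ^ δ) with h | h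
    · exact .inl ⟨δ, hk, hn, by omega⟩
    · exact .inr ⟨δ, hk, hn, by omega⟩
  · rintro (⟨δ, hk, hn, hl⟩ | ⟨δ, hk, hn, hl⟩) <;> exact ⟨δ, hk, hn, by omega⟩

lemma not_d_le_and_u_le : ¬ (Q.d ≤ p ∧ Q.u ≤ p) := by
  simp only [Tile.le_iff, d, u]
  rintro ⟨⟨δ, hk, -, hl⟩, δ', hk', -, hl'⟩
  obtain rfl : δ = δ' := by omega
  omega

lemma two_zpow_k (P : Bitile) : (2:ℝ) ^ P.k = 2 * 2 ^ P.left.k := by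
  rw [left, zpow_sub_one₀ two_ne_zero]
  ring

lemma left_bitile_le (P : Bitile) : P.left.bitile ≤ P :=
  le_iff.2 ⟨1, by simp [left, Tile.bitile]⟩

lemma right_bitile_le (P : Bitile) : P.right.bitile ≤ P :=
  le_iff.2 ⟨1, by simp only [right, Tile.bitile]; omega⟩

end Bitile

/-- Descending through left and right halves from any tile leaves a finite collection of bitiles
after finitely many steps. -/
theorem Tile.induction_below (PP : Finset Bitile) {motive : Tile → Prop}
    (leaf : ∀ p : Tile, (∀ Q ∈ PP, ¬ Q ≤ p.bitile) → motive p)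
    (step : ∀ P : Bitile, motive P.left → motive P.right → motive P.d ∧ motive P.u) (p : Tile) :
    motive p := by
  obtain ⟨K, hK⟩ : ∃ K : ℤ, ∀ Q ∈ PP, K ≤ Q.k :=
    (PP.image Bitile.k).bddBelow.imp fun K hK Q hQ => hK (Finset.mem_image_of_mem _ hQ)
  obtain ⟨D, hD⟩ : ∃ D : ℕ, p.k < K + D := ⟨(p.k - K + 1).toNat, by omega⟩
  induction D generalizing p with
  | zero =>
    refine leaf p fun Q hQ hle => ?_
    obtain ⟨δ, hk, -⟩ := Bitile.le_iff.1 hle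
    have := hK Q hQ
    simp only [Tile.bitile] at hk
    omega
  | succ D ih =>
    push_cast at hD
    have hstep := step p.bitile (ih _ (by simp only [Bitile.left, Tile.bitile]; omega))
      (ih _ (by simp only [Bitile.right, Tile.bitile]; omega))
    rcases p.eq_d_or_eq_u with h | h <;> rw [h]
    exacts [hstep.1, hstep.2]

/-! ### Sums over trees -/

section TreeSum

variable {E : Type*} [AddCommMonoid E]

/-- The sum over the bitiles of `PP` below a tile `p`, in which a bitile `Q` contributes `F Q` or
`G Q` according to whether its lower or its upper tile lies below `p`. -/
def treeSum (PP : Finset Bitile) (F G : Bitile → E) (p : Tile) : E :=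
  ∑ Q ∈ PP with Q.d ≤ p, F Q + ∑ Q ∈ PP with Q.u ≤ p, G Q

lemma sum_filter_le_of_bitile_eq {PP : Finset Bitile} {half : Bitile → Tile} (F : Bitile → E)
    {p : Tile} {P : Bitile} (hp : p.bitile = P) :
    ∑ Q ∈ PP with half Q ≤ p, F Q = ∑ Q ∈ PP with half Q = p, F Q +
      ∑ Q ∈ PP with half Q ≤ P.left, F Q + ∑ Q ∈ PP with half Q ≤ P.right, F Q := by
  simp only [Finset.sum_filter, ← Finset.sum_add_distrib]
  refine Finset.sum_congr rfl fun Q _ => ?_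
  have hle := Bitile.le_iff_eq_or_of_bitile_eq hp (q := half Q)
  have hlr := Bitile.not_le_left_and_le_right (P := P) (q := half Q)
  by_cases heq : half Q = p
  · have hk : ¬ (half Q ≤ P.left ∨ half Q ≤ P.right) := by
      rw [heq, Bitile.le_left_or_le_right_iff, ← hp]
      rintro ⟨δ, hk, -⟩
      simp only [Tile.bitile] at hk
      omega
    rw [not_or] at hk
    simp [heq, heq ▸ hk.1, heq ▸ hk.2]
  · by_cases hl : half Q ≤ P.left <;> by_cases hr : half Q ≤ P.right <;> simp_all

lemma treeSum_d (PP : Finset Bitile) (F G : Bitile → E) (P : Bitile) :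
    treeSum PP F G P.d =
      (if P ∈ PP then F P else 0) + treeSum PP F G P.left + treeSum PP F G P.right := by
  have hself : ∑ Q ∈ PP with Q.d = P.d, F Q = if P ∈ PP then F P else 0 := by
    simp [Finset.sum_filter]
  have hnone : ∑ Q ∈ PP with Q.u = P.d, G Q = 0 := by
    rw [Finset.filter_false_of_mem fun Q _ => Bitile.d_ne_u.symm, Finset.sum_empty]
  rw [treeSum, sum_filter_le_of_bitile_eq F P.d_bitile, sum_filter_le_of_bitile_eq G P.d_bitile,
    hself, hnone, treeSum, treeSum]
  abel

lemma treeSum_u (PP : Finset Bitile) (F G : Bitile → E) (P : Bitile) :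
    treeSum PP F G P.u =
      (if P ∈ PP then G P else 0) + treeSum PP F G P.left + treeSum PP F G P.right := by
  have hself : ∑ Q ∈ PP with Q.u = P.u, G Q = if P ∈ PP then G P else 0 := by
    simp [Finset.sum_filter]
  have hnone : ∑ Q ∈ PP with Q.d = P.u, F Q = 0 := by
    rw [Finset.filter_false_of_mem fun Q _ => Bitile.d_ne_u, Finset.sum_empty]
  rw [treeSum, sum_filter_le_of_bitile_eq F P.u_bitile, sum_filter_le_of_bitile_eq G P.u_bitile,
    hself, hnone, treeSum, treeSum]
  abel

lemma treeSum_eq_zero {PP : Finset Bitile} {p : Tile} (h : ∀ Q ∈ PP, ¬ Q ≤ p.bitile)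
    (F G : Bitile → E) : treeSum PP F G p = 0 := by
  simp only [Bitile.le_bitile_iff, not_or] at h
  rw [treeSum, Finset.filter_false_of_mem fun Q hQ => (h Q hQ).1,
    Finset.filter_false_of_mem fun Q hQ => (h Q hQ).2]
  simp

lemma treeSum_self_eq (PP : Finset Bitile) (F : Bitile → E) (p : Tile) :
    treeSum PP F F p = ∑ Q ∈ PP with Q ≤ p.bitile, F Q := by
  simp only [treeSum, Finset.sum_filter, ← Finset.sum_add_distrib, Bitile.le_bitile_iff]
  refine Finset.sum_congr rfl fun Q _ => ?_
  have := Bitile.not_d_le_and_u_le (Q := Q) (p := p)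
  by_cases hd : Q.d ≤ p <;> by_cases hu : Q.u ≤ p <;> simp_all

lemma treeSum_nonneg {PP : Finset Bitile} {F G : Bitile → ℝ} (hF : ∀ Q, 0 ≤ F Q)
    (hG : ∀ Q, 0 ≤ G Q) (p : Tile) : 0 ≤ treeSum PP F G p :=
  add_nonneg (Finset.sum_nonneg fun _ _ => hF _) (Finset.sum_nonneg fun _ _ => hG _)

end TreeSum

/-! ### The tree estimate -/

section Bellman

/-- The Bellman function of the tree estimate, in terms of the accumulated multiplier `g`, the
length `I` of the current interval, the remaining energy `N` and the remaining square sum `V`. -/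
def bellmanFn (σ s : ℝ) (g : ℂ) (I N V : ℝ) : ℝ :=
  2 * σ * N + 16 * s / σ * (V + ‖g‖ ^ 2 * I * (N / (4 * s * I) / (1 + N / (4 * s * I))))

lemma four_mul_sq_norm_div_le (g v : ℂ) {a b : ℝ} (ha : 0 < a) (hb : 0 < b) :
    4 * ‖g‖ ^ 2 / (a + b) ≤ ‖g + v‖ ^ 2 / a + ‖g - v‖ ^ 2 / b := by
  have htri : 2 * ‖g‖ ≤ ‖g + v‖ + ‖g - v‖ := by
    simpa [← two_mul] using norm_add_le (g + v) (g - v)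
  have hsedrakyan : (‖g + v‖ + ‖g - v‖) ^ 2 / (a + b) ≤ ‖g + v‖ ^ 2 / a + ‖g - v‖ ^ 2 / b := by
    simpa [Fin.forall_fin_two, ha, hb] using
      Finset.sq_sum_div_le_sum_sq_div Finset.univ ![‖g + v‖, ‖g - v‖] (g := ![a, b])
  calc 4 * ‖g‖ ^ 2 / (a + b) = (2 * ‖g‖) ^ 2 / (a + b) := by ring
    _ ≤ (‖g + v‖ + ‖g - v‖) ^ 2 / (a + b) := by gcongr
    _ ≤ _ := hsedrakyan

lemma le_four_mul_inv_sub_inv {u ν : ℝ} (hu : 0 ≤ u) (hν : 0 ≤ ν) (h : ν + u ≤ 1) :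
    ν ≤ 4 * ((1 + u)⁻¹ - (1 + (ν + u))⁻¹) := by
  have hdiff : (1 + u)⁻¹ - (1 + (ν + u))⁻¹ = ν / ((1 + u) * (1 + (ν + u))) := by
    rw [inv_sub_inv (by positivity) (by positivity)]
    ring
  have hden : (1 + u) * (1 + (ν + u)) ≤ 2 * 2 := by gcongr <;> linarith
  rw [hdiff, ← mul_div_assoc, le_div_iff₀ (by positivity)]
  nlinarith

lemma bellman_inequality (g v : ℂ) {t₀ t₁ ν : ℝ} (h₀ : 0 ≤ t₀) (h₁ : 0 ≤ t₁) (hν : 0 ≤ ν)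
    (h : ν + (t₀ + t₁) / 2 ≤ 1) :
    ‖g‖ ^ 2 * ν + 2 * (‖g + v‖ ^ 2 * (t₀ / (1 + t₀)) + ‖g - v‖ ^ 2 * (t₁ / (1 + t₁))) ≤
      4 * ‖v‖ ^ 2 +
        4 * (‖g‖ ^ 2 * ((ν + (t₀ + t₁) / 2) / (1 + (ν + (t₀ + t₁) / 2)))) := by
  have frac : ∀ t : ℝ, 0 ≤ t → t / (1 + t) = 1 - (1 + t)⁻¹ := fun t ht => by field_simp; ring
  have hpar := parallelogram_law_with_norm ℝ g v
  have hconvex := four_mul_sq_norm_div_le g v (a := 1 + t₀) (b := 1 + t₁)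
    (by positivity) (by positivity)
  have hmean : 4 * ‖g‖ ^ 2 / (1 + t₀ + (1 + t₁)) = 2 * (‖g‖ ^ 2 * (1 + (t₀ + t₁) / 2)⁻¹) := by
    field_simp
    ring
  have hgain := mul_le_mul_of_nonneg_left
    (le_four_mul_inv_sub_inv (u := (t₀ + t₁) / 2) (by positivity) hν h) (sq_nonneg ‖g‖)
  rw [frac _ h₀, frac _ h₁, frac _ (by positivity)]
  rw [hmean, div_eq_mul_inv (‖g + v‖ ^ 2), div_eq_mul_inv (‖g - v‖ ^ 2)] at hconvex
  nlinarith

lemma norm_le_add_sq_norm_div {σ : ℝ} (hσ : 0 < σ) (g : ℂ) : ‖g‖ ≤ σ + ‖g‖ ^ 2 / σ := by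
  rw [← sub_nonneg]
  have hsq : σ + ‖g‖ ^ 2 / σ - ‖g‖ = ((‖g‖ - σ / 2) ^ 2 + 3 / 4 * σ ^ 2) / σ := by
    field_simp
    ring
  rw [hsq]
  positivity

lemma norm_mul_le_bellmanFn {σ s I N : ℝ} (hσ : 0 < σ) (hs : 0 < s) (hI : 0 < I) (hN : 0 ≤ N)
    (hle : N ≤ 2 * s * I) (g : ℂ) : ‖g‖ * N ≤ bellmanFn σ s g I N 0 := by
  set t := N / (4 * s * I) with ht
  have : 0 ≤ t := by positivity
  have ht1 : t ≤ 1 := by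
    rw [ht, div_le_one (by positivity)]
    nlinarith [mul_pos hs hI]
  have hNt : N = 4 * s * I * t := by rw [ht]; field_simp
  have hhalf : t / 2 ≤ t / (1 + t) := by gcongr; linarith
  calc ‖g‖ * N ≤ (σ + ‖g‖ ^ 2 / σ) * N := by gcongr; exact norm_le_add_sq_norm_div hσ g
    _ = σ * N + 8 * s / σ * (‖g‖ ^ 2 * I * (t / 2)) := by rw [hNt]; field_simp; ring
    _ ≤ 2 * σ * N + 16 * s / σ * (‖g‖ ^ 2 * I * (t / (1 + t))) := by
      gcongr
      · linarith
      · norm_num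
    _ = bellmanFn σ s g I N 0 := by rw [bellmanFn, zero_add]

/-- The loss `N - N₀ - N₁` of energy pays for the error term, by `bellman_inequality` applied to
the relative energies `N / (4 s I)`. -/
lemma bellmanFn_children_le {σ s I N₀ N₁ N E V₀ V₁ : ℝ} (hσ : 0 < σ) (hs : 0 < s) (hI : 0 < I)
    (h₀ : 0 ≤ N₀) (h₁ : 0 ≤ N₁) (hE : 0 ≤ E) (hgain : N₀ + N₁ + E ≤ N)
    (hN : N ≤ 2 * (s * (2 * I))) (g v : ℂ) :
    bellmanFn σ s (g + v) I N₀ V₀ + bellmanFn σ s (g - v) I N₁ V₁ + (‖g‖ + σ) * E ≤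
      bellmanFn σ s g (2 * I) N (‖v‖ ^ 2 * (2 * I) + V₀ + V₁) := by
  obtain ⟨ν, rfl⟩ : ∃ ν, N = N₀ + N₁ + ν := ⟨N - N₀ - N₁, by ring⟩
  have hEν : E ≤ ν := by linarith
  have hν : 0 ≤ ν := hE.trans hEν
  have hrel : ν / (8 * s * I) + (N₀ / (4 * s * I) + N₁ / (4 * s * I)) / 2 =
      (N₀ + N₁ + ν) / (4 * s * (2 * I)) := by
    field_simp
    ring
  have hsmall : (N₀ + N₁ + ν) / (4 * s * (2 * I)) ≤ 1 := by
    rw [div_le_one (by positivity)]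
    nlinarith [mul_pos hs hI]
  have hbellman := bellman_inequality g v (t₀ := N₀ / (4 * s * I)) (t₁ := N₁ / (4 * s * I))
    (ν := ν / (8 * s * I)) (by positivity) (by positivity) (by positivity) (by rwa [hrel])
  rw [hrel] at hbellman
  have hscaled := mul_le_mul_of_nonneg_left hbellman (show 0 ≤ 8 * s * I / σ by positivity)
  have herror : (‖g‖ + σ) * E ≤ 2 * σ * ν + 8 * s * I / σ * (‖g‖ ^ 2 * (ν / (8 * s * I))) :=
    calc (‖g‖ + σ) * E ≤ (σ + ‖g‖ ^ 2 / σ + σ) * ν := by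
          gcongr
          exact norm_le_add_sq_norm_div hσ g
      _ = _ := by field_simp; ring
  unfold bellmanFn
  set ψ₀ := N₀ / (4 * s * I) / (1 + N₀ / (4 * s * I))
  set ψ₁ := N₁ / (4 * s * I) / (1 + N₁ / (4 * s * I))
  set ψ := (N₀ + N₁ + ν) / (4 * s * (2 * I)) / (1 + (N₀ + N₁ + ν) / (4 * s * (2 * I)))
  ring_nf at hscaled herror ⊢
  linarith

lemma norm_lower_step_le (S₀ S₁ β g x₀ x₁ y₀ y₁ : ℂ) :
    ‖β * (x₀ - x₁) + S₀ + S₁ + g * (x₀ + x₁)‖ ≤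
      ‖S₀ + (g + β) * (x₀ + y₀)‖ + ‖S₁ + (g - β) * (x₁ + y₁)‖ +
        (‖g‖ + ‖β‖) * (‖y₀‖ + ‖y₁‖) :=
  calc ‖β * (x₀ - x₁) + S₀ + S₁ + g * (x₀ + x₁)‖
      = ‖(S₀ + (g + β) * (x₀ + y₀)) + (S₁ + (g - β) * (x₁ + y₁)) -
          ((g + β) * y₀ + (g - β) * y₁)‖ := by congr 1; ring
    _ ≤ ‖S₀ + (g + β) * (x₀ + y₀)‖ + ‖S₁ + (g - β) * (x₁ + y₁)‖ +
          (‖g + β‖ * ‖y₀‖ + ‖g - β‖ * ‖y₁‖) := by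
        rw [← norm_mul, ← norm_mul]
        exact (norm_sub_le _ _).trans (add_le_add (norm_add_le _ _) (norm_add_le _ _))
    _ ≤ _ := by
        rw [mul_add (‖g‖ + ‖β‖)]
        gcongr
        exacts [norm_add_le _ _, norm_sub_le _ _]

lemma norm_upper_step_le (S₀ S₁ β g x₀ x₁ y₀ y₁ : ℂ) :
    ‖β * (x₀ - x₁) + S₀ + S₁ + g * (y₀ + y₁)‖ ≤
      ‖S₀ + g * (x₀ + y₀)‖ + ‖S₁ + g * (x₁ + y₁)‖ + (‖g‖ + ‖β‖) * (‖x₀‖ + ‖x₁‖) :=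
  calc ‖β * (x₀ - x₁) + S₀ + S₁ + g * (y₀ + y₁)‖
      = ‖(S₀ + g * (x₀ + y₀)) + (S₁ + g * (x₁ + y₁)) - ((g - β) * x₀ + (g + β) * x₁)‖ := by
        congr 1; ring
    _ ≤ ‖S₀ + g * (x₀ + y₀)‖ + ‖S₁ + g * (x₁ + y₁)‖ + (‖g - β‖ * ‖x₀‖ + ‖g + β‖ * ‖x₁‖) := by
        rw [← norm_mul, ← norm_mul]
        exact (norm_sub_le _ _).trans (add_le_add (norm_add_le _ _) (norm_add_le _ _))
    _ ≤ _ := by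
        rw [mul_add (‖g‖ + ‖β‖)]
        gcongr
        exacts [norm_sub_le _ _, norm_add_le _ _]

end Bellman

section TreeEstimate

/-- The sum of `F` over the two halves in time of the vertical dilate `2 p`. -/
def halfSum {E : Type*} [Add E] (F : Tile → E) (p : Tile) : E :=
  F p.double.left + F p.double.right

/-- The contribution of a bitile to the model form: `β` is the coefficient of `P_u`, and `m` is the
pairing of the other two functions on a tile. -/
def treeTerm (m : Tile → ℂ) (β : Bitile → ℂ) (P : Bitile) : ℂ :=
  β P * (m P.d.double.left - m P.d.double.right)

/-- The energy of the bitiles of `PP` below `p` which is still available in the induction for the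
tree estimate; each bitile contributes the energy of the half which is not below `p`. -/
def treeMass (PP : Finset Bitile) (e : Tile → ℝ) (p : Tile) : ℝ :=
  halfSum e p + 2 * treeSum PP (fun Q => halfSum e Q.u) (fun Q => halfSum e Q.d) p

/-- The square sum of the coefficients `β` over the bitiles of `PP` whose lower tile is below
`p`. -/
def squareSum (PP : Finset Bitile) (β : Bitile → ℂ) : Tile → ℝ :=
  treeSum PP (fun Q => ‖β Q‖ ^ 2 * 2 ^ Q.k) 0

/-- The hypotheses of the tree estimate: `m` is compatible with the two ways of splitting a bitile
and is dominated by the energy `e`, while `σ` and `s` bound the sizes of `β` and of `e`. -/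
structure TreeBounds (PP : Finset Bitile) (m : Tile → ℂ) (e : Tile → ℝ) (β : Bitile → ℂ)
    (σ s : ℝ) : Prop where
  ordConnected : (PP : Set Bitile).OrdConnected
  pairing_split : ∀ R : Bitile, m R.d + m R.u = m R.left + m R.right
  energy_split : ∀ R : Bitile, e R.left + e R.right ≤ e R.d + e R.u
  norm_pairing_le : ∀ p, ‖m p‖ ≤ e p
  norm_coeff_le : ∀ Q ∈ PP, ‖β Q‖ ≤ σ
  size_le : ∀ P ∈ PP, halfSum e P.d +
    treeSum PP (fun Q => halfSum e Q.u) (fun Q => halfSum e Q.d) P.d ≤ s * 2 ^ P.k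

namespace TreeBounds

variable {PP : Finset Bitile} {m : Tile → ℂ} {e : Tile → ℝ} {β : Bitile → ℂ} {σ s : ℝ}
  {P : Bitile}

lemma energy_nonneg (h : TreeBounds PP m e β σ s) (p : Tile) : 0 ≤ e p :=
  (norm_nonneg _).trans (h.norm_pairing_le p)

lemma halfSum_nonneg (h : TreeBounds PP m e β σ s) (p : Tile) : 0 ≤ halfSum e p :=
  add_nonneg (h.energy_nonneg _) (h.energy_nonneg _)

lemma treeSum_nonneg (h : TreeBounds PP m e β σ s) (p : Tile) :
    0 ≤ treeSum PP (fun Q => halfSum e Q.u) (fun Q => halfSum e Q.d) p :=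
  Quartile.treeSum_nonneg (fun _ => h.halfSum_nonneg _) (fun _ => h.halfSum_nonneg _) p

lemma treeMass_nonneg (h : TreeBounds PP m e β σ s) (p : Tile) : 0 ≤ treeMass PP e p := by
  have := h.halfSum_nonneg p
  have := h.treeSum_nonneg p
  unfold treeMass
  positivity

lemma halfSum_left_add_right_le (h : TreeBounds PP m e β σ s) (P : Bitile) :
    halfSum e P.left + halfSum e P.right ≤ halfSum e P.d + halfSum e P.u := by
  have hleft : halfSum e P.left ≤ e P.d.double.left + e P.u.double.left :=
    h.energy_split P.left.double
  have hright : halfSum e P.right ≤ e P.d.double.right + e P.u.double.right :=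
    h.energy_split P.right.double
  unfold halfSum at *
  linarith

lemma halfSum_d_add_u_le (h : TreeBounds PP m e β σ s) (hP : P ∈ PP) :
    halfSum e P.d + halfSum e P.u +
      treeSum PP (fun Q => halfSum e Q.u) (fun Q => halfSum e Q.d) P.left +
      treeSum PP (fun Q => halfSum e Q.u) (fun Q => halfSum e Q.d) P.right ≤ s * 2 ^ P.k := by
  have hsize := h.size_le P hP
  rw [treeSum_d, if_pos hP] at hsize
  linarith

lemma treeMass_d (h : TreeBounds PP m e β σ s) (hP : P ∈ PP) :
    treeMass PP e P.left + treeMass PP e P.right + halfSum e P.u ≤ treeMass PP e P.d ∧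
      treeMass PP e P.d ≤ 2 * (s * 2 ^ P.k) := by
  have hsplit := h.halfSum_left_add_right_le P
  have hsize := h.halfSum_d_add_u_le hP
  have hsibling := h.halfSum_nonneg P.d
  unfold treeMass
  rw [treeSum_d, if_pos hP]
  constructor <;> linarith

lemma treeMass_u (h : TreeBounds PP m e β σ s) (hP : P ∈ PP) :
    treeMass PP e P.left + treeMass PP e P.right + halfSum e P.d ≤ treeMass PP e P.u ∧
      treeMass PP e P.u ≤ 2 * (s * 2 ^ P.k) := by
  have hsplit := h.halfSum_left_add_right_le P
  have hsize := h.halfSum_d_add_u_le hP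
  have hsibling := h.halfSum_nonneg P.u
  unfold treeMass
  rw [treeSum_u, if_pos hP]
  constructor <;> linarith

/-- A tile at which the induction for the tree estimate applies: either its bitile belongs to the
collection, or it is a leaf carrying a controlled amount of energy. -/
def Admissible (PP : Finset Bitile) (e : Tile → ℝ) (s : ℝ) (p : Tile) : Prop :=
  p.bitile ∈ PP ∨ ((∀ Q ∈ PP, ¬ Q ≤ p.bitile) ∧ halfSum e p ≤ 2 * s * 2 ^ p.k)

lemma admissible_child (h : TreeBounds PP m e β σ s) (hP : P ∈ PP) {q : Tile}
    (hle : q.bitile ≤ P) (hq : halfSum e q ≤ 2 * s * 2 ^ q.k) : Admissible PP e s q := by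
  by_cases hmem : q.bitile ∈ PP
  · exact .inl hmem
  · exact .inr ⟨fun Q hQ hQq => hmem (h.ordConnected.out hQ hP ⟨hQq, hle⟩), hq⟩

lemma admissible_left_right (h : TreeBounds PP m e β σ s) (hP : P ∈ PP) :
    Admissible PP e s P.left ∧ Admissible PP e s P.right := by
  have hsplit := h.halfSum_left_add_right_le P
  have hsize := h.halfSum_d_add_u_le hP
  have hsum₀ := h.treeSum_nonneg P.left
  have hsum₁ := h.treeSum_nonneg P.right
  have hleft := h.halfSum_nonneg P.left
  have hright := h.halfSum_nonneg P.right
  rw [P.two_zpow_k] at hsize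
  refine ⟨h.admissible_child hP P.left_bitile_le ?_, h.admissible_child hP P.right_bitile_le ?_⟩
  · linarith
  · change _ ≤ 2 * s * 2 ^ P.left.k
    linarith

variable (PP m e β σ s) in
/-- The inductive claim of the tree estimate. The multiplier `g` is the sum of the signed
coefficients `β` of the bitiles above `p`. -/
def BellmanClaim (p : Tile) : Prop :=
  ∀ g : ℂ, ‖treeSum PP (treeTerm m β) (treeTerm m β) p + g * halfSum m p‖ ≤
    bellmanFn σ s g (2 ^ p.k) (treeMass PP e p) (squareSum PP β p)

lemma bellmanClaim_leaf (h : TreeBounds PP m e β σ s) (hσ : 0 < σ) (hs : 0 < s) {p : Tile}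
    (hleaf : ∀ Q ∈ PP, ¬ Q ≤ p.bitile) (hp : halfSum e p ≤ 2 * s * 2 ^ p.k) :
    BellmanClaim PP m e β σ s p := by
  intro g
  rw [treeMass, squareSum, treeSum_eq_zero hleaf, treeSum_eq_zero hleaf, treeSum_eq_zero hleaf,
    zero_add, mul_zero, add_zero, norm_mul]
  refine le_trans ?_ (norm_mul_le_bellmanFn hσ hs (by positivity) (h.halfSum_nonneg p) hp g)
  gcongr
  exact norm_add_le_of_le (h.norm_pairing_le _) (h.norm_pairing_le _)

lemma bellman_step (h : TreeBounds PP m e β σ s) (hσ : 0 < σ) (hs : 0 < s)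
    (hleft : BellmanClaim PP m e β σ s P.left) (hright : BellmanClaim PP m e β σ s P.right)
    {N E : ℝ} (hE : 0 ≤ E) (hgain : treeMass PP e P.left + treeMass PP e P.right + E ≤ N)
    (hN : N ≤ 2 * (s * 2 ^ P.k)) (g v : ℂ) :
    ‖treeSum PP (treeTerm m β) (treeTerm m β) P.left + (g + v) * halfSum m P.left‖ +
      ‖treeSum PP (treeTerm m β) (treeTerm m β) P.right + (g - v) * halfSum m P.right‖ +
      (‖g‖ + σ) * E ≤
    bellmanFn σ s g (2 ^ P.k) N
      (‖v‖ ^ 2 * 2 ^ P.k + squareSum PP β P.left + squareSum PP β P.right) := by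
  rw [P.two_zpow_k] at hN ⊢
  refine le_trans ?_ (bellmanFn_children_le hσ hs (by positivity) (h.treeMass_nonneg P.left)
    (h.treeMass_nonneg P.right) hE hgain hN g v)
  gcongr
  exacts [hleft (g + v), hright (g - v)]

lemma bellmanClaim_d (h : TreeBounds PP m e β σ s) (hσ : 0 < σ) (hs : 0 < s) (hP : P ∈ PP)
    (hleft : BellmanClaim PP m e β σ s P.left) (hright : BellmanClaim PP m e β σ s P.right) :
    BellmanClaim PP m e β σ s P.d := by
  intro g
  obtain ⟨hgain, hN⟩ := h.treeMass_d hP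
  have hV : squareSum PP β P.d =
      ‖β P‖ ^ 2 * 2 ^ P.k + squareSum PP β P.left + squareSum PP β P.right := by
    rw [squareSum, treeSum_d, if_pos hP]
  have hm₀ : halfSum m P.left = m P.d.double.left + m P.u.double.left :=
    (h.pairing_split P.left.double).symm
  have hm₁ : halfSum m P.right = m P.d.double.right + m P.u.double.right :=
    (h.pairing_split P.right.double).symm
  rw [hV, treeSum_d, if_pos hP]
  refine (norm_lower_step_le _ _ _ _ _ _ (m P.u.double.left) (m P.u.double.right)).trans
    (le_trans ?_ (h.bellman_step hσ hs hleft hright (h.halfSum_nonneg P.u) hgain hN g (β P)))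
  rw [hm₀, hm₁]
  gcongr
  exacts [h.norm_coeff_le P hP, add_le_add (h.norm_pairing_le _) (h.norm_pairing_le _)]

lemma bellmanClaim_u (h : TreeBounds PP m e β σ s) (hσ : 0 < σ) (hs : 0 < s) (hP : P ∈ PP)
    (hleft : BellmanClaim PP m e β σ s P.left) (hright : BellmanClaim PP m e β σ s P.right) :
    BellmanClaim PP m e β σ s P.u := by
  intro g
  obtain ⟨hgain, hN⟩ := h.treeMass_u hP
  have hV : squareSum PP β P.u =
      ‖(0 : ℂ)‖ ^ 2 * 2 ^ P.k + squareSum PP β P.left + squareSum PP β P.right := by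
    rw [squareSum, treeSum_u, if_pos hP, Pi.zero_apply, norm_zero, zero_pow two_ne_zero, zero_mul]
  have hm₀ : halfSum m P.left = m P.d.double.left + m P.u.double.left :=
    (h.pairing_split P.left.double).symm
  have hm₁ : halfSum m P.right = m P.d.double.right + m P.u.double.right :=
    (h.pairing_split P.right.double).symm
  rw [hV, treeSum_u, if_pos hP]
  refine (norm_upper_step_le _ _ _ _ (m P.d.double.left) (m P.d.double.right) _ _).trans
    (le_trans ?_ (h.bellman_step hσ hs hleft hright (h.halfSum_nonneg P.d) hgain hN g 0))
  rw [hm₀, hm₁, add_zero, sub_zero]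
  gcongr
  exacts [h.norm_coeff_le P hP, add_le_add (h.norm_pairing_le _) (h.norm_pairing_le _)]

theorem bellmanClaim_of_admissible (h : TreeBounds PP m e β σ s) (hσ : 0 < σ) (hs : 0 < s)
    (p : Tile) : Admissible PP e s p → BellmanClaim PP m e β σ s p := by
  have of_not_mem : ∀ p, p.bitile ∉ PP → Admissible PP e s p → BellmanClaim PP m e β σ s p :=
    fun p hp hadm => (hadm.resolve_left hp).elim (h.bellmanClaim_leaf hσ hs)
  refine Tile.induction_below PP (fun p hp => of_not_mem p fun hmem => hp _ hmem le_rfl)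
    (fun P hleft hright => ?_) p
  by_cases hP : P ∈ PP
  · obtain ⟨hl, hr⟩ := h.admissible_left_right hP
    exact ⟨fun _ => h.bellmanClaim_d hσ hs hP (hleft hl) (hright hr),
      fun _ => h.bellmanClaim_u hσ hs hP (hleft hl) (hright hr)⟩
  · exact ⟨of_not_mem _ (by simpa using hP), of_not_mem _ (by simpa using hP)⟩

theorem norm_sum_treeTerm_le (h : TreeBounds PP m e β σ s) (hσ : 0 < σ) (hs : 0 < s)
    (hP : P ∈ PP) (hV : squareSum PP β P.d ≤ σ ^ 2 * 2 ^ P.k) :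
    ‖∑ Q ∈ PP with Q ≤ P, treeTerm m β Q‖ ≤ 20 * σ * s * 2 ^ P.k := by
  have hclaim := h.bellmanClaim_of_admissible hσ hs P.d (.inl (by simpa using hP)) 0
  rw [treeSum_self_eq, Bitile.d_bitile, zero_mul, add_zero] at hclaim
  refine hclaim.trans ?_
  rw [bellmanFn, norm_zero, zero_pow two_ne_zero, zero_mul, zero_mul, add_zero]
  calc 2 * σ * treeMass PP e P.d + 16 * s / σ * squareSum PP β P.d
      ≤ 2 * σ * (2 * (s * 2 ^ P.k)) + 16 * s / σ * (σ ^ 2 * 2 ^ P.k) := by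
        gcongr
        exact (h.treeMass_d hP).2
    _ = 20 * σ * s * 2 ^ P.k := by field_simp; ring

end TreeBounds

end TreeEstimate

/-! ### Energies and pairings of Walsh coefficients -/

section SubtileSum

variable {E : Type*} [AddCommMonoid E]

/-- The sum of `F` over the `2 ^ d` tiles into which the vertical dilate `2 ^ d p` of the tile `p`
splits in time. -/
def subtileSum (d : ℕ) (F : Tile → E) (p : Tile) : E :=
  ∑ j ∈ Finset.range (2 ^ d), F ⟨p.k - d, 2 ^ d * p.n + j, p.l⟩

@[simp] lemma subtileSum_zero (F : Tile → E) (p : Tile) : subtileSum 0 F p = F p := by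
  simp [subtileSum]

lemma subtileSum_succ (d : ℕ) (F : Tile → E) (p : Tile) :
    subtileSum (d + 1) F p = halfSum (subtileSum d F) p := by
  simp only [subtileSum, halfSum, Tile.double, Bitile.left, Bitile.right, pow_succ, mul_two,
    Finset.sum_range_add]
  congr 1 <;> refine Finset.sum_congr rfl fun j _ => congrArg F ?_ <;> ext <;> push_cast <;> ring

lemma subtileSum_halfSum (d : ℕ) (F : Tile → E) (p : Tile) :
    subtileSum d (halfSum F) p = subtileSum (d + 1) F p := by
  induction d generalizing p with
  | zero =>
    rw [subtileSum_succ, subtileSum_zero, halfSum, halfSum, subtileSum_zero, subtileSum_zero]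
  | succ d ih => rw [subtileSum_succ, subtileSum_succ, halfSum, ih, ih, halfSum]

lemma subtileSum_left_add_right (d : ℕ) (F : Tile → E) (R : Bitile) :
    subtileSum d F R.left + subtileSum d F R.right =
      subtileSum d (fun q => F q.double.left + F q.double.right) ⟨R.k, R.n, R.l⟩ :=
  (subtileSum_succ d F ⟨R.k, R.n, R.l⟩).symm.trans (subtileSum_halfSum d F _).symm

lemma subtileSum_d_add_u (d : ℕ) (F : Tile → E) (R : Bitile) :
    subtileSum d F R.d + subtileSum d F R.u =
      subtileSum d (fun q => F q.double.d + F q.double.u) ⟨R.k, R.n, R.l⟩ :=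
  Finset.sum_add_distrib.symm

end SubtileSum

/-- The relations between the averages of a function against the `L^∞`-normalized wave packets of
the four tiles of a bitile. -/
structure WalshRecursion (A : Tile → ℂ) : Prop where
  d : ∀ R : Bitile, A R.d = (A R.left + A R.right) / 2
  u : ∀ R : Bitile, A R.u = (A R.left - A R.right) / 2

namespace WalshRecursion

variable {A : Tile → ℂ}

lemma left (hA : WalshRecursion A) (R : Bitile) : A R.left = A R.d + A R.u := by
  rw [hA.d, hA.u]
  ring

lemma right (hA : WalshRecursion A) (R : Bitile) : A R.right = A R.d - A R.u := by
  rw [hA.d, hA.u]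
  ring

lemma sq_norm_add (hA : WalshRecursion A) (R : Bitile) :
    ‖A R.left‖ ^ 2 + ‖A R.right‖ ^ 2 = 2 * (‖A R.d‖ ^ 2 + ‖A R.u‖ ^ 2) := by
  rw [hA.left, hA.right]
  simpa only [sq] using parallelogram_law_with_norm ℝ (A R.d) (A R.u)

end WalshRecursion

section Energy

variable {A : Tile → ℂ} {Ω : Set ℝ} {S : ℝ}

open Classical in
/-- The `L²`-energy of a single tile, discarded if its time interval lies in the exceptional
set `Ω`. -/
def tileEnergy (A : Tile → ℂ) (Ω : Set ℝ) (p : Tile) : ℝ :=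
  if p.timeI ⊆ Ω then 0 else 2 ^ p.k * ‖A p‖ ^ 2

/-- The energy on the region `2 ^ d p`, computed with its splitting in time. -/
def energy (A : Tile → ℂ) (Ω : Set ℝ) (d : ℕ) : Tile → ℝ := subtileSum d (tileEnergy A Ω)

/-- The total length of the dyadic subintervals of `I_p` of relative scale `2 ^ (-d)` which are
not contained in `Ω`. -/
def goodLength (Ω : Set ℝ) : ℕ → Tile → ℝ := energy 1 Ω

lemma tileEnergy_of_subset {p : Tile} (hp : p.timeI ⊆ Ω) : tileEnergy A Ω p = 0 :=
  if_pos hp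

lemma tileEnergy_of_not_subset {p : Tile} (hp : ¬ p.timeI ⊆ Ω) :
    tileEnergy A Ω p = 2 ^ p.k * ‖A p‖ ^ 2 :=
  if_neg hp

lemma tileEnergy_nonneg (A : Tile → ℂ) (Ω : Set ℝ) (p : Tile) : 0 ≤ tileEnergy A Ω p := by
  unfold tileEnergy
  split_ifs <;> positivity

lemma tileEnergy_le_two_zpow (A : Tile → ℂ) (Ω : Set ℝ) (p : Tile) :
    tileEnergy A Ω p ≤ 2 ^ p.k * ‖A p‖ ^ 2 := by
  unfold tileEnergy
  split_ifs
  exacts [by positivity, le_rfl]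

lemma energy_nonneg (A : Tile → ℂ) (Ω : Set ℝ) (d : ℕ) (p : Tile) : 0 ≤ energy A Ω d p := by
  rw [energy, subtileSum]
  exact Finset.sum_nonneg fun _ _ => tileEnergy_nonneg A Ω _

lemma energy_succ (A : Tile → ℂ) (Ω : Set ℝ) (d : ℕ) :
    energy A Ω (d + 1) = halfSum (energy A Ω d) :=
  funext (subtileSum_succ d _)

lemma Bitile.left_timeI_subset (R : Bitile) : R.left.timeI ⊆ R.timeI :=
  dyadicI_subset_iff.2 ⟨1, by simp [left]⟩

lemma Bitile.right_timeI_subset (R : Bitile) : R.right.timeI ⊆ R.timeI :=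
  dyadicI_subset_iff.2 ⟨1, by simp [right], by simp only [right]; omega⟩

lemma WalshRecursion.tileEnergy_d_add_u (hA : WalshRecursion A) {R : Bitile}
    (hR : ¬ R.timeI ⊆ Ω) :
    tileEnergy A Ω R.d + tileEnergy A Ω R.u =
      2 ^ R.left.k * ‖A R.left‖ ^ 2 + 2 ^ R.right.k * ‖A R.right‖ ^ 2 := by
  have hd : ¬ R.d.timeI ⊆ Ω := hR
  have hu : ¬ R.u.timeI ⊆ Ω := hR
  have hk : R.right.k = R.left.k := rfl
  rw [tileEnergy_of_not_subset hd, tileEnergy_of_not_subset hu, hk, ← mul_add, hA.sq_norm_add,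
    Bitile.d, Bitile.u, R.two_zpow_k]
  ring

lemma WalshRecursion.tileEnergy_split (hA : WalshRecursion A) (Ω : Set ℝ) (R : Bitile) :
    tileEnergy A Ω R.left + tileEnergy A Ω R.right ≤ tileEnergy A Ω R.d + tileEnergy A Ω R.u := by
  by_cases hR : R.timeI ⊆ Ω
  · rw [tileEnergy_of_subset (R.left_timeI_subset.trans hR),
      tileEnergy_of_subset (R.right_timeI_subset.trans hR), add_zero]
    exact add_nonneg (tileEnergy_nonneg _ _ _) (tileEnergy_nonneg _ _ _)
  · rw [hA.tileEnergy_d_add_u hR]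
    exact add_le_add (tileEnergy_le_two_zpow _ _ _) (tileEnergy_le_two_zpow _ _ _)

lemma WalshRecursion.energy_split (hA : WalshRecursion A) (Ω : Set ℝ) (d : ℕ) (R : Bitile) :
    energy A Ω d R.left + energy A Ω d R.right ≤ energy A Ω d R.d + energy A Ω d R.u := by
  rw [energy, subtileSum_left_add_right, subtileSum_d_add_u]
  exact Finset.sum_le_sum fun _ _ => hA.tileEnergy_split Ω _

-- If `I_q` is bad but the interval of its parent is not, the energy of `q` which has been
-- discarded is charged to the length of `I_q`.
lemma two_zpow_mul_sq_norm_add_le {p : Tile} (hp : ‖A p‖ ≤ 2 * S) :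
    2 ^ p.k * ‖A p‖ ^ 2 + 4 * S ^ 2 * tileEnergy 1 Ω p ≤
      tileEnergy A Ω p + 4 * S ^ 2 * 2 ^ p.k := by
  by_cases h : p.timeI ⊆ Ω
  · rw [tileEnergy_of_subset h, tileEnergy_of_subset h, mul_zero, add_zero, zero_add]
    calc 2 ^ p.k * ‖A p‖ ^ 2 ≤ 2 ^ p.k * (2 * S) ^ 2 := by gcongr
      _ = 4 * S ^ 2 * 2 ^ p.k := by ring
  · simp [tileEnergy_of_not_subset h]

lemma WalshRecursion.tileEnergy_d_add_u_le (hA : WalshRecursion A)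
    (hS : ∀ p : Tile, ¬ p.timeI ⊆ Ω → ‖A p‖ ≤ S) (R : Bitile) :
    tileEnergy A Ω R.d + tileEnergy A Ω R.u +
        4 * S ^ 2 * (tileEnergy 1 Ω R.left + tileEnergy 1 Ω R.right) ≤
      tileEnergy A Ω R.left + tileEnergy A Ω R.right + 4 * S ^ 2 * tileEnergy 1 Ω R.d := by
  have hd : R.d.timeI = R.timeI := rfl
  have hu : R.u.timeI = R.timeI := rfl
  by_cases hR : R.timeI ⊆ Ω
  · simp [tileEnergy_of_subset (R.left_timeI_subset.trans hR),
      tileEnergy_of_subset (R.right_timeI_subset.trans hR), tileEnergy_of_subset (hd ▸ hR),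
      tileEnergy_of_subset (hu ▸ hR)]
  · have hleft : ‖A R.left‖ ≤ 2 * S := by
      rw [hA.left, two_mul]
      exact norm_add_le_of_le (hS _ hR) (hS _ hR)
    have hright : ‖A R.right‖ ≤ 2 * S := by
      rw [hA.right, two_mul]
      exact norm_sub_le_of_le (hS _ hR) (hS _ hR)
    have htop : tileEnergy 1 Ω R.d = 2 ^ R.left.k + 2 ^ R.right.k := by
      rw [tileEnergy_of_not_subset (hd ▸ hR), Pi.one_apply, norm_one, one_pow, mul_one]
      exact R.two_zpow_k.trans (two_mul _)
    rw [hA.tileEnergy_d_add_u hR, htop]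
    linarith [two_zpow_mul_sq_norm_add_le (Ω := Ω) hleft,
      two_zpow_mul_sq_norm_add_le (Ω := Ω) hright]

lemma WalshRecursion.energy_d_add_u_le (hA : WalshRecursion A)
    (hS : ∀ p : Tile, ¬ p.timeI ⊆ Ω → ‖A p‖ ≤ S) (d : ℕ) (R : Bitile) :
    energy A Ω d R.d + energy A Ω d R.u +
        4 * S ^ 2 * (goodLength Ω d R.left + goodLength Ω d R.right) ≤
      energy A Ω d R.left + energy A Ω d R.right + 4 * S ^ 2 * goodLength Ω d R.d := by
  rw [goodLength, energy, energy, subtileSum_left_add_right, subtileSum_left_add_right,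
    subtileSum_d_add_u]
  simp only [subtileSum, Finset.mul_sum, ← Finset.sum_add_distrib]
  exact Finset.sum_le_sum fun _ _ => hA.tileEnergy_d_add_u_le hS _

lemma tileEnergy_le (hS : ∀ p : Tile, ¬ p.timeI ⊆ Ω → ‖A p‖ ≤ S) (p : Tile) :
    tileEnergy A Ω p ≤ S ^ 2 * tileEnergy 1 Ω p := by
  by_cases hp : p.timeI ⊆ Ω
  · simp [tileEnergy_of_subset hp]
  · have := hS p hp
    rw [tileEnergy_of_not_subset hp, tileEnergy_of_not_subset hp, Pi.one_apply, norm_one, one_pow,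
      mul_one, mul_comm]
    gcongr

lemma energy_le_mul_goodLength (hS : ∀ p : Tile, ¬ p.timeI ⊆ Ω → ‖A p‖ ≤ S) (d : ℕ) (p : Tile) :
    energy A Ω d p ≤ S ^ 2 * goodLength Ω d p := by
  rw [goodLength, energy, energy, subtileSum, subtileSum, Finset.mul_sum]
  exact Finset.sum_le_sum fun _ _ => tileEnergy_le hS _

lemma goodLength_le (Ω : Set ℝ) (d : ℕ) (p : Tile) : goodLength Ω d p ≤ 2 ^ p.k := by
  rw [goodLength, energy, subtileSum]
  calc ∑ j ∈ Finset.range (2 ^ d), tileEnergy 1 Ω ⟨p.k - d, 2 ^ d * p.n + j, p.l⟩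
      ≤ ∑ _j ∈ Finset.range (2 ^ d), (2:ℝ) ^ (p.k - d) :=
        Finset.sum_le_sum fun _ _ => (tileEnergy_le_two_zpow _ _ _).trans (by simp)
    _ = 2 ^ p.k := by
        rw [Finset.sum_const, Finset.card_range, nsmul_eq_mul, Nat.cast_pow, Nat.cast_ofNat,
          ← zpow_natCast, ← zpow_add₀ two_ne_zero]
        congr 1
        ring

end Energy

section TreeEnergy

variable {A A₁ A₂ A₃ : Tile → ℂ} {Ω : Set ℝ} {S : ℝ} {PP : Finset Bitile} {L : ℕ}

/-- The energy on the tree of the bitiles of `PP` below `P`, with top frequency in `ω_{P_d}`: each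
bitile contributes the half which is not below `P_d`. -/
def treeEnergy (A : Tile → ℂ) (Ω : Set ℝ) (L : ℕ) (PP : Finset Bitile) (P : Bitile) : ℝ :=
  energy A Ω L P.d + treeSum PP (fun Q => energy A Ω L Q.u) (fun Q => energy A Ω L Q.d) P.d

lemma WalshRecursion.energy_add_treeSum_le (hA : WalshRecursion A)
    (hS : ∀ p : Tile, ¬ p.timeI ⊆ Ω → ‖A p‖ ≤ S) (L : ℕ) (PP : Finset Bitile) (p : Tile) :
    energy A Ω L p + treeSum PP (fun Q => energy A Ω L Q.u) (fun Q => energy A Ω L Q.d) p ≤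
      4 * S ^ 2 * goodLength Ω L p := by
  induction p using Tile.induction_below PP with
  | leaf p hp =>
    rw [treeSum_eq_zero hp, add_zero, mul_assoc]
    have := energy_le_mul_goodLength hS L p
    linarith [energy_nonneg A Ω L p]
  | step P hleft hright =>
    have hsplit := hA.energy_d_add_u_le hS L P
    have hd := energy_nonneg A Ω L P.d
    have hu := energy_nonneg A Ω L P.u
    have hlength : goodLength Ω L P.u = goodLength Ω L P.d := rfl
    rw [treeSum_d, treeSum_u, hlength]
    constructor <;> split_ifs <;> linarith

lemma WalshRecursion.treeEnergy_le (hA : WalshRecursion A)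
    (hS : ∀ p : Tile, ¬ p.timeI ⊆ Ω → ‖A p‖ ≤ S) (L : ℕ) (PP : Finset Bitile) (P : Bitile) :
    treeEnergy A Ω L PP P ≤ 4 * S ^ 2 * 2 ^ P.k :=
  (hA.energy_add_treeSum_le hS L PP P.d).trans <| by
    gcongr
    exact goodLength_le Ω L P.d

lemma treeEnergy_mono {PP' : Finset Bitile} (h : PP' ⊆ PP) (P : Bitile) :
    treeEnergy A Ω L PP' P ≤ treeEnergy A Ω L PP P := by
  unfold treeEnergy treeSum
  gcongr <;> exact fun _ _ _ => energy_nonneg _ _ _ _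

/-- The size of the collection `PP` with respect to the coefficients `A` is at most `σ`. -/
def SizeLE (A : Tile → ℂ) (Ω : Set ℝ) (L : ℕ) (PP : Finset Bitile) (σ : ℝ) : Prop :=
  ∀ P ∈ PP, treeEnergy A Ω L PP P ≤ σ ^ 2 * 2 ^ P.k

lemma SizeLE.mono {PP' : Finset Bitile} {σ : ℝ} (h : SizeLE A Ω L PP σ) (hsub : PP' ⊆ PP) :
    SizeLE A Ω L PP' σ :=
  fun P hP => (treeEnergy_mono hsub P).trans (h P (hsub hP))

lemma energy_u_le_treeEnergy {P : Bitile} (hP : P ∈ PP) :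
    energy A Ω L P.u ≤ treeEnergy A Ω L PP P := by
  rw [treeEnergy, treeSum_d, if_pos hP]
  have hsum : ∀ p, 0 ≤ treeSum PP (fun Q => energy A Ω L Q.u) (fun Q => energy A Ω L Q.d) p :=
    treeSum_nonneg (fun _ => energy_nonneg _ _ _ _) (fun _ => energy_nonneg _ _ _ _)
  linarith [hsum P.left, hsum P.right, energy_nonneg A Ω L P.d]

/-- The integral of the product of the phase plane projections of two functions to `2 ^ d p`, in
terms of their coefficients. -/
def pairing (A₂ A₃ : Tile → ℂ) (d : ℕ) : Tile → ℂ :=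
  subtileSum d fun p => 2 ^ p.k * (A₂ p * A₃ p)

lemma pairing_succ (A₂ A₃ : Tile → ℂ) (d : ℕ) :
    pairing A₂ A₃ (d + 1) = halfSum (pairing A₂ A₃ d) :=
  funext (subtileSum_succ d _)

lemma WalshRecursion.pairing_split (h₂ : WalshRecursion A₂) (h₃ : WalshRecursion A₃) (d : ℕ)
    (R : Bitile) :
    pairing A₂ A₃ d R.d + pairing A₂ A₃ d R.u =
      pairing A₂ A₃ d R.left + pairing A₂ A₃ d R.right := by
  rw [pairing, subtileSum_d_add_u, subtileSum_left_add_right]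
  refine Finset.sum_congr rfl fun _ _ => ?_
  beta_reduce
  rw [h₂.left, h₃.left, h₂.right, h₃.right]
  simp only [Bitile.d, Bitile.u, Bitile.left, Bitile.right, Tile.double]
  rw [zpow_sub_one₀ two_ne_zero]
  ring

lemma pairing_eq_zero (hbad : ∀ p : Tile, p.timeI ⊆ Ω → A₂ p = 0) (d : ℕ) {p : Tile}
    (hp : p.timeI ⊆ Ω) : pairing A₂ A₃ d p = 0 := by
  induction d generalizing p with
  | zero => simp [pairing, hbad p hp]
  | succ d ih =>
    rw [pairing_succ, halfSum, ih (p.double.left_timeI_subset.trans hp),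
      ih (p.double.right_timeI_subset.trans hp), add_zero]

/-- The geometric mean of the energies of two functions, in a form additive over tiles: `σ₂` and
`σ₃` are their sizes. -/
def jointEnergy (A₂ A₃ : Tile → ℂ) (Ω : Set ℝ) (σ₂ σ₃ : ℝ) (d : ℕ) (p : Tile) : ℝ :=
  σ₂ * σ₃ / 2 * (energy A₂ Ω d p / σ₂ ^ 2 + energy A₃ Ω d p / σ₃ ^ 2)

lemma halfSum_jointEnergy (A₂ A₃ : Tile → ℂ) (Ω : Set ℝ) (σ₂ σ₃ : ℝ) (d : ℕ) :
    halfSum (jointEnergy A₂ A₃ Ω σ₂ σ₃ d) = jointEnergy A₂ A₃ Ω σ₂ σ₃ (d + 1) := by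
  ext p
  simp only [halfSum, jointEnergy, energy_succ]
  ring

lemma mul_le_half_mul_sq_div_add {a b σ τ : ℝ} (hσ : 0 < σ) (hτ : 0 < τ) :
    a * b ≤ σ * τ / 2 * (a ^ 2 / σ ^ 2 + b ^ 2 / τ ^ 2) := by
  have h := two_mul_le_add_sq (a / σ) (b / τ)
  calc a * b = σ * τ / 2 * (2 * (a / σ) * (b / τ)) := by field_simp
    _ ≤ σ * τ / 2 * (a ^ 2 / σ ^ 2 + b ^ 2 / τ ^ 2) := by
      rw [← div_pow, ← div_pow]
      gcongr

lemma norm_pairing_le_jointEnergy (hbad : ∀ p : Tile, p.timeI ⊆ Ω → A₂ p = 0) {σ₂ σ₃ : ℝ}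
    (hσ₂ : 0 < σ₂) (hσ₃ : 0 < σ₃) (d : ℕ) (p : Tile) :
    ‖pairing A₂ A₃ d p‖ ≤ jointEnergy A₂ A₃ Ω σ₂ σ₃ d p := by
  induction d generalizing p with
  | zero =>
    by_cases hp : p.timeI ⊆ Ω
    · simp [pairing_eq_zero hbad 0 hp, jointEnergy, energy, tileEnergy_of_subset hp]
    · rw [pairing, subtileSum_zero, jointEnergy, energy, energy, subtileSum_zero, subtileSum_zero,
        tileEnergy_of_not_subset hp, tileEnergy_of_not_subset hp, norm_mul, norm_mul, norm_zpow,
        Complex.norm_ofNat, mul_div_assoc _ (‖A₂ p‖ ^ 2), mul_div_assoc _ (‖A₃ p‖ ^ 2), ← mul_add,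
        mul_left_comm (σ₂ * σ₃ / 2)]
      exact mul_le_mul_of_nonneg_left (mul_le_half_mul_sq_div_add hσ₂ hσ₃) (by positivity)
  | succ d ih =>
    rw [pairing_succ, ← halfSum_jointEnergy]
    exact norm_add_le_of_le (ih _) (ih _)

lemma WalshRecursion.jointEnergy_split (h₂ : WalshRecursion A₂) (h₃ : WalshRecursion A₃)
    {σ₂ σ₃ : ℝ} (hσ₂ : 0 < σ₂) (hσ₃ : 0 < σ₃) (d : ℕ) (R : Bitile) :
    jointEnergy A₂ A₃ Ω σ₂ σ₃ d R.left + jointEnergy A₂ A₃ Ω σ₂ σ₃ d R.right ≤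
      jointEnergy A₂ A₃ Ω σ₂ σ₃ d R.d + jointEnergy A₂ A₃ Ω σ₂ σ₃ d R.u := by
  have hsplit₂ := div_le_div_of_nonneg_right (h₂.energy_split Ω d R) (sq_nonneg σ₂)
  have hsplit₃ := div_le_div_of_nonneg_right (h₃.energy_split Ω d R) (sq_nonneg σ₃)
  rw [add_div, add_div] at hsplit₂ hsplit₃
  simp only [jointEnergy, ← mul_add]
  exact mul_le_mul_of_nonneg_left (by linarith) (by positivity)

lemma jointEnergy_add_treeSum (A₂ A₃ : Tile → ℂ) (Ω : Set ℝ) (σ₂ σ₃ : ℝ) (d : ℕ)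
    (PP : Finset Bitile) (P : Bitile) :
    jointEnergy A₂ A₃ Ω σ₂ σ₃ d P.d + treeSum PP (fun Q => jointEnergy A₂ A₃ Ω σ₂ σ₃ d Q.u)
        (fun Q => jointEnergy A₂ A₃ Ω σ₂ σ₃ d Q.d) P.d =
      σ₂ * σ₃ / 2 *
        (treeEnergy A₂ Ω d PP P / σ₂ ^ 2 + treeEnergy A₃ Ω d PP P / σ₃ ^ 2) := by
  simp only [treeEnergy, treeSum, jointEnergy, ← Finset.mul_sum, Finset.sum_add_distrib,
    ← Finset.sum_div]
  ring

lemma jointEnergy_add_treeSum_le {σ₂ σ₃ : ℝ} (hσ₂ : 0 < σ₂) (hσ₃ : 0 < σ₃) {d : ℕ} {P : Bitile}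
    (h₂ : treeEnergy A₂ Ω d PP P ≤ σ₂ ^ 2 * 2 ^ P.k)
    (h₃ : treeEnergy A₃ Ω d PP P ≤ σ₃ ^ 2 * 2 ^ P.k) :
    jointEnergy A₂ A₃ Ω σ₂ σ₃ d P.d + treeSum PP (fun Q => jointEnergy A₂ A₃ Ω σ₂ σ₃ d Q.u)
        (fun Q => jointEnergy A₂ A₃ Ω σ₂ σ₃ d Q.d) P.d ≤ σ₂ * σ₃ * 2 ^ P.k := by
  rw [jointEnergy_add_treeSum]
  calc σ₂ * σ₃ / 2 * (treeEnergy A₂ Ω d PP P / σ₂ ^ 2 + treeEnergy A₃ Ω d PP P / σ₃ ^ 2)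
      ≤ σ₂ * σ₃ / 2 * (σ₂ ^ 2 * 2 ^ P.k / σ₂ ^ 2 + σ₃ ^ 2 * 2 ^ P.k / σ₃ ^ 2) := by gcongr
    _ = σ₂ * σ₃ * 2 ^ P.k := by field_simp; ring

/-- The contribution of a bitile to the quartile form, in terms of the coefficients of the three
functions. -/
def quartileTerm (A₁ A₂ A₃ : Tile → ℂ) (L : ℕ) : Bitile → ℂ :=
  treeTerm (pairing A₂ A₃ L) fun Q => A₁ Q.u

open Classical in
/-- The coefficients of the upper tiles, replaced by zero on the bad bitiles. -/
def goodCoeff (A : Tile → ℂ) (Ω : Set ℝ) (Q : Bitile) : ℂ := if Q.timeI ⊆ Ω then 0 else A Q.u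

lemma sq_norm_goodCoeff_mul (A : Tile → ℂ) (Ω : Set ℝ) (Q : Bitile) :
    ‖goodCoeff A Ω Q‖ ^ 2 * 2 ^ Q.k = energy A Ω 0 Q.u := by
  have hu : Q.u.timeI = Q.timeI := rfl
  rw [energy, subtileSum_zero, goodCoeff]
  split_ifs with h
  · simp [tileEnergy_of_subset (hu ▸ h)]
  · rw [tileEnergy_of_not_subset (hu ▸ h), mul_comm, Bitile.u]

lemma quartileTerm_eq_treeTerm (hbad : ∀ p : Tile, p.timeI ⊆ Ω → A₂ p = 0) :
    quartileTerm A₁ A₂ A₃ L = treeTerm (pairing A₂ A₃ L) (goodCoeff A₁ Ω) := by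
  ext Q
  rw [quartileTerm, treeTerm, treeTerm, goodCoeff]
  split_ifs with h
  · rw [pairing_eq_zero hbad L (Q.d.double.left_timeI_subset.trans h),
      pairing_eq_zero hbad L (Q.d.double.right_timeI_subset.trans h)]
    simp
  · rfl

lemma squareSum_goodCoeff_le (P : Bitile) :
    squareSum PP (goodCoeff A Ω) P.d ≤ treeEnergy A Ω 0 PP P := by
  simp only [squareSum, treeEnergy, treeSum, sq_norm_goodCoeff_mul, Pi.zero_apply,
    Finset.sum_const_zero]
  have := Finset.sum_nonneg fun Q (_ : Q ∈ {Q ∈ PP | Q.u ≤ P.d}) => energy_nonneg A Ω 0 Q.d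
  linarith [energy_nonneg A Ω 0 P.d]

/-- The size bounds under which the tree estimate applies; the second and the third function enter
through their projections to tiles dilated by `2 ^ L`. -/
structure SizesLE (A₁ A₂ A₃ : Tile → ℂ) (Ω : Set ℝ) (L : ℕ) (PP : Finset Bitile)
    (σ₁ σ₂ σ₃ : ℝ) : Prop where
  first : SizeLE A₁ Ω 0 PP σ₁
  second : SizeLE A₂ Ω (L + 1) PP σ₂
  third : SizeLE A₃ Ω (L + 1) PP σ₃

lemma SizesLE.mono {PP' : Finset Bitile} {σ₁ σ₂ σ₃ : ℝ} (h : SizesLE A₁ A₂ A₃ Ω L PP σ₁ σ₂ σ₃)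
    (hsub : PP' ⊆ PP) : SizesLE A₁ A₂ A₃ Ω L PP' σ₁ σ₂ σ₃ :=
  ⟨h.first.mono hsub, h.second.mono hsub, h.third.mono hsub⟩

lemma WalshRecursion.treeBounds (h₂ : WalshRecursion A₂) (h₃ : WalshRecursion A₃)
    (hbad : ∀ p : Tile, p.timeI ⊆ Ω → A₂ p = 0) {σ₁ σ₂ σ₃ : ℝ} (hσ₁ : 0 < σ₁) (hσ₂ : 0 < σ₂)
    (hσ₃ : 0 < σ₃) (hPP : (PP : Set Bitile).OrdConnected)
    (hsize : SizesLE A₁ A₂ A₃ Ω L PP σ₁ σ₂ σ₃) :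
    TreeBounds PP (pairing A₂ A₃ L) (jointEnergy A₂ A₃ Ω σ₂ σ₃ L) (goodCoeff A₁ Ω) σ₁
      (σ₂ * σ₃) where
  ordConnected := hPP
  pairing_split := h₂.pairing_split h₃ L
  energy_split := h₂.jointEnergy_split h₃ hσ₂ hσ₃ L
  norm_pairing_le := norm_pairing_le_jointEnergy hbad hσ₂ hσ₃ L
  norm_coeff_le Q hQ := by
    have h := (energy_u_le_treeEnergy hQ).trans (hsize.first Q hQ)
    rw [← sq_norm_goodCoeff_mul] at h
    exact le_of_sq_le_sq (le_of_mul_le_mul_right h (by positivity)) hσ₁.le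
  size_le P hP := by
    rw [halfSum_jointEnergy]
    exact jointEnergy_add_treeSum_le hσ₂ hσ₃ (hsize.second P hP) (hsize.third P hP)

theorem norm_sum_quartileTerm_le (h₂ : WalshRecursion A₂) (h₃ : WalshRecursion A₃)
    (hbad : ∀ p : Tile, p.timeI ⊆ Ω → A₂ p = 0) {σ₁ σ₂ σ₃ : ℝ} (hσ₁ : 0 < σ₁) (hσ₂ : 0 < σ₂)
    (hσ₃ : 0 < σ₃) (hPP : (PP : Set Bitile).OrdConnected)
    (hsize : SizesLE A₁ A₂ A₃ Ω L PP σ₁ σ₂ σ₃)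
    {P : Bitile} (hP : P ∈ PP) :
    ‖∑ Q ∈ PP with Q ≤ P, quartileTerm A₁ A₂ A₃ L Q‖ ≤ 20 * σ₁ * (σ₂ * σ₃) * 2 ^ P.k := by
  rw [quartileTerm_eq_treeTerm hbad]
  exact (h₂.treeBounds h₃ hbad hσ₁ hσ₂ hσ₃ hPP hsize).norm_sum_treeTerm_le hσ₁
    (by positivity) hP ((squareSum_goodCoeff_le P).trans (hsize.first P hP))

end TreeEnergy

/-! ### Selection of trees -/

section Selection

namespace Bitile

variable {P Q : Bitile} {q : Tile} {x y : ℝ}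

lemma le_of_d_le_d (h : Q.d ≤ P.d) : Q ≤ P := by
  rw [← P.d_bitile]
  exact le_bitile_iff.2 (.inl h)

lemma le_u_of_le_d (h : q ≤ P.d) (hne : q ≠ P.d) : q ≤ P.u :=
  (le_iff_eq_or_of_bitile_eq P.u_bitile).2
    (.inr (((le_iff_eq_or_of_bitile_eq P.d_bitile).1 h).resolve_left hne))

lemma le_d_of_le_u (h : q ≤ P.u) (hne : q ≠ P.u) : q ≤ P.d :=
  (le_iff_eq_or_of_bitile_eq P.d_bitile).2
    (.inr (((le_iff_eq_or_of_bitile_eq P.u_bitile).1 h).resolve_left hne))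

lemma lt_of_mem_d_of_mem_u (hx : x ∈ Q.d.freqI) (hy : y ∈ Q.u.freqI) : x < y := by
  have h := hx.2.trans_le (le_refl _)
  have h' := hy.1
  simp only [d, u] at h h'
  push_cast at h h'
  exact h.trans_le h'

/-- The lower end point of `ω_P`, the frequency of the tree with top `P`. -/
def baseFreq (P : Bitile) : ℝ := 2 ^ (-P.k) * (2 * P.l : ℕ)

lemma baseFreq_mem (h : q ≤ P.d) : P.baseFreq ∈ q.freqI :=
  h.2 (left_mem_dyadicI _ _)

end Bitile

/-- Every tree of every convex subcollection of `PP` contributes at most `K` times the length of its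
top to the sum of `Λ`. -/
def TreeSumsLE (Λ : Bitile → ℂ) (K : ℝ) (PP : Finset Bitile) : Prop :=
  ∀ PP₀ ⊆ PP, (PP₀ : Set Bitile).OrdConnected → ∀ P ∈ PP₀,
    ‖∑ Q ∈ PP₀ with Q ≤ P, Λ Q‖ ≤ K * 2 ^ P.k

lemma TreeSumsLE.mono {Λ : Bitile → ℂ} {K : ℝ} {PP PP' : Finset Bitile} (h : TreeSumsLE Λ K PP)
    (hsub : PP' ⊆ PP) : TreeSumsLE Λ K PP' :=
  fun PP₀ hPP₀ => h PP₀ (hPP₀.trans hsub)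

/-- A rule for the greedy selection of trees. A heavy top `P` with minimal `key` is removed together
with everything below it, and the bitiles `Q` with `rel Q P` are recorded; `separated` ensures that
the tiles `half Q` of all recorded bitiles are pairwise disjoint. -/
structure SelectionRule where
  half : Bitile → Tile
  rel : Bitile → Bitile → Prop
  dec : DecidableRel rel
  key : Bitile → ℝ
  le_of_rel : ∀ {Q P}, rel Q P → Q ≤ P
  separated : ∀ {Q P Q' P'}, rel Q P → rel Q' P' → key P ≤ key P' → (¬ Q' ≤ P ∨ P = P') →
    Q ≠ Q' → ¬ half Q ≤ half Q' ∧ ¬ half Q' ≤ half Q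

namespace SelectionRule

attribute [instance] dec

/-- Every top is recorded itself, the largest ones first. -/
def top : SelectionRule where
  half := Bitile.d
  rel := (· = ·)
  dec := inferInstance
  key P := -P.k
  le_of_rel h := h.le
  separated := by
    rintro Q _ Q' _ rfl rfl hkey hnot hne
    have hle := hnot.resolve_right hne
    refine ⟨fun h => hle ?_, fun h => hle (Bitile.le_of_d_le_d h)⟩
    have hQ := Bitile.le_of_d_le_d h
    obtain ⟨δ, hk, hn, hl⟩ := Bitile.le_iff.1 hQ
    have : Q'.k ≤ Q.k := by exact_mod_cast neg_le_neg_iff.1 hkey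
    obtain rfl : δ = 0 := by omega
    exact Bitile.le_iff.2 ⟨0, by simp_all⟩

/-- The bitiles with `Q_u ≤ P_d` are recorded, the tops of smallest frequency first. -/
def upper : SelectionRule where
  half := Bitile.d
  rel Q P := Q.u ≤ P.d
  dec := inferInstance
  key := Bitile.baseFreq
  le_of_rel {Q P} h := by simpa using Bitile.le_bitile_iff.2 (.inr h)
  separated := by
    intro Q P Q' P' h h' hkey hnot hne
    refine ⟨fun hle => hkey.not_gt ?_, fun hle => ?_⟩
    · have hP' := (Bitile.le_u_of_le_d hle (by simpa using hne)).trans h'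
      exact Bitile.lt_of_mem_d_of_mem_u (Bitile.baseFreq_mem hP') (Bitile.baseFreq_mem h)
    · have hP := (Bitile.le_u_of_le_d hle (by simpa using hne.symm)).trans h
      rcases hnot with hnot | rfl
      · exact hnot (by simpa using Bitile.le_bitile_iff.2 (.inl hP))
      · exact Bitile.not_d_le_and_u_le ⟨hP, h'⟩

/-- The bitiles with `Q_d ≤ P_d` are recorded, the tops of largest frequency first. -/
def lower : SelectionRule where
  half := Bitile.u
  rel Q P := Q.d ≤ P.d
  dec := inferInstance
  key P := -P.baseFreq
  le_of_rel := Bitile.le_of_d_le_d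
  separated := by
    intro Q P Q' P' h h' hkey hnot hne
    refine ⟨fun hle => (neg_le_neg_iff.1 hkey).not_gt ?_, fun hle => ?_⟩
    · have hP' := (Bitile.le_d_of_le_u hle (by simpa using hne)).trans h'
      exact Bitile.lt_of_mem_d_of_mem_u (Bitile.baseFreq_mem h) (Bitile.baseFreq_mem hP')
    · have hP := (Bitile.le_d_of_le_u hle (by simpa using hne.symm)).trans h
      rcases hnot with hnot | rfl
      · exact hnot (by simpa using Bitile.le_bitile_iff.2 (.inr hP))
      · exact Bitile.not_d_le_and_u_le ⟨h', hP⟩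

variable {ρ : SelectionRule} {w : Bitile → ℝ} {τ K : ℝ} {Λ : Bitile → ℂ}
  {PP PP' 𝒬 : Finset Bitile} {P : Bitile}

/-- The total weight of the bitiles recorded for the top `P`. -/
def mass (ρ : SelectionRule) (w : Bitile → ℝ) (PP : Finset Bitile) (P : Bitile) : ℝ :=
  ∑ Q ∈ PP with ρ.rel Q P, w Q

lemma mass_mono (hw : ∀ Q, 0 ≤ w Q) (h : PP' ⊆ PP) (P : Bitile) :
    ρ.mass w PP' P ≤ ρ.mass w PP P :=
  Finset.sum_le_sum_of_subset_of_nonneg (Finset.filter_subset_filter _ h) fun _ _ _ => hw _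

/-- The outcome of the greedy selection at the threshold `τ`: `PP'` is what is left of `PP`, and `𝒬`
consists of the recorded bitiles, which control the loss in the sum of `Λ`. -/
structure IsSelection (ρ : SelectionRule) (w : Bitile → ℝ) (τ K : ℝ) (Λ : Bitile → ℂ)
    (PP PP' 𝒬 : Finset Bitile) : Prop where
  subset : PP' ⊆ PP
  recorded_subset : 𝒬 ⊆ PP
  ordConnected : (PP' : Set Bitile).OrdConnected
  mass_le : ∀ P ∈ PP', ρ.mass w PP' P ≤ τ * 2 ^ P.k
  pairwise : (𝒬 : Set Bitile).Pairwise fun Q Q' => ¬ ρ.half Q ≤ ρ.half Q'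
  norm_sub_le : ‖∑ Q ∈ PP, Λ Q - ∑ Q ∈ PP', Λ Q‖ ≤ K / τ * ∑ Q ∈ 𝒬, w Q
  exists_heavy : ∀ Q ∈ 𝒬, ∃ P ∈ PP, ρ.rel Q P ∧ τ * 2 ^ P.k < ρ.mass w PP P

lemma isSelection_of_mass_le (hPP : (PP : Set Bitile).OrdConnected)
    (h : ∀ P ∈ PP, ρ.mass w PP P ≤ τ * 2 ^ P.k) : ρ.IsSelection w τ K Λ PP PP ∅ where
  subset := subset_rfl
  recorded_subset := Finset.empty_subset _
  ordConnected := hPP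
  mass_le := h
  pairwise := by simp
  norm_sub_le := by simp
  exists_heavy := by simp

lemma pairwise_union_of_isSelection (hw : ∀ Q, 0 ≤ w Q)
    (hmin : ∀ P' ∈ PP, τ * 2 ^ P'.k < ρ.mass w PP P' → ρ.key P ≤ ρ.key P')
    (h : ρ.IsSelection w τ K Λ {Q ∈ PP | ¬ Q ≤ P} PP' 𝒬) :
    (({Q ∈ PP | ρ.rel Q P} ∪ 𝒬 : Finset Bitile) : Set Bitile).Pairwise
      fun Q Q' => ¬ ρ.half Q ≤ ρ.half Q' := by
  have hcross : ∀ Q ∈ ({Q ∈ PP | ρ.rel Q P} : Finset Bitile), ∀ Q' ∈ 𝒬, Q ≠ Q' →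
      ¬ ρ.half Q ≤ ρ.half Q' ∧ ¬ ρ.half Q' ≤ ρ.half Q := by
    intro Q hQ Q' hQ' hne
    obtain ⟨P', hP', hrel, hheavy⟩ := h.exists_heavy Q' hQ'
    have hkey := hmin P' (Finset.mem_of_mem_filter _ hP')
      (hheavy.trans_le (mass_mono hw (Finset.filter_subset _ _) P'))
    exact ρ.separated (Finset.mem_filter.1 hQ).2 hrel hkey
      (.inl (Finset.mem_filter.1 (h.recorded_subset hQ')).2) hne
  intro Q hQ Q' hQ' hne
  rcases Finset.mem_union.1 hQ with hQ | hQ <;> rcases Finset.mem_union.1 hQ' with hQ' | hQ'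
  · exact (ρ.separated (Finset.mem_filter.1 hQ).2 (Finset.mem_filter.1 hQ').2 le_rfl (.inr rfl)
      hne).1
  · exact (hcross Q hQ Q' hQ' hne).1
  · exact (hcross Q' hQ' Q hQ hne.symm).2
  · exact h.pairwise hQ hQ' hne

lemma norm_sub_le_of_isSelection (hτ : 0 < τ) (hK : 0 ≤ K)
    (htree : ‖∑ Q ∈ PP with Q ≤ P, Λ Q‖ ≤ K * 2 ^ P.k) (hheavy : τ * 2 ^ P.k < ρ.mass w PP P)
    (h : ρ.IsSelection w τ K Λ {Q ∈ PP | ¬ Q ≤ P} PP' 𝒬) :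
    ‖∑ Q ∈ PP, Λ Q - ∑ Q ∈ PP', Λ Q‖ ≤ K / τ * ∑ Q ∈ {Q ∈ PP | ρ.rel Q P} ∪ 𝒬, w Q := by
  have hdisj : Disjoint ({Q ∈ PP | ρ.rel Q P} : Finset Bitile) 𝒬 :=
    Finset.disjoint_left.2 fun Q hQ hQ' => (Finset.mem_filter.1 (h.recorded_subset hQ')).2
      (ρ.le_of_rel (Finset.mem_filter.1 hQ).2)
  have hfirst : ‖∑ Q ∈ PP with Q ≤ P, Λ Q‖ ≤ K / τ * ρ.mass w PP P := by
    calc ‖∑ Q ∈ PP with Q ≤ P, Λ Q‖ ≤ K * 2 ^ P.k := htree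
      _ = K / τ * (τ * 2 ^ P.k) := by field_simp
      _ ≤ K / τ * ρ.mass w PP P := by gcongr
  rw [Finset.sum_union hdisj, mul_add, ← Finset.sum_filter_add_sum_filter_not PP (· ≤ P),
    add_sub_assoc]
  exact norm_add_le_of_le hfirst h.norm_sub_le

lemma ordConnected_filter_not_le (hPP : (PP : Set Bitile).OrdConnected) (P : Bitile) :
    (({Q ∈ PP | ¬ Q ≤ P} : Finset Bitile) : Set Bitile).OrdConnected := by
  refine ⟨fun Q hQ Q' hQ' R hR => ?_⟩
  simp only [Finset.coe_filter, mem_ofPred_eq] at hQ hQ' ⊢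
  exact ⟨hPP.out hQ.1 hQ'.1 hR, fun hRP => hQ.2 (hR.1.trans hRP)⟩

lemma IsSelection.union (hτ : 0 < τ) (hK : 0 ≤ K) (hw : ∀ Q, 0 ≤ w Q) (hP : P ∈ PP)
    (htree : ‖∑ Q ∈ PP with Q ≤ P, Λ Q‖ ≤ K * 2 ^ P.k) (hheavy : τ * 2 ^ P.k < ρ.mass w PP P)
    (hmin : ∀ P' ∈ PP, τ * 2 ^ P'.k < ρ.mass w PP P' → ρ.key P ≤ ρ.key P')
    (h : ρ.IsSelection w τ K Λ {Q ∈ PP | ¬ Q ≤ P} PP' 𝒬) :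
    ρ.IsSelection w τ K Λ PP PP' ({Q ∈ PP | ρ.rel Q P} ∪ 𝒬) where
  subset := h.subset.trans (Finset.filter_subset _ _)
  recorded_subset := Finset.union_subset (Finset.filter_subset _ _)
    (h.recorded_subset.trans (Finset.filter_subset _ _))
  ordConnected := h.ordConnected
  mass_le := h.mass_le
  pairwise := pairwise_union_of_isSelection hw hmin h
  norm_sub_le := norm_sub_le_of_isSelection hτ hK htree hheavy h
  exists_heavy Q hQ := by
    rcases Finset.mem_union.1 hQ with hQ | hQ
    · exact ⟨P, hP, (Finset.mem_filter.1 hQ).2, hheavy⟩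
    · obtain ⟨P', hP', hrel, hheavy'⟩ := h.exists_heavy Q hQ
      exact ⟨P', Finset.mem_of_mem_filter _ hP', hrel,
        hheavy'.trans_le (mass_mono hw (Finset.filter_subset _ _) P')⟩

theorem exists_isSelection (ρ : SelectionRule) (hτ : 0 < τ) (hK : 0 ≤ K) (hw : ∀ Q, 0 ≤ w Q)
    (PP : Finset Bitile) (hPP : (PP : Set Bitile).OrdConnected) (htree : TreeSumsLE Λ K PP) :
    ∃ PP' 𝒬, ρ.IsSelection w τ K Λ PP PP' 𝒬 := by
  induction PP using Finset.strongInduction with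
  | H PP ih =>
  by_cases hlight : ∀ P ∈ PP, ρ.mass w PP P ≤ τ * 2 ^ P.k
  · exact ⟨PP, ∅, isSelection_of_mass_le hPP hlight⟩
  push Not at hlight
  obtain ⟨P₀, hP₀, hheavy₀⟩ := hlight
  obtain ⟨P, hP, hmin⟩ := Finset.exists_min_image {P ∈ PP | τ * 2 ^ P.k < ρ.mass w PP P} ρ.key
    ⟨P₀, Finset.mem_filter.2 ⟨hP₀, hheavy₀⟩⟩
  obtain ⟨hP, hheavy⟩ := Finset.mem_filter.1 hP
  have hsub : {Q ∈ PP | ¬ Q ≤ P} ⊂ PP :=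
    Finset.filter_ssubset.2 ⟨P, hP, not_not.2 le_rfl⟩
  obtain ⟨PP', 𝒬, h⟩ := ih _ hsub (ordConnected_filter_not_le hPP P)
    (htree.mono hsub.1)
  exact ⟨PP', _, h.union hτ hK hw hP (htree PP subset_rfl hPP P hP) hheavy
    fun P' hP' h' => hmin P' (Finset.mem_filter.2 ⟨hP', h'⟩)⟩

end SelectionRule

end Selection

section Refinement

variable {A A₁ A₂ A₃ : Tile → ℂ} {Ω : Set ℝ} {L d : ℕ} {PP PP' PP'' : Finset Bitile}
  {Λ : Bitile → ℂ} {B K τ D δ δ' σ σ' : ℝ}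

/-- A Bessel inequality: pairwise disjoint tiles carry a total energy of at most `B`. -/
def BesselBound (A : Tile → ℂ) (Ω : Set ℝ) (d : ℕ) (B : ℝ) : Prop :=
  ∀ 𝔭 : Finset Tile, IsAntichain (· ≤ ·) (𝔭 : Set Tile) → ∑ p ∈ 𝔭, energy A Ω d p ≤ B

/-- `PP'` is a convex subcollection of `PP` such that discarding the rest changes the sum of `Λ` by
at most `δ`. -/
structure IsRefinement (Λ : Bitile → ℂ) (PP PP' : Finset Bitile) (δ : ℝ) : Prop where
  subset : PP' ⊆ PP
  ordConnected : (PP' : Set Bitile).OrdConnected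
  norm_sub_le : ‖∑ Q ∈ PP, Λ Q - ∑ Q ∈ PP', Λ Q‖ ≤ δ

namespace IsRefinement

lemma refl (hPP : (PP : Set Bitile).OrdConnected) (hδ : 0 ≤ δ) : IsRefinement Λ PP PP δ :=
  ⟨subset_rfl, hPP, by simpa using hδ⟩

lemma trans (h : IsRefinement Λ PP PP' δ) (h' : IsRefinement Λ PP' PP'' δ') :
    IsRefinement Λ PP PP'' (δ + δ') where
  subset := h'.subset.trans h.subset
  ordConnected := h'.ordConnected
  norm_sub_le := by
    rw [← sub_add_sub_cancel _ (∑ Q ∈ PP', Λ Q)]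
    exact norm_add_le_of_le h.norm_sub_le h'.norm_sub_le

lemma mono (h : IsRefinement Λ PP PP' δ) (hδ : δ ≤ δ') : IsRefinement Λ PP PP' δ' :=
  ⟨h.subset, h.ordConnected, h.norm_sub_le.trans hδ⟩

end IsRefinement

lemma BesselBound.exists_isRefinement_mass_le (hB : BesselBound A Ω d B) (ρ : SelectionRule)
    (hτ : 0 < τ) (hK : 0 ≤ K) (hPP : (PP : Set Bitile).OrdConnected)
    (htree : TreeSumsLE Λ K PP) :
    ∃ PP', IsRefinement Λ PP PP' (K / τ * B) ∧
      ∀ P ∈ PP', ρ.mass (fun Q => energy A Ω d (ρ.half Q)) PP' P ≤ τ * 2 ^ P.k := by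
  obtain ⟨PP', 𝒬, h⟩ := ρ.exists_isSelection hτ hK
    (fun Q => energy_nonneg A Ω d (ρ.half Q)) PP hPP htree
  have hinj : InjOn ρ.half 𝒬 := fun Q hQ Q' hQ' heq =>
    by_contra fun hne => h.pairwise hQ hQ' hne heq.le
  have hanti : IsAntichain (· ≤ ·) ((𝒬.image ρ.half : Finset Tile) : Set Tile) := by
    rw [Finset.coe_image]
    rintro _ ⟨Q, hQ, rfl⟩ _ ⟨Q', hQ', rfl⟩ hne
    exact h.pairwise hQ hQ' (ne_of_apply_ne _ hne)
  have hsum := hB _ hanti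
  rw [Finset.sum_image hinj] at hsum
  exact ⟨PP', ⟨h.subset, h.ordConnected, h.norm_sub_le.trans (by gcongr)⟩, h.mass_le⟩

lemma treeEnergy_eq_mass {P : Bitile} (hP : P ∈ PP) :
    treeEnergy A Ω d PP P =
      SelectionRule.top.mass (fun Q => energy A Ω d Q.d) PP P +
      SelectionRule.upper.mass (fun Q => energy A Ω d Q.d) PP P +
      SelectionRule.lower.mass (fun Q => energy A Ω d Q.u) PP P := by
  have htop : SelectionRule.top.mass (fun Q => energy A Ω d Q.d) PP P = energy A Ω d P.d := by
    have hfilter : {Q ∈ PP | SelectionRule.top.rel Q P} = {P} := by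
      ext Q
      rw [Finset.mem_filter, Finset.mem_singleton]
      exact ⟨fun h => h.2, fun h => ⟨h ▸ hP, h⟩⟩
    rw [SelectionRule.mass, hfilter, Finset.sum_singleton]
  rw [htop, treeEnergy, treeSum, add_comm (∑ Q ∈ PP with Q.d ≤ P.d, _), ← add_assoc]
  rfl

theorem BesselBound.exists_isRefinement_sizeLE (hB : BesselBound A Ω d B) (hσ : 0 < σ)
    (hK : 0 ≤ K) (hPP : (PP : Set Bitile).OrdConnected) (htree : TreeSumsLE Λ K PP) :
    ∃ PP', IsRefinement Λ PP PP' (9 * K * (B / σ ^ 2)) ∧ SizeLE A Ω d PP' σ := by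
  have hτ : 0 < σ ^ 2 / 3 := by positivity
  obtain ⟨P₁, h₁, hmass₁⟩ := hB.exists_isRefinement_mass_le .top hτ hK hPP htree
  obtain ⟨P₂, h₂, hmass₂⟩ := hB.exists_isRefinement_mass_le .upper hτ hK h₁.ordConnected
    (htree.mono h₁.subset)
  obtain ⟨P₃, h₃, hmass₃⟩ := hB.exists_isRefinement_mass_le .lower hτ hK h₂.ordConnected
    (htree.mono (h₁.trans h₂).subset)
  refine ⟨P₃, ((h₁.trans h₂).trans h₃).mono ?_, fun P hP => ?_⟩
  · exact le_of_eq (by field_simp; ring)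
  · have hw : ∀ Q : Bitile, 0 ≤ energy A Ω d Q.d := fun Q => energy_nonneg _ _ _ _
    have htop := (SelectionRule.mass_mono hw (h₂.trans h₃).subset P).trans
      (hmass₁ P ((h₂.trans h₃).subset hP))
    have hupper := (SelectionRule.mass_mono hw h₃.subset P).trans (hmass₂ P (h₃.subset hP))
    have hlower := hmass₃ P hP
    rw [treeEnergy_eq_mass hP]
    calc _ ≤ σ ^ 2 / 3 * 2 ^ P.k + σ ^ 2 / 3 * 2 ^ P.k + σ ^ 2 / 3 * 2 ^ P.k :=
        add_le_add (add_le_add htop hupper) hlower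
      _ = σ ^ 2 * 2 ^ P.k := by ring

lemma SizeLE.exists_isRefinement (hsize : SizeLE A Ω d PP σ) (hB : BesselBound A Ω d B)
    (hσ' : 0 < σ') (hD : 0 ≤ D) (hσσ' : σ' = σ ∨ B / σ' ^ 2 ≤ D) (hK : 0 ≤ K)
    (hPP : (PP : Set Bitile).OrdConnected) (htree : TreeSumsLE Λ K PP) :
    ∃ PP', IsRefinement Λ PP PP' (9 * K * D) ∧ SizeLE A Ω d PP' σ' := by
  rcases hσσ' with rfl | hle
  · exact ⟨PP, .refl hPP (by positivity), hsize⟩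
  · obtain ⟨PP', h, hsize'⟩ := hB.exists_isRefinement_sizeLE hσ' hK hPP htree
    exact ⟨PP', h.mono (by gcongr), hsize'⟩

end Refinement

section Iteration

variable {A₁ A₂ A₃ : Tile → ℂ} {Ω : Set ℝ} {L : ℕ} {PP : Finset Bitile} {B₁ B₂ B₃ : ℝ}

/-- The hypotheses on the coefficients of three functions, `Ω` being the exceptional set on which
the second function vanishes. -/
structure IsAdmissible (A₁ A₂ A₃ : Tile → ℂ) (Ω : Set ℝ) (L : ℕ) (B₁ B₂ B₃ : ℝ) : Prop where
  recursion₂ : WalshRecursion A₂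
  recursion₃ : WalshRecursion A₃
  eq_zero₂ : ∀ p : Tile, p.timeI ⊆ Ω → A₂ p = 0
  bessel₁ : BesselBound A₁ Ω 0 B₁
  bessel₂ : BesselBound A₂ Ω (L + 1) B₂
  bessel₃ : BesselBound A₃ Ω (L + 1) B₃

namespace IsAdmissible

lemma treeSumsLE (h : IsAdmissible A₁ A₂ A₃ Ω L B₁ B₂ B₃) {σ₁ σ₂ σ₃ : ℝ} (hσ₁ : 0 < σ₁)
    (hσ₂ : 0 < σ₂) (hσ₃ : 0 < σ₃) (hsize : SizesLE A₁ A₂ A₃ Ω L PP σ₁ σ₂ σ₃) :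
    TreeSumsLE (quartileTerm A₁ A₂ A₃ L) (20 * σ₁ * (σ₂ * σ₃)) PP :=
  fun _ hsub hconn _ hP => norm_sum_quartileTerm_le h.recursion₂ h.recursion₃ h.eq_zero₂ hσ₁ hσ₂
    hσ₃ hconn (hsize.mono hsub) hP

lemma exists_isRefinement (h : IsAdmissible A₁ A₂ A₃ Ω L B₁ B₂ B₃)
    {σ₁ σ₂ σ₃ σ₁' σ₂' σ₃' D : ℝ} (hσ₁ : 0 < σ₁) (hσ₂ : 0 < σ₂) (hσ₃ : 0 < σ₃) (hσ₁' : 0 < σ₁')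
    (hσ₂' : 0 < σ₂') (hσ₃' : 0 < σ₃') (hD : 0 ≤ D) (hstep₁ : σ₁' = σ₁ ∨ B₁ / σ₁' ^ 2 ≤ D)
    (hstep₂ : σ₂' = σ₂ ∨ B₂ / σ₂' ^ 2 ≤ D) (hstep₃ : σ₃' = σ₃ ∨ B₃ / σ₃' ^ 2 ≤ D)
    (hPP : (PP : Set Bitile).OrdConnected) (hsize : SizesLE A₁ A₂ A₃ Ω L PP σ₁ σ₂ σ₃) :
    ∃ PP', IsRefinement (quartileTerm A₁ A₂ A₃ L) PP PP' (540 * (σ₁ * σ₂ * σ₃) * D) ∧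
      SizesLE A₁ A₂ A₃ Ω L PP' σ₁' σ₂' σ₃' := by
  have hK : 0 ≤ 20 * σ₁ * (σ₂ * σ₃) := by positivity
  have htree := h.treeSumsLE hσ₁ hσ₂ hσ₃ hsize
  obtain ⟨P₁, h₁, hsize₁⟩ := hsize.first.exists_isRefinement h.bessel₁ hσ₁' hD hstep₁ hK hPP htree
  obtain ⟨P₂, h₂, hsize₂⟩ := (hsize.second.mono h₁.subset).exists_isRefinement h.bessel₂ hσ₂' hD
    hstep₂ hK h₁.ordConnected (htree.mono h₁.subset)
  have h₁₂ := h₁.trans h₂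
  obtain ⟨P₃, h₃, hsize₃⟩ := (hsize.third.mono h₁₂.subset).exists_isRefinement h.bessel₃ hσ₃' hD
    hstep₃ hK h₂.ordConnected (htree.mono h₁₂.subset)
  exact ⟨P₃, (h₁₂.trans h₃).mono (le_of_eq (by ring)),
    hsize₁.mono (h₂.trans h₃).subset, hsize₂.mono h₃.subset, hsize₃⟩

variable {s₁ s₂ s₃ D : ℕ → ℝ}

lemma exists_isRefinement_iterate (h : IsAdmissible A₁ A₂ A₃ Ω L B₁ B₂ B₃) (hs₁ : ∀ m, 0 < s₁ m)
    (hs₂ : ∀ m, 0 < s₂ m) (hs₃ : ∀ m, 0 < s₃ m) (hD : ∀ m, 0 ≤ D m)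
    (hstep₁ : ∀ m, s₁ (m + 1) = s₁ m ∨ B₁ / s₁ (m + 1) ^ 2 ≤ D m)
    (hstep₂ : ∀ m, s₂ (m + 1) = s₂ m ∨ B₂ / s₂ (m + 1) ^ 2 ≤ D m)
    (hstep₃ : ∀ m, s₃ (m + 1) = s₃ m ∨ B₃ / s₃ (m + 1) ^ 2 ≤ D m)
    (hPP : (PP : Set Bitile).OrdConnected) (hsize : SizesLE A₁ A₂ A₃ Ω L PP (s₁ 0) (s₂ 0) (s₃ 0))
    (M : ℕ) :
    ∃ PP', IsRefinement (quartileTerm A₁ A₂ A₃ L) PP PP'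
        (∑ m ∈ Finset.range M, 540 * (s₁ m * s₂ m * s₃ m) * D m) ∧
      SizesLE A₁ A₂ A₃ Ω L PP' (s₁ M) (s₂ M) (s₃ M) := by
  induction M with
  | zero => exact ⟨PP, .refl hPP (by simp), hsize⟩
  | succ M ih =>
    obtain ⟨P₁, h₁, hsize₁⟩ := ih
    obtain ⟨P₂, h₂, hsize₂⟩ := h.exists_isRefinement (hs₁ M) (hs₂ M) (hs₃ M) (hs₁ _) (hs₂ _) (hs₃ _)
      (hD M) (hstep₁ M) (hstep₂ M) (hstep₃ M) h₁.ordConnected hsize₁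
    exact ⟨P₂, (h₁.trans h₂).mono (Finset.sum_range_succ _ M).ge, hsize₂⟩

lemma norm_sum_quartileTerm_le_of_sizesLE (h : IsAdmissible A₁ A₂ A₃ Ω L B₁ B₂ B₃)
    {σ₁ σ₂ σ₃ : ℝ} (hσ₁ : 0 < σ₁) (hσ₂ : 0 < σ₂) (hσ₃ : 0 < σ₃)
    (hsize : SizesLE A₁ A₂ A₃ Ω L PP σ₁ σ₂ σ₃) :
    ‖∑ Q ∈ PP, quartileTerm A₁ A₂ A₃ L Q‖ ≤ 20 * σ₁ * (σ₂ * σ₃) * ∑ P ∈ PP, (2 : ℝ) ^ P.k := by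
  rw [Finset.mul_sum]
  refine norm_sum_le_of_le _ fun P hP => ?_
  have hsingle := h.treeSumsLE hσ₁ hσ₂ hσ₃ hsize {P} (by simpa using hP)
    (by simpa using ordConnected_singleton) P (Finset.mem_singleton_self P)
  simpa [Finset.sum_filter] using hsingle

theorem norm_sum_quartileTerm_le_iterate (h : IsAdmissible A₁ A₂ A₃ Ω L B₁ B₂ B₃)
    (hs₁ : ∀ m, 0 < s₁ m) (hs₂ : ∀ m, 0 < s₂ m) (hs₃ : ∀ m, 0 < s₃ m) (hD : ∀ m, 0 ≤ D m)
    (hstep₁ : ∀ m, s₁ (m + 1) = s₁ m ∨ B₁ / s₁ (m + 1) ^ 2 ≤ D m)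
    (hstep₂ : ∀ m, s₂ (m + 1) = s₂ m ∨ B₂ / s₂ (m + 1) ^ 2 ≤ D m)
    (hstep₃ : ∀ m, s₃ (m + 1) = s₃ m ∨ B₃ / s₃ (m + 1) ^ 2 ≤ D m)
    (hPP : (PP : Set Bitile).OrdConnected) (hsize : SizesLE A₁ A₂ A₃ Ω L PP (s₁ 0) (s₂ 0) (s₃ 0))
    (M : ℕ) :
    ‖∑ Q ∈ PP, quartileTerm A₁ A₂ A₃ L Q‖ ≤
      ∑ m ∈ Finset.range M, 540 * (s₁ m * s₂ m * s₃ m) * D m +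
        20 * s₁ M * (s₂ M * s₃ M) * ∑ P ∈ PP, (2 : ℝ) ^ P.k := by
  obtain ⟨PP', h', hsize'⟩ := h.exists_isRefinement_iterate hs₁ hs₂ hs₃ hD hstep₁ hstep₂ hstep₃ hPP
    hsize M
  rw [← sub_add_cancel (∑ Q ∈ PP, quartileTerm A₁ A₂ A₃ L Q)
    (∑ Q ∈ PP', quartileTerm A₁ A₂ A₃ L Q)]
  refine norm_add_le_of_le h'.norm_sub_le
    ((h.norm_sum_quartileTerm_le_of_sizesLE (hs₁ M) (hs₂ M) (hs₃ M) hsize').trans ?_)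
  have hK : 0 ≤ 20 * s₁ M * (s₂ M * s₃ M) :=
    mul_nonneg (mul_nonneg (by norm_num) (hs₁ M).le) (mul_nonneg (hs₂ M).le (hs₃ M).le)
  gcongr
  exact h'.subset

end IsAdmissible

end Iteration

/-! ### The estimate for finite collections -/

section LevelSize

variable {x b θ α : ℝ}

/-- The sizes prescribed along the iteration for a function whose support has relative measure `x`:
the size is halved at each step from `8 √x` on, but never exceeds the trivial bound `8 x`. -/
def levelSize (x : ℝ) (m : ℕ) : ℝ := min (8 * x) (8 * ((1 / 2) ^ m * √x))

lemma levelSize_pos (hx : 0 < x) (m : ℕ) : 0 < levelSize x m :=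
  lt_min (by positivity) (by positivity)

lemma levelSize_le (x : ℝ) (m : ℕ) : levelSize x m ≤ 8 * x := min_le_left _ _

lemma levelSize_zero (hx : 0 ≤ x) (hx1 : x ≤ 1) : levelSize x 0 = 8 * x := by
  have : x ≤ √x := Real.le_sqrt_of_sq_le (by nlinarith)
  rw [levelSize, min_eq_left]
  linarith

lemma min_le_rpow_mul_rpow {x y t : ℝ} (hx : 0 < x) (hy : 0 < y) (ht : 0 ≤ t) (ht1 : t ≤ 1) :
    min x y ≤ x ^ (1 - t) * y ^ t := by
  have hmin : 0 < min x y := lt_min hx hy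
  calc min x y = min x y ^ (1 - t) * min x y ^ t := by
        rw [← Real.rpow_add hmin, sub_add_cancel, Real.rpow_one]
    _ ≤ x ^ (1 - t) * y ^ t := by
        gcongr
        · exact min_le_left _ _
        · exact min_le_right _ _

lemma half_pow_mul_sqrt_rpow (hx : 0 ≤ x) (θ : ℝ) (m : ℕ) :
    ((1 / 2) ^ m * √x) ^ (2 * θ) = x ^ θ * ((1 / 4 : ℝ) ^ θ) ^ m := by
  have hsq : ((1 / 2) ^ m * √x) ^ (2 : ℝ) = (1 / 4 : ℝ) ^ m * x := by
    rw [Real.rpow_two, mul_pow, Real.sq_sqrt hx, pow_right_comm]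
    norm_num
  rw [Real.rpow_mul (by positivity), hsq, Real.mul_rpow (by positivity) hx,
    Real.rpow_pow_comm (by norm_num), mul_comm]

lemma levelSize_le_rpow (hx : 0 < x) (hx1 : x ≤ 1) (hθ : 0 ≤ θ) (hθ2 : θ ≤ 1 / 2)
    (hα : α ≤ 1 - θ) (m : ℕ) : levelSize x m ≤ 8 * (x ^ α * ((1 / 4 : ℝ) ^ θ) ^ m) := by
  rw [levelSize, ← mul_min_of_nonneg _ _ (by norm_num)]
  gcongr
  calc min x ((1 / 2) ^ m * √x) ≤ x ^ (1 - 2 * θ) * ((1 / 2) ^ m * √x) ^ (2 * θ) :=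
        min_le_rpow_mul_rpow hx (by positivity) (by linarith) (by linarith)
    _ = x ^ (1 - θ) * ((1 / 4 : ℝ) ^ θ) ^ m := by
        rw [half_pow_mul_sqrt_rpow hx.le, ← mul_assoc, ← Real.rpow_add hx]
        ring_nf
    _ ≤ x ^ α * ((1 / 4 : ℝ) ^ θ) ^ m := by
        gcongr ?_ * _
        exact Real.rpow_le_rpow_of_exponent_ge hx hx1 hα

lemma levelSize_succ_eq_or (hb : 0 ≤ b) (hx : 0 < x) (m : ℕ) :
    levelSize x (m + 1) = levelSize x m ∨ x * b / levelSize x (m + 1) ^ 2 ≤ b * 4 ^ (m + 1) := by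
  rcases le_total (8 * x) (8 * ((1 / 2) ^ (m + 1) * √x)) with h | h
  · left
    rw [levelSize, levelSize, min_eq_left h, min_eq_left (h.trans _)]
    gcongr 8 * (?_ * _)
    exact pow_le_pow_of_le_one (by norm_num) (by norm_num) m.le_succ
  · right
    have hsq : (8 * ((1 / 2) ^ (m + 1) * √x)) ^ 2 = 64 * x * (4 ^ (m + 1))⁻¹ := by
      rw [mul_pow, mul_pow, Real.sq_sqrt hx.le, pow_right_comm, ← inv_pow]
      norm_num
      ring
    rw [levelSize, min_eq_right h, hsq, div_le_iff₀ (by positivity)]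
    field_simp
    linarith

end LevelSize

section FiniteEstimate

variable {A₁ A₂ A₃ : Tile → ℂ} {Ω : Set ℝ} {L : ℕ} {PP : Finset Bitile}
  {x z b α₁ α₃ θ₁ θ₃ : ℝ}

lemma IsAdmissible.norm_sum_quartileTerm_le_levelSize
    (h : IsAdmissible A₁ A₂ A₃ Ω L (x * b) b (z * b)) (hb : 0 ≤ b) (hx : 0 < x) (hx1 : x ≤ 1)
    (hz : 0 < z) (hz1 : z ≤ 1) (hPP : (PP : Set Bitile).OrdConnected)
    (hsize : SizesLE A₁ A₂ A₃ Ω L PP (8 * x) 2 (8 * z)) (M : ℕ) :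
    ‖∑ Q ∈ PP, quartileTerm A₁ A₂ A₃ L Q‖ ≤
      ∑ m ∈ Finset.range M,
        540 * (levelSize x m * (2 * (1 / 2) ^ m) * levelSize z m) * (b * 4 ^ (m + 1)) +
      20 * levelSize x M * ((2 * (1 / 2) ^ M) * levelSize z M) * ∑ P ∈ PP, (2 : ℝ) ^ P.k := by
  refine h.norm_sum_quartileTerm_le_iterate (s₂ := fun m => 2 * (1 / 2) ^ m)
    (D := fun m => b * 4 ^ (m + 1)) (levelSize_pos hx) (fun m => by positivity) (levelSize_pos hz)
    (fun m => by positivity) (levelSize_succ_eq_or hb hx) (fun m => .inr ?_)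
    (levelSize_succ_eq_or hb hz) hPP ?_ M
  · have hsq : (2 * (1 / 2 : ℝ) ^ (m + 1)) ^ 2 = 4 * (4 ^ (m + 1))⁻¹ := by
      rw [mul_pow, pow_right_comm, ← inv_pow]
      norm_num
    rw [hsq, div_le_iff₀ (by positivity)]
    field_simp
    linarith
  · rwa [levelSize_zero hx.le hx1, levelSize_zero hz.le hz1, pow_zero, mul_one]

lemma levelSize_mul_le (hb : 0 ≤ b) (hx : 0 < x) (hx1 : x ≤ 1) (hz : 0 < z) (hz1 : z ≤ 1)
    (hθ₁ : θ₁ ∈ Icc 0 (1 / 2)) (hθ₃ : θ₃ ∈ Icc 0 (1 / 2)) (hα₁ : α₁ ≤ 1 - θ₁) (hα₃ : α₃ ≤ 1 - θ₃)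
    (m : ℕ) :
    540 * (levelSize x m * (2 * (1 / 2) ^ m) * levelSize z m) * (b * 4 ^ (m + 1)) ≤
      540 * 512 * (b * x ^ α₁ * z ^ α₃) * (2 * (1 / 4 : ℝ) ^ (θ₁ + θ₃)) ^ m := by
  have hlevel₁ := levelSize_le_rpow hx hx1 hθ₁.1 hθ₁.2 hα₁ m
  have hlevel₃ := levelSize_le_rpow hz hz1 hθ₃.1 hθ₃.2 hα₃ m
  have := levelSize_pos hx m
  have := levelSize_pos hz m
  calc _ ≤ 540 * ((8 * (x ^ α₁ * ((1 / 4 : ℝ) ^ θ₁) ^ m)) * (2 * (1 / 2) ^ m) *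
        (8 * (z ^ α₃ * ((1 / 4 : ℝ) ^ θ₃) ^ m))) * (b * 4 ^ (m + 1)) := by gcongr
    _ = _ := by
        have hpow : (2 : ℝ) ^ m = (1 / 2) ^ m * 4 ^ m := by
          rw [← mul_pow]
          norm_num
        rw [Real.rpow_add (by norm_num), mul_pow, mul_pow, hpow]
        ring

lemma two_mul_quarter_rpow_lt_one {θ : ℝ} (hθ : 1 / 2 < θ) : 2 * (1 / 4 : ℝ) ^ θ < 1 := by
  have hsqrt : (1 / 4 : ℝ) ^ (1 / 2 : ℝ) = 1 / 2 := by
    rw [show (1 / 4 : ℝ) = (1 / 2) ^ (2 : ℝ) by norm_num, ← Real.rpow_mul (by norm_num)]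
    norm_num
  calc 2 * (1 / 4 : ℝ) ^ θ < 2 * (1 / 4 : ℝ) ^ (1 / 2 : ℝ) := by
        gcongr ?_ * ?_
        exact Real.rpow_lt_rpow_of_exponent_gt (by norm_num) (by norm_num) hθ
    _ = 1 := by
        rw [hsqrt]
        norm_num

lemma exists_decay_exponents (hα₁ : α₁ < 1) (hα₃ : α₃ < 1) (hα : α₁ + α₃ < 3 / 2) :
    ∃ θ₁ ∈ Icc (0 : ℝ) (1 / 2), ∃ θ₃ ∈ Icc (0 : ℝ) (1 / 2),
      α₁ ≤ 1 - θ₁ ∧ α₃ ≤ 1 - θ₃ ∧ 1 / 2 < θ₁ + θ₃ := by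
  refine ⟨min (1 - α₁) (1 / 2), ⟨le_min (by linarith) (by norm_num), min_le_right _ _⟩,
    min (1 - α₃) (1 / 2), ⟨le_min (by linarith) (by norm_num), min_le_right _ _⟩,
    by linarith [min_le_left (1 - α₁) (1 / 2)], by linarith [min_le_left (1 - α₃) (1 / 2)], ?_⟩
  rcases min_choice (1 - α₁) (1 / 2) with h₁ | h₁ <;>
    rcases min_choice (1 - α₃) (1 / 2) with h₃ | h₃ <;> rw [h₁, h₃] <;> linarith

lemma le_of_forall_le_add_mul_half_pow {y B K : ℝ} (h : ∀ M : ℕ, y ≤ B + K * (1 / 2) ^ M) :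
    y ≤ B := by
  have hlim := ((tendsto_pow_atTop_nhds_zero_of_lt_one (r := (1 / 2 : ℝ)) (by norm_num)
    (by norm_num)).const_mul K).const_add B
  rw [mul_zero, add_zero] at hlim
  exact ge_of_tendsto' hlim h

theorem IsAdmissible.norm_sum_quartileTerm_le
    (h : IsAdmissible A₁ A₂ A₃ Ω L (x * b) b (z * b)) (hb : 0 ≤ b) (hx : 0 < x) (hx1 : x ≤ 1)
    (hz : 0 < z) (hz1 : z ≤ 1) (hPP : (PP : Set Bitile).OrdConnected)
    (hsize : SizesLE A₁ A₂ A₃ Ω L PP (8 * x) 2 (8 * z))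
    (hθ₁ : θ₁ ∈ Icc 0 (1 / 2)) (hθ₃ : θ₃ ∈ Icc 0 (1 / 2)) (hα₁ : α₁ ≤ 1 - θ₁) (hα₃ : α₃ ≤ 1 - θ₃)
    (hθ : 1 / 2 < θ₁ + θ₃) :
    ‖∑ Q ∈ PP, quartileTerm A₁ A₂ A₃ L Q‖ ≤
      540 * 512 / (1 - 2 * (1 / 4 : ℝ) ^ (θ₁ + θ₃)) * (b * x ^ α₁ * z ^ α₃) := by
  set q := 2 * (1 / 4 : ℝ) ^ (θ₁ + θ₃)
  have hq : 0 ≤ q := by positivity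
  have hq1 : q < 1 := two_mul_quarter_rpow_lt_one hθ
  refine le_of_forall_le_add_mul_half_pow
    (K := 20 * (8 * x) * (2 * (8 * z)) * ∑ P ∈ PP, (2 : ℝ) ^ P.k) fun M => ?_
  refine (h.norm_sum_quartileTerm_le_levelSize hb hx hx1 hz hz1 hPP hsize M).trans
    (add_le_add ?_ ?_)
  · calc _ ≤ ∑ m ∈ Finset.range M, 540 * 512 * (b * x ^ α₁ * z ^ α₃) * q ^ m :=
          Finset.sum_le_sum fun m _ => levelSize_mul_le hb hx hx1 hz hz1 hθ₁ hθ₃ hα₁ hα₃ m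
      _ = 540 * 512 * (b * x ^ α₁ * z ^ α₃) * ∑ m ∈ Finset.range M, q ^ m := by
          rw [Finset.mul_sum]
      _ ≤ 540 * 512 * (b * x ^ α₁ * z ^ α₃) * (1 - q)⁻¹ := by
          gcongr
          rw [← tsum_geometric_of_lt_one hq hq1]
          exact (summable_geometric_of_lt_one hq hq1).sum_le_tsum _ fun _ _ => by positivity
      _ = _ := by ring
  · calc _ ≤ 20 * (8 * x) * (2 * (1 / 2) ^ M * (8 * z)) * ∑ P ∈ PP, (2 : ℝ) ^ P.k := by
          have := levelSize_pos hx M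
          have := levelSize_pos hz M
          gcongr <;> exact levelSize_le _ _
      _ = _ := by ring

end FiniteEstimate

/-! ### Walsh wave packets -/

lemma indicator_Ico_two_mul_add (x : ℝ) :
    (Ico (0:ℝ) 1).indicator (1 : ℝ → ℝ) (2 * x) + (Ico (0:ℝ) 1).indicator 1 (2 * x - 1) =
      (Ico (0:ℝ) 1).indicator 1 x := by
  simp only [indicator_apply, mem_Ico, Pi.one_apply]
  split_ifs <;> grind

lemma walsh_zero (x : ℝ) : walsh 0 x = (Ico (0:ℝ) 1).indicator 1 x := by
  rw [walsh]
  simp [indicator_apply]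

lemma walsh_two_mul (l : ℕ) (x : ℝ) :
    walsh (2 * l) x = walsh l (2 * x) + walsh l (2 * x - 1) := by
  rcases l.eq_zero_or_pos with rfl | hl
  · simp only [mul_zero, walsh_zero, indicator_Ico_two_mul_add]
  · rw [walsh]
    simp [hl.ne']

lemma walsh_two_mul_add_one (l : ℕ) (x : ℝ) :
    walsh (2 * l + 1) x = walsh l (2 * x) - walsh l (2 * x - 1) := by
  have hdiv : (2 * l + 1) / 2 = l := by omega
  rw [walsh]
  simp [hdiv, Nat.add_mod]

lemma abs_walsh (l : ℕ) (x : ℝ) : |walsh l x| = (Ico (0:ℝ) 1).indicator 1 x := by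
  induction l using Nat.evenOddRec generalizing x with
  | h0 => rw [walsh_zero, abs_of_nonneg (indicator_nonneg (by simp) x)]
  | h_even l ih | h_odd l ih =>
    have hzero : walsh l (2 * x) = 0 ∨ walsh l (2 * x - 1) = 0 := by
      rw [← abs_eq_zero, ih, ← abs_eq_zero (a := walsh l (2 * x - 1)), ih]
      simp only [indicator_apply, mem_Ico, Pi.one_apply]
      grind
    rw [← indicator_Ico_two_mul_add, ← ih, ← ih]
    rcases hzero with h | h <;> simp [walsh_two_mul, walsh_two_mul_add_one, h]

lemma measurable_walsh (l : ℕ) : Measurable (walsh l) := by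
  induction l using Nat.evenOddRec with
  | h0 =>
    rw [show walsh 0 = (Ico (0:ℝ) 1).indicator 1 from funext walsh_zero]
    exact measurable_one.indicator measurableSet_Ico
  | h_even l ih =>
    rw [show walsh (2 * l) = _ from funext (walsh_two_mul l)]
    exact (ih.comp (by fun_prop)).add (ih.comp (by fun_prop))
  | h_odd l ih =>
    rw [show walsh (2 * l + 1) = _ from funext (walsh_two_mul_add_one l)]
    exact (ih.comp (by fun_prop)).sub (ih.comp (by fun_prop))

namespace Tile

variable {p q : Tile} {x : ℝ}

/-- The wave packet `φ_p = |I_p|^{1/2} w_p` of a tile, normalized in `L^∞`. -/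
def phi (p : Tile) (x : ℝ) : ℝ := walsh p.l ((2:ℝ) ^ (-p.k) * x - p.n)

lemma wp_eq_sqrt_mul_phi (p : Tile) (x : ℝ) : p.wp x = √(2 ^ (-p.k)) * p.phi x := rfl

lemma measurable_phi (p : Tile) : Measurable p.phi :=
  (measurable_walsh p.l).comp (by fun_prop)

lemma measurableSet_timeI (p : Tile) : MeasurableSet p.timeI := measurableSet_Ico

lemma volume_timeI (p : Tile) : volume p.timeI = ENNReal.ofReal (2 ^ p.k) :=
  volume_dyadicI p.k p.n

lemma measureReal_timeI (p : Tile) : volume.real p.timeI = 2 ^ p.k := by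
  rw [Measure.real, volume_timeI, ENNReal.toReal_ofReal (by positivity)]

lemma volume_timeI_ne_top (p : Tile) : volume p.timeI ≠ ∞ :=
  p.volume_timeI ▸ ENNReal.ofReal_ne_top

lemma abs_phi (p : Tile) (x : ℝ) : |p.phi x| = p.timeI.indicator 1 x := by
  have hmem : (2:ℝ) ^ (-p.k) * x - p.n ∈ Ico (0:ℝ) 1 ↔ x ∈ p.timeI := by
    have hpos : (0:ℝ) < 2 ^ p.k := by positivity
    rw [timeI, mem_Ico, mem_Ico, sub_nonneg, sub_lt_iff_lt_add', zpow_neg, inv_mul_eq_div,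
      le_div_iff₀' hpos, div_lt_iff₀' hpos]
  rw [phi, abs_walsh]
  by_cases hx : x ∈ p.timeI
  · rw [indicator_of_mem hx, indicator_of_mem (hmem.2 hx), Pi.one_apply, Pi.one_apply]
  · rw [indicator_of_notMem hx, indicator_of_notMem (mt hmem.1 hx)]

lemma phi_mul_self (p : Tile) (x : ℝ) : p.phi x * p.phi x = p.timeI.indicator 1 x := by
  rw [← abs_mul_abs_self, abs_phi]
  by_cases hx : x ∈ p.timeI <;> simp [hx]

lemma phi_eq_zero (hx : x ∉ p.timeI) : p.phi x = 0 := by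
  rw [← abs_eq_zero, abs_phi, indicator_of_notMem hx]

lemma abs_phi_le_one (p : Tile) (x : ℝ) : |p.phi x| ≤ 1 := by
  rw [abs_phi]
  exact indicator_le_self' (by simp) x

lemma phi_mul_phi_eq_zero (hk : p.k = q.k) (hn : p.n ≠ q.n) (x : ℝ) : p.phi x * q.phi x = 0 := by
  by_cases hx : x ∈ p.timeI
  · rw [phi_eq_zero (p := q) fun hx' => hn (eq_of_mem_dyadicI hx (k := p.k) ?_), mul_zero]
    rw [hk]
    exact hx'
  · rw [phi_eq_zero hx, zero_mul]

lemma memLp_indicator_timeI (p : Tile) (r : ℝ≥0∞) :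
    MemLp (p.timeI.indicator (1 : ℝ → ℝ)) r :=
  memLp_indicator_const r p.measurableSet_timeI 1 (.inr p.volume_timeI_ne_top)

lemma memLp_phi (p : Tile) (r : ℝ≥0∞) : MemLp (fun x => (p.phi x : ℂ)) r :=
  (p.memLp_indicator_timeI r).mono
    (Complex.measurable_ofReal.comp p.measurable_phi).aestronglyMeasurable
    (ae_of_all _ fun x => by
      rw [Complex.norm_real, Real.norm_eq_abs, abs_phi]
      exact le_abs_self _)

lemma integrable_phi (p : Tile) : Integrable (fun x => (p.phi x : ℂ)) :=
  memLp_one_iff_integrable.1 (p.memLp_phi 1)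

end Tile

lemma two_zpow_neg_pred {𝕜 : Type*} [Field 𝕜] [CharZero 𝕜] (k : ℤ) :
    (2:𝕜) ^ (-(k - 1)) = 2 * 2 ^ (-k) := by
  rw [neg_sub, sub_eq_neg_add, zpow_add_one₀ two_ne_zero, mul_comm]

lemma Bitile.phi_d (P : Bitile) (x : ℝ) : P.d.phi x = P.left.phi x + P.right.phi x := by
  simp only [Tile.phi, d, left, right, walsh_two_mul, two_zpow_neg_pred]
  push_cast
  ring_nf

lemma Bitile.phi_u (P : Bitile) (x : ℝ) : P.u.phi x = P.left.phi x - P.right.phi x := by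
  simp only [Tile.phi, u, left, right, walsh_two_mul_add_one, two_zpow_neg_pred]
  push_cast
  ring_nf

lemma Bitile.phid_eq_phi_d (P : Bitile) (x : ℝ) : P.phid x = P.d.phi x := by
  rw [phid, Tile.wp_eq_sqrt_mul_phi, ← mul_assoc, ← Real.sqrt_mul (by positivity), d, zpow_neg,
    mul_inv_cancel₀ (by positivity), Real.sqrt_one, one_mul]

/-! ### Walsh coefficients and Bessel's inequality -/

section PacketAverage

variable {f g : ℝ → ℂ} {p q : Tile}

/-- The average `|I_p|⁻¹ ∫ f φ_p` of a function against an `L^∞`-normalized wave packet. -/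
def packetAverage (f : ℝ → ℂ) (p : Tile) : ℂ := (2:ℂ) ^ (-p.k) * ∫ x, f x * (p.phi x : ℂ)

lemma integral_mul_phi (f : ℝ → ℂ) (p : Tile) :
    ∫ x, f x * (p.phi x : ℂ) = (2:ℂ) ^ p.k * packetAverage f p := by
  rw [packetAverage, ← mul_assoc, zpow_neg, mul_inv_cancel₀ (zpow_ne_zero _ two_ne_zero), one_mul]

lemma integrable_mul_phi (hf : Integrable f) (p : Tile) :
    Integrable fun x => f x * (p.phi x : ℂ) :=
  hf.mul_bdd (c := 1) (Complex.measurable_ofReal.comp p.measurable_phi).aestronglyMeasurable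
    (ae_of_all _ fun x => by simpa using p.abs_phi_le_one x)

lemma packetAverage_add (hf : Integrable f) (hg : Integrable g) (p : Tile) :
    packetAverage (fun x => f x + g x) p = packetAverage f p + packetAverage g p := by
  simp_rw [packetAverage, add_mul]
  rw [integral_add (integrable_mul_phi hf p) (integrable_mul_phi hg p), mul_add]

lemma packetAverage_sub (hf : Integrable f) (hg : Integrable g) (p : Tile) :
    packetAverage (fun x => f x - g x) p = packetAverage f p - packetAverage g p := by
  simp_rw [packetAverage, sub_mul]
  rw [integral_sub (integrable_mul_phi hf p) (integrable_mul_phi hg p), mul_sub]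

lemma walshRecursion_packetAverage (hf : Integrable f) : WalshRecursion (packetAverage f) := by
  constructor <;> intro R
  · simp_rw [packetAverage, R.phi_d, Complex.ofReal_add, mul_add]
    rw [integral_add (integrable_mul_phi hf _) (integrable_mul_phi hf _)]
    simp only [Bitile.left, Bitile.right, Bitile.d, two_zpow_neg_pred]
    ring
  · simp_rw [packetAverage, R.phi_u, Complex.ofReal_sub, mul_sub]
    rw [integral_sub (integrable_mul_phi hf _) (integrable_mul_phi hf _)]
    simp only [Bitile.left, Bitile.right, Bitile.u, two_zpow_neg_pred]
    ring

lemma WalshRecursion.eq_zero {A : Tile → ℂ} (hA : WalshRecursion A) (hleft : A p.bitile.left = 0)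
    (hright : A p.bitile.right = 0) : A p = 0 := by
  rcases p.eq_d_or_eq_u with h | h <;> rw [h]
  · rw [hA.d, hleft, hright, add_zero, zero_div]
  · rw [hA.u, hleft, hright, sub_zero, zero_div]

lemma packetAverage_phi_self (p : Tile) : packetAverage (fun x => (p.phi x : ℂ)) p = 1 := by
  simp_rw [packetAverage, ← Complex.ofReal_mul, p.phi_mul_self]
  rw [integral_complex_ofReal, integral_indicator_one p.measurableSet_timeI, p.measureReal_timeI]
  push_cast
  rw [zpow_neg, inv_mul_cancel₀ (zpow_ne_zero _ two_ne_zero)]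

lemma packetAverage_phi_comm :
    packetAverage (fun x => (p.phi x : ℂ)) q = 0 ↔
      packetAverage (fun x => (q.phi x : ℂ)) p = 0 := by
  simp_rw [packetAverage, mul_eq_zero_iff_left (zpow_ne_zero _ (two_ne_zero (α := ℂ))),
    mul_comm (p.phi _ : ℂ)]

lemma packetAverage_phi_of_n_ne (hk : p.k = q.k) (hn : p.n ≠ q.n) :
    packetAverage (fun x => (p.phi x : ℂ)) q = 0 := by
  simp_rw [packetAverage, ← Complex.ofReal_mul, Tile.phi_mul_phi_eq_zero hk hn]
  simp

lemma packetAverage_phi_d (P : Bitile) (q : Tile) :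
    packetAverage (fun x => (P.d.phi x : ℂ)) q =
      packetAverage (fun x => (P.left.phi x : ℂ)) q +
        packetAverage (fun x => (P.right.phi x : ℂ)) q := by
  simp_rw [P.phi_d, Complex.ofReal_add]
  exact packetAverage_add P.left.integrable_phi P.right.integrable_phi q

lemma packetAverage_phi_u (P : Bitile) (q : Tile) :
    packetAverage (fun x => (P.u.phi x : ℂ)) q =
      packetAverage (fun x => (P.left.phi x : ℂ)) q -
        packetAverage (fun x => (P.right.phi x : ℂ)) q := by
  simp_rw [P.phi_u, Complex.ofReal_sub]
  exact packetAverage_sub P.left.integrable_phi P.right.integrable_phi q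

lemma packetAverage_phi_d_u (P : Bitile) : packetAverage (fun x => (P.d.phi x : ℂ)) P.u = 0 := by
  have hne : P.left.n ≠ P.right.n := by simp only [Bitile.left, Bitile.right]; omega
  rw [(walshRecursion_packetAverage P.d.integrable_phi).u, packetAverage_phi_d,
    packetAverage_phi_d, packetAverage_phi_self, packetAverage_phi_self,
    packetAverage_phi_of_n_ne (p := P.left) (q := P.right) rfl hne,
    packetAverage_phi_of_n_ne (p := P.right) (q := P.left) rfl hne.symm]
  norm_num

lemma packetAverage_phi_of_k_eq (hk : p.k = q.k) (hpq : p ≠ q) :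
    packetAverage (fun x => (p.phi x : ℂ)) q = 0 := by
  induction hs : p.l + q.l using Nat.strong_induction_on generalizing p q with
  | _ s ih =>
  by_cases hn : p.n = q.n
  swap
  · exact packetAverage_phi_of_n_ne hk hn
  by_cases hb : p.bitile = q.bitile
  · rcases p.eq_d_or_eq_u with hp | hp <;> rcases q.eq_d_or_eq_u with hq | hq <;>
      rw [hp, hq, hb] at hpq ⊢
    · exact absurd rfl hpq
    · exact packetAverage_phi_d_u _
    · exact packetAverage_phi_comm.1 (packetAverage_phi_d_u _)
    · exact absurd rfl hpq
  · have hlt : p.l / 2 + q.l / 2 < s := by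
      by_contra! h
      exact hpq (by ext <;> omega)
    have hl : p.l / 2 ≠ q.l / 2 := fun h => hb (by ext <;> simp only [Tile.bitile] <;> assumption)
    have hchild (q' : Tile) (hk' : q'.k = q.k - 1) (hl' : q'.l = q.l / 2) :
        packetAverage (fun x => (p.phi x : ℂ)) q' = 0 := by
      have hleft := ih _ hlt (p := p.bitile.left) (q := q')
        (by simp only [Bitile.left, Tile.bitile]; omega)
        (fun h => hl ((congrArg Tile.l h).trans hl')) (by rw [hl']; rfl)
      have hright := ih _ hlt (p := p.bitile.right) (q := q')
        (by simp only [Bitile.right, Tile.bitile]; omega)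
        (fun h => hl ((congrArg Tile.l h).trans hl')) (by rw [hl']; rfl)
      rcases p.eq_d_or_eq_u with hp | hp <;> rw [hp]
      · rw [packetAverage_phi_d, hleft, hright, add_zero]
      · rw [packetAverage_phi_u, hleft, hright, sub_zero]
    exact (walshRecursion_packetAverage p.integrable_phi).eq_zero (hchild _ rfl rfl)
      (hchild _ rfl rfl)

lemma packetAverage_phi_of_k_le (hk : p.k ≤ q.k) (hpq : ¬ p ≤ q) :
    packetAverage (fun x => (p.phi x : ℂ)) q = 0 := by
  obtain ⟨δ, hδ⟩ := Int.le.dest hk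
  induction δ generalizing q with
  | zero => exact packetAverage_phi_of_k_eq (by simpa using hδ) fun h => hpq h.le
  | succ δ ih =>
    rw [Bitile.le_iff_eq_or_of_bitile_eq rfl] at hpq
    push_cast at hδ
    exact (walshRecursion_packetAverage p.integrable_phi).eq_zero
      (ih (by simp only [Bitile.left, Tile.bitile]; omega) (fun h => hpq (.inr (.inl h)))
        (by simp only [Bitile.left, Tile.bitile]; omega))
      (ih (by simp only [Bitile.right, Tile.bitile]; omega) (fun h => hpq (.inr (.inr h)))
        (by simp only [Bitile.right, Tile.bitile]; omega))

lemma packetAverage_phi_of_not_le (hpq : ¬ p ≤ q) (hqp : ¬ q ≤ p) :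
    packetAverage (fun x => (p.phi x : ℂ)) q = 0 := by
  rcases le_total p.k q.k with hk | hk
  · exact packetAverage_phi_of_k_le hk hpq
  · exact packetAverage_phi_comm.1 (packetAverage_phi_of_k_le hk hqp)

end PacketAverage

section Bessel

variable {f : ℝ → ℂ} {p q : Tile}

lemma Tile.memLp_wp (p : Tile) : MemLp (fun x => (p.wp x : ℂ)) 2 := by
  simp_rw [wp_eq_sqrt_mul_phi, Complex.ofReal_mul]
  exact (p.memLp_phi 2).const_mul _

lemma coef_eq_sqrt_mul_integral (f : ℝ → ℂ) (p : Tile) :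
    coef f p = (√(2 ^ (-p.k)) : ℝ) * ∫ x, f x * (p.phi x : ℂ) := by
  simp_rw [coef, Tile.wp_eq_sqrt_mul_phi, Complex.ofReal_mul, mul_left_comm (f _)]
  exact integral_const_mul _ _

lemma ofReal_sqrt_mul_self {r : ℝ} (hr : 0 ≤ r) : ((√r : ℝ) : ℂ) * (√r : ℝ) = r := by
  rw [← Complex.ofReal_mul, Real.mul_self_sqrt hr]

lemma sq_norm_coef (f : ℝ → ℂ) (p : Tile) :
    ‖coef f p‖ ^ 2 = 2 ^ p.k * ‖packetAverage f p‖ ^ 2 := by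
  rw [coef_eq_sqrt_mul_integral, integral_mul_phi]
  simp only [norm_mul, norm_zpow, Complex.norm_ofNat, Complex.norm_real, Real.norm_eq_abs,
    mul_pow, sq_abs]
  rw [Real.sq_sqrt (by positivity), zpow_neg]
  field_simp

lemma coef_wp (p q : Tile) :
    coef (fun x => (p.wp x : ℂ)) q =
      (√(2 ^ (-p.k)) : ℝ) * ((√(2 ^ (-q.k)) : ℝ) *
        (2 ^ q.k * packetAverage (fun x => (p.phi x : ℂ)) q)) := by
  simp_rw [coef_eq_sqrt_mul_integral, Tile.wp_eq_sqrt_mul_phi, Complex.ofReal_mul, mul_assoc]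
  rw [integral_const_mul, integral_mul_phi]
  ring

lemma coef_wp_self (p : Tile) : coef (fun x => (p.wp x : ℂ)) p = 1 := by
  rw [coef_wp, packetAverage_phi_self, ← mul_assoc, ofReal_sqrt_mul_self (by positivity), mul_one]
  push_cast
  rw [zpow_neg, inv_mul_cancel₀ (zpow_ne_zero _ two_ne_zero)]

lemma coef_wp_of_not_le (hpq : ¬ p ≤ q) (hqp : ¬ q ≤ p) :
    coef (fun x => (p.wp x : ℂ)) q = 0 := by
  rw [coef_wp, packetAverage_phi_of_not_le hpq hqp, mul_zero, mul_zero, mul_zero]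

lemma inner_wp_toLp (hf : MemLp f 2) (p : Tile) :
    inner ℂ (p.memLp_wp.toLp _) (hf.toLp f) = coef f p := by
  rw [L2.inner_def]
  refine integral_congr_ae ?_
  filter_upwards [p.memLp_wp.coeFn_toLp, hf.coeFn_toLp] with x hp hfx
  rw [hp, hfx, RCLike.inner_apply, Complex.conj_ofReal]

lemma sq_norm_toLp (hf : MemLp f 2) : ‖hf.toLp f‖ ^ 2 = ∫ x, ‖f x‖ ^ 2 := by
  rw [← inner_self_eq_norm_sq (𝕜 := ℂ), L2.inner_def, ← integral_re (L2.integrable_inner _ _)]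
  refine integral_congr_ae ?_
  filter_upwards [hf.coeFn_toLp] with x hx
  rw [hx, inner_self_eq_norm_sq]

lemma orthonormal_wp {ι : Type*} {t : ι → Tile} (ht : ∀ i j, t i ≤ t j → i = j) :
    Orthonormal ℂ fun i => (t i).memLp_wp.toLp _ := by
  classical
  rw [orthonormal_iff_ite]
  intro i j
  rw [inner_wp_toLp]
  split_ifs with hij
  · rw [hij, coef_wp_self]
  · exact coef_wp_of_not_le (fun h => hij (ht _ _ h).symm) fun h => hij (ht _ _ h)

lemma sum_sq_norm_packetAverage_le (hf : MemLp f 2) {ι : Type*} (s : Finset ι) {t : ι → Tile}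
    (ht : ∀ i ∈ s, ∀ j ∈ s, t i ≤ t j → i = j) :
    ∑ i ∈ s, 2 ^ (t i).k * ‖packetAverage f (t i)‖ ^ 2 ≤ ∫ x, ‖f x‖ ^ 2 := by
  have horth : Orthonormal ℂ fun i : s => (t i).memLp_wp.toLp _ :=
    orthonormal_wp fun i j h => Subtype.ext (ht i i.2 j j.2 h)
  have hle := horth.sum_inner_products_le (s := Finset.univ) (hf.toLp f)
  simp_rw [inner_wp_toLp, sq_norm_coef] at hle
  rwa [sq_norm_toLp, Finset.sum_coe_sort s fun i => 2 ^ (t i).k * ‖packetAverage f (t i)‖ ^ 2]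
    at hle

lemma le_of_subtile_le {d j j' : ℕ} (hj : j < 2 ^ d) (hj' : j' < 2 ^ d)
    (h : (⟨p.k - d, 2 ^ d * p.n + j, p.l⟩ : Tile) ≤ ⟨q.k - d, 2 ^ d * q.n + j', q.l⟩) :
    p ≤ q := by
  have hdiv (n : ℕ) {i : ℕ} (hi : i < 2 ^ d) : (2 ^ d * n + i) / 2 ^ d = n := by
    rw [Nat.mul_add_div (by positivity), Nat.div_eq_of_lt hi, add_zero]
  obtain ⟨δ, hk, hn, hl⟩ := Tile.le_iff.1 h
  simp only at hk hn
  refine Tile.le_iff.2 ⟨δ, by omega, ?_, hl⟩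
  rw [← hdiv q.n hj', hn, Nat.div_div_eq_div_mul, mul_comm (2 ^ δ),
    ← Nat.div_div_eq_div_mul, hdiv p.n hj]

theorem besselBound_packetAverage (hf : MemLp f 2) (Ω : Set ℝ) (d : ℕ) :
    BesselBound (packetAverage f) Ω d (∫ x, ‖f x‖ ^ 2) := by
  intro 𝔭 h𝔭
  let t : Tile × ℕ → Tile := fun i => ⟨i.1.k - d, 2 ^ d * i.1.n + i.2, i.1.l⟩
  have ht : ∀ i ∈ 𝔭 ×ˢ Finset.range (2 ^ d), ∀ j ∈ 𝔭 ×ˢ Finset.range (2 ^ d),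
      t i ≤ t j → i = j := by
    rintro ⟨p, i⟩ hi ⟨q, j⟩ hj hle
    rw [Finset.mem_product, Finset.mem_range] at hi hj
    obtain rfl : p = q := h𝔭.eq hi.1 hj.1 (le_of_subtile_le hi.2 hj.2 hle)
    obtain ⟨δ, hk, hn, -⟩ := Tile.le_iff.1 hle
    simp only [t] at hk hn
    obtain rfl : δ = 0 := by omega
    rw [pow_zero, Nat.div_one] at hn
    exact Prod.ext rfl (Nat.add_left_cancel hn).symm
  calc ∑ p ∈ 𝔭, energy (packetAverage f) Ω d p
      ≤ ∑ p ∈ 𝔭, ∑ j ∈ Finset.range (2 ^ d),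
          2 ^ (t (p, j)).k * ‖packetAverage f (t (p, j))‖ ^ 2 :=
        Finset.sum_le_sum fun p _ => by
          rw [energy, subtileSum]
          exact Finset.sum_le_sum fun j _ => tileEnergy_le_two_zpow _ Ω (t (p, j))
    _ = ∑ i ∈ 𝔭 ×ˢ Finset.range (2 ^ d), 2 ^ (t i).k * ‖packetAverage f (t i)‖ ^ 2 :=
        (Finset.sum_product _ _ fun i => (2:ℝ) ^ (t i).k * ‖packetAverage f (t i)‖ ^ 2).symm
    _ ≤ ∫ x, ‖f x‖ ^ 2 := sum_sq_norm_packetAverage_le hf _ ht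

end Bessel

/-! ### The exceptional set -/

/-- `f` is a measurable function bounded by the indicator function of the set `E` of finite
measure. -/
structure IsDominatedBy (f : ℝ → ℂ) (E : Set ℝ) : Prop where
  measurable : Measurable f
  measurableSet : MeasurableSet E
  volume_lt_top : volume E < ∞
  norm_le : ∀ x, ‖f x‖ ≤ E.indicator 1 x

/-- The union of the dyadic intervals in which `E` has density greater than `t`. -/
def denseUnion (E : Set ℝ) (t : ℝ) : Set ℝ :=
  ⋃ (k : ℤ) (n : ℕ) (_ : t * 2 ^ k < volume.real (E ∩ dyadicI k n)), dyadicI k n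

section DenseUnion

variable {E : Set ℝ} {t : ℝ}

/-- The dyadic interval with indices `i = (k, n)` is maximal among those in which `E` has density
greater than `t`. -/
structure IsMaximalDense (E : Set ℝ) (t : ℝ) (i : ℤ × ℕ) : Prop where
  dense : t * 2 ^ i.1 < volume.real (E ∩ dyadicI i.1 i.2)
  not_dense : ∀ k n, i.1 < k → dyadicI i.1 i.2 ⊆ dyadicI k n →
    volume.real (E ∩ dyadicI k n) ≤ t * 2 ^ k

lemma measurableSet_dyadicI (k : ℤ) (n : ℕ) : MeasurableSet (dyadicI k n) := measurableSet_Ico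

lemma mem_denseUnion {x : ℝ} : x ∈ denseUnion E t ↔
    ∃ k n, t * 2 ^ k < volume.real (E ∩ dyadicI k n) ∧ x ∈ dyadicI k n := by
  simp only [denseUnion, mem_iUnion, exists_prop]

lemma measurableSet_denseUnion (E : Set ℝ) (t : ℝ) : MeasurableSet (denseUnion E t) :=
  .iUnion fun k => .iUnion fun n => .iUnion fun _ => measurableSet_dyadicI k n

lemma exists_isMaximalDense (hE : volume E < ∞) (ht : 0 < t) {x : ℝ} (hx : x ∈ denseUnion E t) :
    ∃ i, IsMaximalDense E t i ∧ x ∈ dyadicI i.1 i.2 := by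
  obtain ⟨k, n, hdense, hx⟩ := mem_denseUnion.1 hx
  have hmem (k' : ℤ) : x ∈ dyadicI k' ⌊(2:ℝ) ^ (-k') * x⌋₊ :=
    mem_dyadicI_iff_floor.2 ⟨(mem_dyadicI_iff_floor.1 hx).1, rfl⟩
  obtain ⟨m, hm⟩ := pow_unbounded_of_one_lt (volume.real E / t) (_root_.one_lt_two (α := ℝ))
  have hbdd (k' : ℤ) (hk' : t * 2 ^ k' < volume.real (E ∩ dyadicI k' ⌊(2:ℝ) ^ (-k') * x⌋₊)) :
      k' ≤ m := by
    by_contra! hlt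
    have hpow : (2:ℝ) ^ m ≤ 2 ^ k' := by
      rw [← zpow_natCast]
      exact zpow_le_zpow_right₀ one_le_two hlt.le
    have hle := measureReal_mono (inter_subset_left (s := E)
      (t := dyadicI k' ⌊(2:ℝ) ^ (-k') * x⌋₊)) hE.ne
    rw [div_lt_iff₀' ht] at hm
    exact absurd (hk'.trans_le hle) (not_lt.2 (hm.le.trans (by gcongr)))
  obtain ⟨K, hK, hmax⟩ := Int.exists_greatest_of_bdd ⟨m, hbdd⟩
    ⟨k, by rwa [← eq_of_mem_dyadicI hx (hmem k)]⟩
  refine ⟨(K, _), ⟨hK, fun k' n' hlt hsub => ?_⟩, hmem K⟩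
  by_contra! hdense'
  rw [eq_of_mem_dyadicI (hsub (hmem K)) (hmem k')] at hdense'
  exact hlt.not_ge (hmax k' hdense')

lemma pairwise_disjoint_isMaximalDense :
    Pairwise (Function.onFun Disjoint
      fun i : {i // IsMaximalDense E t i} => dyadicI i.1.1 i.1.2) := by
  have hdisj (i j : {i // IsMaximalDense E t i}) (hij : i ≠ j) (hle : i.1.1 ≤ j.1.1) :
      Disjoint (dyadicI i.1.1 i.1.2) (dyadicI j.1.1 j.1.2) := by
    refine Set.disjoint_left.2 fun x hxi hxj => ?_
    rcases hle.eq_or_lt with heq | hlt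
    · rw [← heq] at hxj
      exact hij (Subtype.ext (Prod.ext heq (eq_of_mem_dyadicI hxi hxj)))
    · exact (i.2.not_dense _ _ hlt (dyadicI_subset_of_mem_of_mem hle hxi hxj)).not_gt j.2.dense
  intro i j hij
  rcases le_total i.1.1 j.1.1 with hle | hle
  · exact hdisj i j hij hle
  · exact (hdisj j i hij.symm hle).symm

theorem ofReal_mul_volume_denseUnion_le (mE : MeasurableSet E) (hE : volume E < ∞) (ht : 0 < t) :
    ENNReal.ofReal t * volume (denseUnion E t) ≤ volume E := by
  let D : {i // IsMaximalDense E t i} → Set ℝ := fun i => dyadicI i.1.1 i.1.2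
  have hsub : denseUnion E t ⊆ ⋃ i, D i := fun x hx =>
    have ⟨i, hi, hx⟩ := exists_isMaximalDense hE ht hx
    mem_iUnion.2 ⟨⟨i, hi⟩, hx⟩
  have hdisj : Pairwise (Function.onFun Disjoint D) := pairwise_disjoint_isMaximalDense
  have hD (i) : MeasurableSet (D i) := measurableSet_dyadicI _ _
  calc ENNReal.ofReal t * volume (denseUnion E t)
      ≤ ENNReal.ofReal t * volume (⋃ i, D i) := by gcongr
    _ = ∑' i, ENNReal.ofReal t * volume (D i) := by
      rw [measure_iUnion hdisj hD, ENNReal.tsum_mul_left]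
    _ ≤ ∑' i, volume (E ∩ D i) := by
      refine ENNReal.tsum_le_tsum fun i => ?_
      rw [volume_dyadicI, ← ENNReal.ofReal_mul ht.le]
      exact ENNReal.ofReal_le_of_le_toReal i.2.dense.le
    _ = volume (⋃ i, E ∩ D i) :=
      (measure_iUnion (fun i j hij => (hdisj hij).mono inter_subset_right inter_subset_right)
        fun i => mE.inter (hD i)).symm
    _ ≤ volume E := measure_mono (iUnion_subset fun _ => inter_subset_left)

lemma denseUnion_eq_empty_of_volume_eq_zero (hE : volume E = 0) : denseUnion E 0 = ∅ := by
  have hzero (k : ℤ) (n : ℕ) : volume.real (E ∩ dyadicI k n) = 0 := by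
    rw [measureReal_def, measure_mono_null inter_subset_left hE, ENNReal.toReal_zero]
  simp [denseUnion, hzero]

lemma volume_denseUnion_le {b : ℝ} (mE : MeasurableSet E) (hE : volume E < ∞) (hb : 0 < b) :
    volume (denseUnion E (4 * (volume.real E / b))) ≤ ENNReal.ofReal (b / 4) := by
  rcases eq_or_ne (volume E) 0 with hE₀ | hE₀
  · simp [measureReal_def, hE₀, denseUnion_eq_empty_of_volume_eq_zero hE₀]
  have hpos : 0 < volume.real E := ENNReal.toReal_pos hE₀ hE.ne
  have ht : 0 < 4 * (volume.real E / b) := by positivity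
  have hweak := ofReal_mul_volume_denseUnion_le mE hE ht
  have hvol : volume E = ENNReal.ofReal (4 * (volume.real E / b)) * ENNReal.ofReal (b / 4) := by
    rw [← ENNReal.ofReal_mul ht.le, show 4 * (volume.real E / b) * (b / 4) = volume.real E by
      field_simp, ofReal_measureReal hE.ne]
  rw [hvol] at hweak
  exact (ENNReal.mul_le_mul_iff_right (ENNReal.ofReal_pos.2 ht).ne' ENNReal.ofReal_ne_top).1 hweak

end DenseUnion

lemma norm_packetAverage_le {f : ℝ → ℂ} (hf : Integrable f) (p : Tile) :
    ‖packetAverage f p‖ ≤ 2 ^ (-p.k) * ∫ x in p.timeI, ‖f x‖ := by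
  rw [packetAverage, norm_mul, norm_zpow, Complex.norm_ofNat,
    ← integral_indicator p.measurableSet_timeI]
  gcongr
  refine (norm_integral_le_integral_norm _).trans (integral_mono_of_nonneg
    (ae_of_all _ fun x => norm_nonneg _) (hf.norm.indicator p.measurableSet_timeI)
    (ae_of_all _ fun x => ?_))
  by_cases hx : x ∈ p.timeI <;> simp [p.abs_phi, hx]

lemma packetAverage_eq_zero {f : ℝ → ℂ} {p : Tile} (h : ∀ x ∈ p.timeI, f x = 0) :
    packetAverage f p = 0 := by
  have hzero (x : ℝ) : f x * (p.phi x : ℂ) = 0 := by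
    by_cases hx : x ∈ p.timeI
    · rw [h x hx, zero_mul]
    · rw [Tile.phi_eq_zero hx, Complex.ofReal_zero, mul_zero]
  simp [packetAverage, hzero]

namespace IsDominatedBy

variable {f : ℝ → ℂ} {E F : Set ℝ} {t : ℝ} {p : Tile}

lemma mono (h : IsDominatedBy f E) (hEF : E ⊆ F) (hF : MeasurableSet F) (hvol : volume F < ∞) :
    IsDominatedBy f F :=
  ⟨h.measurable, hF, hvol, fun x => (h.norm_le x).trans
    (indicator_le_indicator_of_subset hEF (fun _ => zero_le_one) x)⟩

lemma eq_zero (h : IsDominatedBy f E) {x : ℝ} (hx : x ∉ E) : f x = 0 :=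
  norm_le_zero_iff.1 ((h.norm_le x).trans_eq (indicator_of_notMem hx _))

lemma memLp (h : IsDominatedBy f E) (r : ℝ≥0∞) : MemLp f r :=
  (memLp_indicator_const r h.measurableSet (1:ℝ) (.inr h.volume_lt_top.ne)).mono
    h.measurable.aestronglyMeasurable (ae_of_all _ fun x => (h.norm_le x).trans (le_abs_self _))

lemma integrable (h : IsDominatedBy f E) : Integrable f := memLp_one_iff_integrable.1 (h.memLp 1)

lemma integrable_indicator (h : IsDominatedBy f E) : Integrable (E.indicator (1 : ℝ → ℝ)) :=
  (integrable_indicator_iff h.measurableSet).2 (integrableOn_const h.volume_lt_top.ne)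

lemma integral_sq_norm_le (h : IsDominatedBy f E) : ∫ x, ‖f x‖ ^ 2 ≤ volume.real E := by
  rw [← integral_indicator_one h.measurableSet]
  refine integral_mono_of_nonneg (ae_of_all _ fun x => sq_nonneg _) h.integrable_indicator
    (ae_of_all _ fun x => ?_)
  by_cases hx : x ∈ E
  · simpa [hx] using h.norm_le x
  · simp [hx, h.eq_zero hx]

lemma besselBound (h : IsDominatedBy f E) (Ω : Set ℝ) (d : ℕ) :
    BesselBound (packetAverage f) Ω d (volume.real E) :=
  fun 𝔭 h𝔭 => (besselBound_packetAverage (h.memLp 2) Ω d 𝔭 h𝔭).trans h.integral_sq_norm_le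

lemma norm_packetAverage_le (h : IsDominatedBy f E) (p : Tile) :
    ‖packetAverage f p‖ ≤ 2 ^ (-p.k) * volume.real (E ∩ p.timeI) := by
  refine (Quartile.norm_packetAverage_le h.integrable p).trans ?_
  gcongr
  calc ∫ x in p.timeI, ‖f x‖
      ≤ ∫ x in p.timeI, E.indicator (1 : ℝ → ℝ) x :=
        setIntegral_mono h.integrable.norm.integrableOn h.integrable_indicator.integrableOn
          h.norm_le
    _ = volume.real (E ∩ p.timeI) := by
        rw [integral_indicator_one h.measurableSet, measureReal_restrict_apply h.measurableSet]

lemma norm_packetAverage_le_one (h : IsDominatedBy f E) (p : Tile) : ‖packetAverage f p‖ ≤ 1 := by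
  refine (h.norm_packetAverage_le p).trans ?_
  have hle : volume.real (E ∩ p.timeI) ≤ 2 ^ p.k :=
    (measureReal_mono inter_subset_right p.volume_timeI_ne_top).trans_eq p.measureReal_timeI
  rw [zpow_neg]
  exact inv_mul_le_one_of_le₀ hle (by positivity)

lemma norm_packetAverage_le_of_not_subset (h : IsDominatedBy f E)
    (hp : ¬ p.timeI ⊆ denseUnion E t) : ‖packetAverage f p‖ ≤ t := by
  have hdense : volume.real (E ∩ p.timeI) ≤ t * 2 ^ p.k := by
    by_contra! hlt
    exact hp fun x hx => mem_denseUnion.2 ⟨p.k, p.n, hlt, hx⟩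
  refine (h.norm_packetAverage_le p).trans ?_
  rw [zpow_neg, inv_mul_le_iff₀ (by positivity), mul_comm]
  exact hdense

lemma packetAverage_eq_zero_of_volume_eq_zero (h : IsDominatedBy f E) (hE : volume E = 0)
    (p : Tile) : packetAverage f p = 0 := by
  have hle := h.norm_packetAverage_le p
  rw [measureReal_def, measure_mono_null inter_subset_left hE, ENNReal.toReal_zero, mul_zero]
    at hle
  exact norm_le_zero_iff.1 hle

end IsDominatedBy

/-! ### Phase plane projections of dilated tiles -/

lemma Tile.toSet_subset_prod_iff {p : Tile} {I J : Set ℝ} :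
    p.toSet ⊆ I ×ˢ J ↔ p.timeI ⊆ I ∧ p.freqI ⊆ J := by
  have htime : p.timeI.Nonempty := ⟨_, left_mem_dyadicI p.k p.n⟩
  have hfreq : p.freqI.Nonempty := ⟨_, left_mem_dyadicI (-p.k) p.l⟩
  exact prod_subset_prod_iff' (htime.prod hfreq)

lemma image_two_pow_mul_dyadicI (L : ℕ) (k : ℤ) (n : ℕ) :
    (fun y => (2:ℝ) ^ L * y) '' dyadicI k n = dyadicI (L + k) n := by
  rw [dyadicI, image_mul_left_Ico (by positivity), dyadicI, zpow_add₀ two_ne_zero, zpow_natCast,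
    mul_assoc, mul_assoc]

lemma dilate_toSet (L : ℕ) (p : Tile) :
    dilate L p.toSet = p.timeI ×ˢ dyadicI (L - p.k) p.l := by
  rw [sub_eq_add_neg, ← image_two_pow_mul_dyadicI, ← image_id p.timeI, ← prodMap_image_prod]
  rfl

lemma toSet_subset_dilate_iff {L : ℕ} {p q : Tile} :
    q.toSet ⊆ dilate L p.toSet ↔
      q.timeI ⊆ p.timeI ∧ q.freqI ⊆ dyadicI (L - p.k) p.l := by
  rw [dilate_toSet, Tile.toSet_subset_prod_iff]

lemma mem_maxTiles_dilate {L : ℕ} {p q : Tile} :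
    q ∈ maxTiles (dilate L p.toSet) ↔ q.k = p.k ∧ q.n = p.n ∧ q.l / 2 ^ L = p.l := by
  simp only [maxTiles, mem_ofPred_eq, toSet_subset_dilate_iff]
  constructor
  · rintro ⟨⟨htime, hfreq⟩, hmax⟩
    obtain ⟨δ, hk, hn⟩ := dyadicI_subset_iff.1 htime
    have hle : tileLE q ⟨p.k, p.n, 2 ^ δ * q.l⟩ := tileLE_iff.2 ⟨δ, hk, hn, by simp⟩
    have hq := hmax ⟨p.k, p.n, 2 ^ δ * q.l⟩ ⟨Subset.rfl, hle.2.trans hfreq⟩ hle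
    have hqk : q.k = p.k := hq ▸ rfl
    have hqn : q.n = p.n := hq ▸ rfl
    obtain ⟨ε, hε, hl⟩ := dyadicI_subset_iff.1 hfreq
    obtain rfl : ε = L := by omega
    exact ⟨hqk, hqn, hl.symm⟩
  · rintro ⟨hk, hn, hl⟩
    refine ⟨⟨dyadicI_subset_iff.2 ⟨0, by simp [hk], by simp [hn]⟩,
      dyadicI_subset_iff.2 ⟨L, by omega, hl.symm⟩⟩, fun r hr hqr => ?_⟩
    obtain ⟨δ, hrk, -⟩ := dyadicI_subset_iff.1 hr.1
    obtain ⟨ε, hqk, hqn, hql⟩ := tileLE_iff.1 hqr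
    obtain rfl : ε = 0 := by omega
    ext <;> simp_all

lemma maxTiles_dilate (L : ℕ) (p : Tile) :
    maxTiles (dilate L p.toSet) =
      ((Finset.range (2 ^ L)).image fun j => (⟨p.k, p.n, 2 ^ L * p.l + j⟩ : Tile)) := by
  ext q
  simp only [mem_maxTiles_dilate, Finset.coe_image, mem_image, Finset.coe_range, mem_Iio]
  constructor
  · rintro ⟨hk, hn, hl⟩
    exact ⟨q.l % 2 ^ L, Nat.mod_lt _ (by positivity),
      Tile.ext hk.symm hn.symm (by rw [← hl]; exact Nat.div_add_mod _ _)⟩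
  · rintro ⟨j, hj, rfl⟩
    refine ⟨rfl, rfl, ?_⟩
    rw [Nat.mul_add_div (by positivity), Nat.div_eq_of_lt hj, add_zero]

lemma sum_range_two_mul {E : Type*} [AddCommMonoid E] (g : ℕ → E) (m : ℕ) :
    ∑ j ∈ Finset.range (2 * m), g j = ∑ i ∈ Finset.range m, (g (2 * i) + g (2 * i + 1)) := by
  induction m with
  | zero => simp
  | succ m ih => rw [Nat.mul_succ, Finset.sum_range_succ, Finset.sum_range_succ,
      Finset.sum_range_succ, ih, add_assoc]

lemma sum_frequency_subtiles_eq_subtileSum {E : Type*} [AddCommMonoid E] {F : Tile → E}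
    (hF : ∀ R : Bitile, F R.d + F R.u = F R.left + F R.right) (d : ℕ) (p : Tile) :
    ∑ j ∈ Finset.range (2 ^ d), F ⟨p.k, p.n, 2 ^ d * p.l + j⟩ = subtileSum d F p := by
  induction d generalizing p with
  | zero => simp
  | succ d ih =>
    rw [subtileSum_succ, halfSum, ← ih, ← ih, ← Finset.sum_add_distrib, pow_succ',
      sum_range_two_mul]
    refine Finset.sum_congr rfl fun i _ => ?_
    rw [mul_assoc, ← mul_add, ← add_assoc, ← mul_add]
    exact hF ⟨p.k, p.n, 2 ^ d * p.l + i⟩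

lemma projT_eq_packetAverage_mul_phi (f : ℝ → ℂ) (p : Tile) (x : ℝ) :
    projT p f x = packetAverage f p * p.phi x := by
  rw [projT, coef_eq_sqrt_mul_integral, Tile.wp_eq_sqrt_mul_phi, packetAverage,
    Complex.ofReal_mul, mul_mul_mul_comm, ← mul_assoc, mul_right_comm,
    ofReal_sqrt_mul_self (by positivity)]
  push_cast
  ring

lemma projT_d_add_u {f : ℝ → ℂ} (hf : Integrable f) (R : Bitile) (x : ℝ) :
    projT R.d f x + projT R.u f x = projT R.left f x + projT R.right f x := by
  have hA := walshRecursion_packetAverage hf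
  simp only [projT_eq_packetAverage_mul_phi, hA.d, hA.u, R.phi_d, R.phi_u]
  push_cast
  ring

lemma piProj_dilate {f : ℝ → ℂ} (hf : Integrable f) (d : ℕ) (p : Tile) (x : ℝ) :
    piProj (dilate d p.toSet) f x = subtileSum d (fun q => projT q f x) p := by
  rw [piProj, projSet, maxTiles_dilate, Finset.tsum_subtype' _ (fun q => projT q f x),
    Finset.sum_image fun i _ j _ h => by simpa using congrArg Tile.l h]
  exact sum_frequency_subtiles_eq_subtileSum (F := (projT · f x)) (projT_d_add_u hf · x) d p

/-- The function `x ↦ ∑ A₂ q A₃ q 1_{I_q}(x)`, the sum over the tiles `q` into which `2 ^ d p`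
splits in time. For Walsh coefficients `A₂`, `A₃` it is the product of two phase plane
projections. -/
def pairingDensity (A₂ A₃ : Tile → ℂ) (d : ℕ) (p : Tile) (x : ℝ) : ℂ :=
  subtileSum d (fun q => q.timeI.indicator (fun _ => A₂ q * A₃ q) x) p

section PairingDensity

variable {A₂ A₃ : Tile → ℂ} {f₁ f₂ f₃ : ℝ → ℂ} {p : Tile} {x : ℝ}

lemma pairingDensity_succ (A₂ A₃ : Tile → ℂ) (d : ℕ) (p : Tile) (x : ℝ) :
    pairingDensity A₂ A₃ (d + 1) p x =
      pairingDensity A₂ A₃ d p.double.left x + pairingDensity A₂ A₃ d p.double.right x :=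
  subtileSum_succ d _ p

lemma subtile_timeI_subset (p : Tile) {d j : ℕ} (hj : j < 2 ^ d) :
    (⟨p.k - d, 2 ^ d * p.n + j, p.l⟩ : Tile).timeI ⊆ p.timeI :=
  dyadicI_subset_iff.2 ⟨d, by simp,
    by rw [Nat.mul_add_div (by positivity), Nat.div_eq_of_lt hj, add_zero]⟩

lemma pairingDensity_eq_zero (hx : x ∉ p.timeI) (d : ℕ) : pairingDensity A₂ A₃ d p x = 0 :=
  Finset.sum_eq_zero fun _ hj =>
    indicator_of_notMem (fun h => hx (subtile_timeI_subset p (Finset.mem_range.1 hj) h)) _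

lemma Tile.integrable_indicator_const (p : Tile) (c : ℂ) :
    Integrable (p.timeI.indicator fun _ => c) :=
  (integrable_indicator_iff p.measurableSet_timeI).2 (integrableOn_const p.volume_timeI_ne_top)

lemma integrable_pairingDensity (A₂ A₃ : Tile → ℂ) (d : ℕ) (p : Tile) :
    Integrable (pairingDensity A₂ A₃ d p) := by
  unfold pairingDensity subtileSum
  exact integrable_finsetSum _ fun _ _ => Tile.integrable_indicator_const _ _

lemma integral_pairingDensity (A₂ A₃ : Tile → ℂ) (d : ℕ) (p : Tile) :
    ∫ x, pairingDensity A₂ A₃ d p x = pairing A₂ A₃ d p := by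
  simp only [pairingDensity, pairing, subtileSum]
  rw [integral_finsetSum _ fun _ _ => Tile.integrable_indicator_const _ _]
  refine Finset.sum_congr rfl fun j _ => ?_
  rw [integral_indicator_const _ (Tile.measurableSet_timeI _), Tile.measureReal_timeI,
    Complex.real_smul]
  push_cast
  rfl

lemma projT_mul_projT_self (f₂ f₃ : ℝ → ℂ) (p : Tile) (x : ℝ) :
    projT p f₂ x * projT p f₃ x =
      p.timeI.indicator (fun _ => packetAverage f₂ p * packetAverage f₃ p) x := by
  simp only [projT_eq_packetAverage_mul_phi]
  rw [mul_mul_mul_comm, ← Complex.ofReal_mul, p.phi_mul_self]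
  by_cases hx : x ∈ p.timeI <;> simp [hx]

lemma projT_mul_projT_eq_zero {q : Tile} (hk : p.k = q.k) (hn : p.n ≠ q.n) (x : ℝ) :
    projT p f₂ x * projT q f₃ x = 0 := by
  rw [projT_eq_packetAverage_mul_phi, projT_eq_packetAverage_mul_phi, mul_mul_mul_comm,
    ← Complex.ofReal_mul, Tile.phi_mul_phi_eq_zero hk hn, Complex.ofReal_zero, mul_zero]

lemma subtileSum_mul_subtileSum {F G : Tile → ℂ}
    (hFG : ∀ q r : Tile, q.k = r.k → q.n ≠ r.n → F q * G r = 0) (d : ℕ) (p : Tile) :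
    subtileSum d F p * subtileSum d G p = subtileSum d (fun q => F q * G q) p := by
  unfold subtileSum
  rw [Finset.sum_mul_sum]
  refine Finset.sum_congr rfl fun i hi => Finset.sum_eq_single_of_mem i hi fun j _ hji => ?_
  exact hFG _ _ rfl fun h => hji (Nat.add_left_cancel h).symm

lemma piProj_dilate_mul_piProj_dilate (hf₂ : Integrable f₂) (hf₃ : Integrable f₃) (d : ℕ)
    (p : Tile) (x : ℝ) :
    piProj (dilate d p.toSet) f₂ x * piProj (dilate d p.toSet) f₃ x =
      pairingDensity (packetAverage f₂) (packetAverage f₃) d p x := by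
  rw [piProj_dilate hf₂, piProj_dilate hf₃,
    subtileSum_mul_subtileSum fun _ _ hk hn => projT_mul_projT_eq_zero hk hn x]
  simp only [projT_mul_projT_self, pairingDensity]

/-- The contribution of a bitile to the integrand of the quartile form. -/
def quartileIntegrand (L : ℕ) (f₁ f₂ f₃ : ℝ → ℂ) (P : Bitile) (x : ℝ) : ℂ :=
  (P.phid x : ℂ) * projT P.u f₁ x *
    piProj (dilate L P.d.toSet) f₂ x * piProj (dilate L P.d.toSet) f₃ x

lemma Bitile.phi_d_mul_phi_u (P : Bitile) (x : ℝ) :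
    P.d.phi x * P.u.phi x = P.left.timeI.indicator 1 x - P.right.timeI.indicator 1 x := by
  rw [phi_d, phi_u, ← P.left.phi_mul_self, ← P.right.phi_mul_self]
  ring

lemma Bitile.disjoint_left_right_timeI (P : Bitile) : Disjoint P.left.timeI P.right.timeI :=
  disjoint_left.2 fun _ hl hr => by
    have := eq_of_mem_dyadicI (k := P.k - 1) hl hr
    simp only [left, right] at this
    omega

lemma indicator_sub_indicator_mul_pairingDensity (A₂ A₃ : Tile → ℂ) (L : ℕ) (P : Bitile) (x : ℝ) :
    ((P.left.timeI.indicator 1 x - P.right.timeI.indicator 1 x : ℝ) : ℂ) *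
        pairingDensity A₂ A₃ (L + 1) P.d x =
      pairingDensity A₂ A₃ L P.d.double.left x - pairingDensity A₂ A₃ L P.d.double.right x := by
  rw [pairingDensity_succ]
  by_cases hl : x ∈ P.left.timeI
  · have hr : x ∉ P.right.timeI := disjoint_left.1 P.disjoint_left_right_timeI hl
    simp [hl, hr, pairingDensity_eq_zero (p := P.d.double.right) hr L]
  · by_cases hr : x ∈ P.right.timeI
    · simp [hl, hr, pairingDensity_eq_zero (p := P.d.double.left) hl L]
    · simp [hl, hr, pairingDensity_eq_zero (p := P.d.double.left) hl L,
        pairingDensity_eq_zero (p := P.d.double.right) hr L]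

lemma quartileIntegrand_eq_mul_pairingDensity (hf₂ : Integrable f₂) (hf₃ : Integrable f₃) (L : ℕ)
    (P : Bitile) (x : ℝ) :
    quartileIntegrand L f₁ f₂ f₃ P x = packetAverage f₁ P.u * (((P.d.phi x * P.u.phi x : ℝ) : ℂ) *
      pairingDensity (packetAverage f₂) (packetAverage f₃) L P.d x) := by
  rw [quartileIntegrand, mul_assoc, piProj_dilate_mul_piProj_dilate hf₂ hf₃, P.phid_eq_phi_d,
    projT_eq_packetAverage_mul_phi]
  push_cast
  ring

lemma quartileIntegrand_succ (hf₂ : Integrable f₂) (hf₃ : Integrable f₃) (L : ℕ) (P : Bitile)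
    (x : ℝ) :
    quartileIntegrand (L + 1) f₁ f₂ f₃ P x = packetAverage f₁ P.u *
      (pairingDensity (packetAverage f₂) (packetAverage f₃) L P.d.double.left x -
        pairingDensity (packetAverage f₂) (packetAverage f₃) L P.d.double.right x) := by
  rw [quartileIntegrand_eq_mul_pairingDensity hf₂ hf₃, P.phi_d_mul_phi_u,
    indicator_sub_indicator_mul_pairingDensity]

lemma integrable_quartileIntegrand_succ (hf₂ : Integrable f₂) (hf₃ : Integrable f₃) (L : ℕ)
    (P : Bitile) : Integrable (quartileIntegrand (L + 1) f₁ f₂ f₃ P) := by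
  rw [funext (quartileIntegrand_succ hf₂ hf₃ L P)]
  exact ((integrable_pairingDensity _ _ _ _).sub (integrable_pairingDensity _ _ _ _)).const_mul _

lemma integral_quartileIntegrand_succ (hf₂ : Integrable f₂) (hf₃ : Integrable f₃) (L : ℕ)
    (P : Bitile) :
    ∫ x, quartileIntegrand (L + 1) f₁ f₂ f₃ P x =
      quartileTerm (packetAverage f₁) (packetAverage f₂) (packetAverage f₃) L P := by
  simp_rw [quartileIntegrand_succ hf₂ hf₃]
  rw [integral_const_mul,
    integral_sub (integrable_pairingDensity _ _ _ _) (integrable_pairingDensity _ _ _ _),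
    integral_pairingDensity, integral_pairingDensity]
  rfl

end PairingDensity

/-! ### Summation over the strip -/

lemma Bitile.finite_Icc (P Q : Bitile) : (Icc P Q).Finite := by
  refine Finite.of_injOn (f := Bitile.k) (t := Icc P.k Q.k) ?_ ?_ (Set.finite_Icc _ _)
  · rintro R ⟨hPR, hRQ⟩
    obtain ⟨δ, hδ, -⟩ := le_iff.1 hPR
    obtain ⟨ε, hε, -⟩ := le_iff.1 hRQ
    exact ⟨by omega, by omega⟩
  · rintro R ⟨hPR, hRQ⟩ R' ⟨hPR', hRQ'⟩ hk
    obtain ⟨δ, hδ, hn, -⟩ := le_iff.1 hPR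
    obtain ⟨δ', hδ', hn', -⟩ := le_iff.1 hPR'
    obtain ⟨ε, hε, -, hl⟩ := le_iff.1 hRQ
    obtain ⟨ε', hε', -, hl'⟩ := le_iff.1 hRQ'
    obtain rfl : δ = δ' := by omega
    obtain rfl : ε = ε' := by omega
    exact Bitile.ext hk (hn.trans hn'.symm) (hl.trans hl'.symm)

instance : LocallyFiniteOrder Bitile := .ofFiniteIcc Bitile.finite_Icc

lemma exists_ordConnected_finset_superset {α : Type*} [PartialOrder α] [LocallyFiniteOrder α]
    {U : Set α} (hU : U.OrdConnected) (s : Finset α) (hs : (s : Set α) ⊆ U) :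
    ∃ t : Finset α, s ⊆ t ∧ (t : Set α) ⊆ U ∧ (t : Set α).OrdConnected := by
  let hull : Set α := upperClosure (s : Set α) ∩ lowerClosure (s : Set α)
  have hull_subset_Icc : hull ⊆ ⋃ a ∈ s, ⋃ b ∈ s, Icc a b := by
    rintro x ⟨⟨a, ha, hax⟩, b, hb, hxb⟩
    exact mem_biUnion ha (mem_biUnion hb ⟨hax, hxb⟩)
  have hfin : hull.Finite := (s.finite_toSet.biUnion fun a _ =>
    s.finite_toSet.biUnion fun b _ => finite_Icc a b).subset hull_subset_Icc
  refine ⟨hfin.toFinset, fun x hx => ?_, ?_, ?_⟩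
  · exact hfin.mem_toFinset.2 ⟨subset_upperClosure hx, subset_lowerClosure hx⟩
  · rw [hfin.coe_toFinset]
    exact hull_subset_Icc.trans (iUnion₂_subset fun a ha => iUnion₂_subset fun b hb =>
      hU.out (hs ha) (hs hb))
  · rw [hfin.coe_toFinset]
    exact (UpperSet.upper _).ordConnected.inter (LowerSet.lower _).ordConnected

/-- A family need only be summed over the finite order connected sets, which are cofinal among all
finite sets. -/
theorem norm_le_of_hasSum_of_ordConnected {α E : Type*} [PartialOrder α] [LocallyFiniteOrder α]
    [SeminormedAddCommGroup E] {U : Set α} (hU : U.OrdConnected) {g : α → E} {a : E} {B : ℝ}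
    (hg : HasSum (fun i : U => g i) a)
    (hB : ∀ s : Finset α, (s : Set α).OrdConnected → ‖∑ i ∈ s, g i‖ ≤ B) : ‖a‖ ≤ B := by
  classical
  rw [← mem_closedBall_zero_iff]
  refine Metric.isClosed_closedBall.mem_of_frequently_of_tendsto
    (Filter.frequently_atTop.2 fun s => ?_) hg
  obtain ⟨t, hst, htU, ht⟩ := exists_ordConnected_finset_superset hU (s.map (.subtype (· ∈ U)))
    (by simp)
  refine ⟨t.subtype (· ∈ U), fun i hi => ?_, ?_⟩
  · exact Finset.mem_subtype.2 (hst (Finset.mem_map_of_mem _ hi))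
  · rw [mem_closedBall_zero_iff, Finset.sum_subtype_of_mem g fun x hx => htU hx]
    exact hB t ht

lemma ordConnected_stripBitiles (N : ℕ) : (stripBitiles N).OrdConnected :=
  IsUpperSet.ordConnected fun _ _ hPQ hP => hPQ.2.trans hP

/-- An enumeration of the bitiles in the strip of height `2 ^ N`: the index `((j, l), n)` stands for
the bitile whose time interval is the `n`-th one of length `2 ^ (j + 1 - N)`, and whose frequency
interval is the `l`-th of the `2 ^ j` ones in the strip. -/
def stripBitile (N : ℕ) (i : ((j : ℕ) × Fin (2 ^ j)) × ℕ) : Bitile :=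
  ⟨i.1.1 + 1 - N, i.2, i.1.2⟩

lemma stripBitile_injective (N : ℕ) : Function.Injective (stripBitile N) := by
  rintro ⟨⟨j, l⟩, n⟩ ⟨⟨j', l'⟩, n'⟩ h
  simp only [stripBitile, Bitile.mk.injEq] at h
  obtain ⟨hj, rfl, hl⟩ := h
  obtain rfl : j = j' := by omega
  rw [Fin.ext hl]

lemma range_stripBitile (N : ℕ) : range (stripBitile N) = stripBitiles N := by
  ext P
  have hstrip : P ∈ stripBitiles N ↔ dyadicI (1 - P.k) P.l ⊆ dyadicI N 0 := by
    simp [stripBitiles, Bitile.freqI, dyadicI]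
  rw [hstrip, dyadicI_subset_iff]
  constructor
  · rintro ⟨⟨⟨j, l⟩, n⟩, rfl⟩
    exact ⟨j, by simp only [stripBitile]; ring, (Nat.div_eq_of_lt l.2).symm⟩
  · rintro ⟨j, hN, hl⟩
    have hlt : P.l < 2 ^ j := Nat.lt_of_div_eq_zero (by positivity) hl.symm
    exact ⟨⟨⟨j, P.l, hlt⟩, P.n⟩, Bitile.ext (by simp only [stripBitile]; omega) rfl rfl⟩

lemma summable_stripBitiles_iff {N : ℕ} {g : Bitile → ℝ} :
    Summable (fun P : stripBitiles N => g P) ↔ Summable (g ∘ stripBitile N) := by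
  rw [← range_stripBitile, ← (Equiv.ofInjective _ (stripBitile_injective N)).summable_iff]
  rfl

lemma summable_sq_two_zpow_neg (N : ℕ) :
    Summable fun i : (j : ℕ) × Fin (2 ^ j) => ((2:ℝ) ^ (-((i.1:ℤ) + 1 - N))) ^ 2 := by
  rw [summable_sigma_of_nonneg fun _ => sq_nonneg _]
  refine ⟨fun _ => .of_finite, ?_⟩
  simp only [tsum_fintype, Finset.sum_const, Finset.card_univ, Fintype.card_fin, nsmul_eq_mul]
  refine (summable_geometric_two.mul_left (((2:ℝ) ^ ((N:ℤ) - 1)) ^ 2)).congr fun j => ?_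
  have hscale : (2:ℝ) ^ (-((j:ℤ) + 1 - N)) = 2 ^ ((N:ℤ) - 1) / 2 ^ j := by
    rw [← zpow_natCast, ← zpow_sub₀ two_ne_zero]
    ring_nf
  rw [hscale, one_div, inv_pow]
  push_cast
  field_simp

lemma hasSum_integral_norm_dyadicI {f : ℝ → ℂ} (hf : Integrable f) (k : ℤ) :
    HasSum (fun n => ∫ x in dyadicI k n, ‖f x‖) (∫ x in ⋃ n, dyadicI k n, ‖f x‖) :=
  hasSum_integral_iUnion (measurableSet_dyadicI k)
    (fun _ _ hne => disjoint_left.2 fun _ hx hx' => hne (eq_of_mem_dyadicI hx hx'))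
    hf.norm.integrableOn

lemma setIntegral_norm_le_integral_norm {f : ℝ → ℂ} (hf : Integrable f) (s : Set ℝ) :
    ∫ x in s, ‖f x‖ ≤ ∫ x, ‖f x‖ :=
  setIntegral_le_integral hf.norm (ae_of_all _ fun _ => norm_nonneg _)

lemma summable_integral_norm_stripBitiles {f : ℝ → ℂ} (hf : Integrable f) (N : ℕ) :
    Summable fun P : stripBitiles N => ((2:ℝ) ^ (-P.1.k)) ^ 2 * ∫ x in P.1.timeI, ‖f x‖ := by
  have hsum (k : ℤ) := (hasSum_integral_norm_dyadicI hf k).mul_left (((2:ℝ) ^ (-k)) ^ 2)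
  refine (summable_stripBitiles_iff
    (g := fun P => ((2:ℝ) ^ (-P.k)) ^ 2 * ∫ x in P.timeI, ‖f x‖)).2
    ((summable_prod_of_nonneg fun i => ?_).2
    ⟨fun i => (hsum (i.1 + 1 - N)).summable, ?_⟩)
  · exact mul_nonneg (sq_nonneg _) (integral_nonneg fun _ => norm_nonneg _)
  · refine .of_nonneg_of_le (fun i => tsum_nonneg fun n => ?_) (fun i => ?_)
      ((summable_sq_two_zpow_neg N).mul_right (∫ x, ‖f x‖))
    · exact mul_nonneg (sq_nonneg _) (integral_nonneg fun _ => norm_nonneg _)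
    · refine (hsum (i.1 + 1 - N)).tsum_eq.trans_le ?_
      exact mul_le_mul_of_nonneg_left (setIntegral_norm_le_integral_norm hf _) (sq_nonneg _)

section QuartileForm

variable {f₁ f₂ f₃ : ℝ → ℂ}

lemma norm_packetAverage_le_integral {f : ℝ → ℂ} (hf : Integrable f) (p : Tile) :
    ‖packetAverage f p‖ ≤ 2 ^ (-p.k) * ∫ x, ‖f x‖ :=
  (norm_packetAverage_le hf p).trans
    (mul_le_mul_of_nonneg_left (setIntegral_norm_le_integral_norm hf _) (by positivity))

lemma integral_norm_indicator_packetAverage_mul_le (hf₂ : Integrable f₂) (hf₃ : Integrable f₃)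
    (p : Tile) :
    ∫ x, ‖p.timeI.indicator (fun _ => packetAverage f₂ p * packetAverage f₃ p) x‖ ≤
      2 ^ (-p.k) * (∫ x, ‖f₂ x‖) * ∫ x in p.timeI, ‖f₃ x‖ := by
  simp_rw [norm_indicator_eq_indicator_norm]
  rw [integral_indicator_const _ p.measurableSet_timeI, p.measureReal_timeI, smul_eq_mul, norm_mul]
  calc (2:ℝ) ^ p.k * (‖packetAverage f₂ p‖ * ‖packetAverage f₃ p‖)
      ≤ 2 ^ p.k * ((2 ^ (-p.k) * ∫ x, ‖f₂ x‖) * (2 ^ (-p.k) * ∫ x in p.timeI, ‖f₃ x‖)) := by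
        gcongr
        exacts [norm_packetAverage_le_integral hf₂ p, norm_packetAverage_le hf₃ p]
    _ = 2 ^ (-p.k) * (∫ x, ‖f₂ x‖) * ∫ x in p.timeI, ‖f₃ x‖ := by
        rw [zpow_neg]
        field_simp

lemma integral_norm_pairingDensity_le (hf₂ : Integrable f₂) (hf₃ : Integrable f₃) (d : ℕ)
    (p : Tile) :
    ∫ x, ‖pairingDensity (packetAverage f₂) (packetAverage f₃) d p x‖ ≤
      4 ^ d * (2 ^ (-p.k) * (∫ x, ‖f₂ x‖) * ∫ x in p.timeI, ‖f₃ x‖) := by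
  calc ∫ x, ‖pairingDensity (packetAverage f₂) (packetAverage f₃) d p x‖
      ≤ ∑ j ∈ Finset.range (2 ^ d), ∫ x, ‖(⟨p.k - d, 2 ^ d * p.n + j, p.l⟩ : Tile).timeI.indicator
          (fun _ => packetAverage f₂ ⟨p.k - d, 2 ^ d * p.n + j, p.l⟩ *
            packetAverage f₃ ⟨p.k - d, 2 ^ d * p.n + j, p.l⟩) x‖ := by
        rw [← integral_finsetSum _ fun _ _ => (Tile.integrable_indicator_const _ _).norm]
        exact integral_mono (integrable_pairingDensity _ _ _ _).norm
          (integrable_finsetSum _ fun _ _ => (Tile.integrable_indicator_const _ _).norm)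
          fun x => norm_sum_le (Finset.range (2 ^ d)) _
    _ ≤ ∑ j ∈ Finset.range (2 ^ d),
          2 ^ (-(p.k - d)) * (∫ x, ‖f₂ x‖) * ∫ x in p.timeI, ‖f₃ x‖ := by
        refine Finset.sum_le_sum fun j hj =>
          (integral_norm_indicator_packetAverage_mul_le hf₂ hf₃ _).trans ?_
        refine mul_le_mul_of_nonneg_left ?_ (by positivity)
        exact setIntegral_mono_set hf₃.norm.integrableOn (ae_of_all _ fun _ => norm_nonneg _)
          (subtile_timeI_subset p (Finset.mem_range.1 hj)).eventuallyLE
    _ = 4 ^ d * (2 ^ (-p.k) * (∫ x, ‖f₂ x‖) * ∫ x in p.timeI, ‖f₃ x‖) := by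
        rw [Finset.sum_const, Finset.card_range, nsmul_eq_mul, neg_sub, sub_eq_add_neg,
          zpow_add₀ two_ne_zero, zpow_natCast, show (4:ℝ) = 2 * 2 by norm_num, mul_pow]
        push_cast
        ring

lemma integral_norm_quartileIntegrand_le (hf₁ : Integrable f₁) (hf₂ : Integrable f₂)
    (hf₃ : Integrable f₃) (L : ℕ) (P : Bitile) :
    ∫ x, ‖quartileIntegrand L f₁ f₂ f₃ P x‖ ≤
      4 ^ L * (∫ x, ‖f₁ x‖) * (∫ x, ‖f₂ x‖) * ((2 ^ (-P.k)) ^ 2 * ∫ x in P.timeI, ‖f₃ x‖) := by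
  have hpoint (x : ℝ) : ‖quartileIntegrand L f₁ f₂ f₃ P x‖ ≤ ‖packetAverage f₁ P.u‖ *
      ‖pairingDensity (packetAverage f₂) (packetAverage f₃) L P.d x‖ := by
    rw [quartileIntegrand_eq_mul_pairingDensity hf₂ hf₃, norm_mul, norm_mul, Complex.norm_real,
      Real.norm_eq_abs, abs_mul]
    refine mul_le_mul_of_nonneg_left (mul_le_of_le_one_left (norm_nonneg _) ?_) (norm_nonneg _)
    exact mul_le_one₀ (P.d.abs_phi_le_one x) (abs_nonneg _) (P.u.abs_phi_le_one x)
  calc ∫ x, ‖quartileIntegrand L f₁ f₂ f₃ P x‖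
      ≤ ‖packetAverage f₁ P.u‖ *
          ∫ x, ‖pairingDensity (packetAverage f₂) (packetAverage f₃) L P.d x‖ := by
        rw [← integral_const_mul]
        exact integral_mono_of_nonneg (ae_of_all _ fun _ => norm_nonneg _)
          ((integrable_pairingDensity _ _ _ _).norm.const_mul _) (ae_of_all _ hpoint)
    _ ≤ (2 ^ (-P.k) * ∫ x, ‖f₁ x‖) *
          (4 ^ L * (2 ^ (-P.k) * (∫ x, ‖f₂ x‖) * ∫ x in P.timeI, ‖f₃ x‖)) := by
        gcongr
        exacts [norm_packetAverage_le_integral hf₁ P.u,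
          integral_norm_pairingDensity_le hf₂ hf₃ L P.d]
    _ = _ := by ring

lemma hasSum_quartileTerm (hf₁ : Integrable f₁) (hf₂ : Integrable f₂) (hf₃ : Integrable f₃)
    (L N : ℕ) :
    HasSum (fun P : stripBitiles N =>
        quartileTerm (packetAverage f₁) (packetAverage f₂) (packetAverage f₃) L P)
      (quartileForm (L + 1) N f₁ f₂ f₃) := by
  have : Countable (stripBitiles N) := by
    rw [← range_stripBitile]
    exact (countable_range _).to_subtype
  simp_rw [← integral_quartileIntegrand_succ hf₂ hf₃]
  refine hasSum_integral_of_summable_integral_norm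
    (fun P => integrable_quartileIntegrand_succ hf₂ hf₃ L P) ?_
  exact .of_nonneg_of_le (fun P => integral_nonneg fun _ => norm_nonneg _)
    (fun P => integral_norm_quartileIntegrand_le hf₁ hf₂ hf₃ (L + 1) P)
    ((summable_integral_norm_stripBitiles hf₃ N).mul_left _)

theorem norm_quartileForm_succ_le (hf₁ : Integrable f₁) (hf₂ : Integrable f₂)
    (hf₃ : Integrable f₃) (L N : ℕ) {B : ℝ}
    (hB : ∀ PP : Finset Bitile, (PP : Set Bitile).OrdConnected →
      ‖∑ P ∈ PP, quartileTerm (packetAverage f₁) (packetAverage f₂) (packetAverage f₃) L P‖ ≤ B) :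
    ‖quartileForm (L + 1) N f₁ f₂ f₃‖ ≤ B :=
  norm_le_of_hasSum_of_ordConnected (ordConnected_stripBitiles N)
    (hasSum_quartileTerm hf₁ hf₂ hf₃ L N) hB

end QuartileForm

/-! ### The restricted type estimate -/

/-- The union of the dyadic intervals in which the density of `E₁` exceeds `4 |E₁| / |E₂|` or that
of `E₃` exceeds `4 |E₃| / |E₂|`; removing it from `E₂` leaves the major subset. -/
def exceptionalSet (E₁ E₂ E₃ : Set ℝ) : Set ℝ :=
  denseUnion E₁ (4 * (volume.real E₁ / volume.real E₂)) ∪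
    denseUnion E₃ (4 * (volume.real E₃ / volume.real E₂))

section ExceptionalSet

variable {E₁ E₂ E₃ : Set ℝ}

lemma measurableSet_exceptionalSet (E₁ E₂ E₃ : Set ℝ) : MeasurableSet (exceptionalSet E₁ E₂ E₃) :=
  (measurableSet_denseUnion _ _).union (measurableSet_denseUnion _ _)

lemma half_volume_le_volume_diff_exceptionalSet (mE₁ : MeasurableSet E₁) (mE₃ : MeasurableSet E₃)
    (hE₁ : volume E₁ < ∞) (hE₂ : volume E₂ < ∞) (hE₃ : volume E₃ < ∞) :
    volume E₂ / 2 ≤ volume (E₂ \ exceptionalSet E₁ E₂ E₃) := by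
  rcases eq_or_ne (volume E₂) 0 with hE₂₀ | hE₂₀
  · simp [hE₂₀]
  have hpos : 0 < volume.real E₂ := ENNReal.toReal_pos hE₂₀ hE₂.ne
  have hΩ : volume (exceptionalSet E₁ E₂ E₃) ≤ volume E₂ / 2 := by
    calc volume (exceptionalSet E₁ E₂ E₃)
        ≤ ENNReal.ofReal (volume.real E₂ / 4) + ENNReal.ofReal (volume.real E₂ / 4) :=
          (measure_union_le _ _).trans
            (add_le_add (volume_denseUnion_le mE₁ hE₁ hpos) (volume_denseUnion_le mE₃ hE₃ hpos))
      _ = ENNReal.ofReal (volume.real E₂ / 2) := by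
          rw [← ENNReal.ofReal_add (by positivity) (by positivity)]
          ring_nf
      _ = volume E₂ / 2 := by
          rw [ENNReal.ofReal_div_of_pos two_pos, ofReal_measureReal hE₂.ne, ENNReal.ofReal_ofNat]
  calc volume E₂ / 2 = volume E₂ - volume E₂ / 2 := (ENNReal.sub_half hE₂.ne).symm
    _ ≤ volume E₂ - volume (exceptionalSet E₁ E₂ E₃) := tsub_le_tsub_left hΩ _
    _ ≤ volume (E₂ \ exceptionalSet E₁ E₂ E₃) := le_measure_sdiff

end ExceptionalSet

section RestrictedType

variable {E₁ E₂ E₂' E₃ F Ω : Set ℝ} {f f₁ f₂ f₃ : ℝ → ℂ}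

lemma IsDominatedBy.sizeLE_of_denseUnion_subset {t : ℝ} (h : IsDominatedBy f F)
    (hΩ : denseUnion F t ⊆ Ω) (d : ℕ) (PP : Finset Bitile) :
    SizeLE (packetAverage f) Ω d PP (2 * t) := fun P _ =>
  ((walshRecursion_packetAverage h.integrable).treeEnergy_le
    (fun _ hp => h.norm_packetAverage_le_of_not_subset fun hsub => hp (hsub.trans hΩ))
    d PP P).trans_eq (by ring)

lemma IsDominatedBy.sizeLE_two (h : IsDominatedBy f F) (Ω : Set ℝ) (d : ℕ) (PP : Finset Bitile) :
    SizeLE (packetAverage f) Ω d PP 2 := fun P _ =>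
  ((walshRecursion_packetAverage h.integrable).treeEnergy_le
    (fun p _ => h.norm_packetAverage_le_one p) d PP P).trans_eq (by ring)

lemma sizesLE_packetAverage (h₁ : IsDominatedBy f₁ E₁) (h₂ : IsDominatedBy f₂ E₂')
    (h₃ : IsDominatedBy f₃ E₃) (E₂ : Set ℝ) (L : ℕ) (PP : Finset Bitile) :
    SizesLE (packetAverage f₁) (packetAverage f₂) (packetAverage f₃) (exceptionalSet E₁ E₂ E₃) L PP
      (8 * (volume.real E₁ / volume.real E₂)) 2 (8 * (volume.real E₃ / volume.real E₂)) where
  first := by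
    rw [show 8 * (volume.real E₁ / volume.real E₂) = 2 * (4 * (volume.real E₁ / volume.real E₂))
      by ring]
    exact h₁.sizeLE_of_denseUnion_subset subset_union_left 0 PP
  second := h₂.sizeLE_two _ _ _
  third := by
    rw [show 8 * (volume.real E₃ / volume.real E₂) = 2 * (4 * (volume.real E₃ / volume.real E₂))
      by ring]
    exact h₃.sizeLE_of_denseUnion_subset subset_union_right (L + 1) PP

lemma isAdmissible_packetAverage (h₁ : IsDominatedBy f₁ E₁) (h₂ : IsDominatedBy f₂ (E₂ \ Ω))
    (h₃ : IsDominatedBy f₃ E₃) (mE₂ : MeasurableSet E₂) (hE₂ : volume E₂ < ∞) (L : ℕ) :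
    IsAdmissible (packetAverage f₁) (packetAverage f₂) (packetAverage f₃) Ω L
      (volume.real E₁) (volume.real E₂) (volume.real E₃) where
  recursion₂ := walshRecursion_packetAverage h₂.integrable
  recursion₃ := walshRecursion_packetAverage h₃.integrable
  eq_zero₂ _ hp := packetAverage_eq_zero fun _ hx => h₂.eq_zero fun hx' => hx'.2 (hp hx)
  bessel₁ := h₁.besselBound Ω 0
  bessel₂ := (h₂.mono sdiff_subset mE₂ hE₂).besselBound Ω (L + 1)
  bessel₃ := h₃.besselBound Ω (L + 1)

lemma quartileTerm_eq_zero_of_volume_eq_zero (h₁ : IsDominatedBy f₁ E₁)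
    (h₃ : IsDominatedBy f₃ E₃) (h₀ : volume E₁ = 0 ∨ volume E₃ = 0) (A₂ : Tile → ℂ) (L : ℕ)
    (P : Bitile) : quartileTerm (packetAverage f₁) A₂ (packetAverage f₃) L P = 0 := by
  rcases h₀ with h₀ | h₀
  · simp [quartileTerm, treeTerm, h₁.packetAverage_eq_zero_of_volume_eq_zero h₀]
  · simp [quartileTerm, treeTerm, pairing, subtileSum,
      h₃.packetAverage_eq_zero_of_volume_eq_zero h₀]

lemma quartileForm_succ_eq_zero (h₁ : IsDominatedBy f₁ E₁) (h₂ : IsDominatedBy f₂ E₂)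
    (h₃ : IsDominatedBy f₃ E₃) (h₀ : volume E₁ = 0 ∨ volume E₃ = 0) (L N : ℕ) :
    quartileForm (L + 1) N f₁ f₂ f₃ = 0 :=
  norm_le_zero_iff.1 <| norm_quartileForm_succ_le h₁.integrable h₂.integrable h₃.integrable L N
    fun _ _ => by simp [quartileTerm_eq_zero_of_volume_eq_zero h₁ h₃ h₀]

lemma norm_quartileForm_succ_le_mul_rpow {α₁ α₃ θ₁ θ₃ : ℝ} (h₁ : IsDominatedBy f₁ E₁)
    (h₂ : IsDominatedBy f₂ (E₂ \ exceptionalSet E₁ E₂ E₃)) (h₃ : IsDominatedBy f₃ E₃)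
    (mE₂ : MeasurableSet E₂) (hE₂ : volume E₂ < ∞) (hE₁₀ : volume E₁ ≠ 0) (hE₃₀ : volume E₃ ≠ 0)
    (h₁₂ : volume E₁ ≤ volume E₂) (h₃₂ : volume E₃ ≤ volume E₂)
    (hθ₁ : θ₁ ∈ Icc 0 (1 / 2)) (hθ₃ : θ₃ ∈ Icc 0 (1 / 2)) (hα₁ : α₁ ≤ 1 - θ₁)
    (hα₃ : α₃ ≤ 1 - θ₃) (hθ : 1 / 2 < θ₁ + θ₃) (L N : ℕ) :
    ‖quartileForm (L + 1) N f₁ f₂ f₃‖ ≤ 540 * 512 / (1 - 2 * (1 / 4 : ℝ) ^ (θ₁ + θ₃)) *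
      (volume.real E₂ * (volume.real E₁ / volume.real E₂) ^ α₁ *
        (volume.real E₃ / volume.real E₂) ^ α₃) := by
  refine norm_quartileForm_succ_le h₁.integrable h₂.integrable h₃.integrable L N fun PP hPP => ?_
  have ha : 0 < volume.real E₁ := ENNReal.toReal_pos hE₁₀ h₁.volume_lt_top.ne
  have hc : 0 < volume.real E₃ := ENNReal.toReal_pos hE₃₀ h₃.volume_lt_top.ne
  have hab : volume.real E₁ ≤ volume.real E₂ := ENNReal.toReal_mono hE₂.ne h₁₂
  have hcb : volume.real E₃ ≤ volume.real E₂ := ENNReal.toReal_mono hE₂.ne h₃₂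
  have hb : 0 < volume.real E₂ := ha.trans_le hab
  have hadm := isAdmissible_packetAverage h₁ h₂ h₃ mE₂ hE₂ L
  rw [← div_mul_cancel₀ (volume.real E₁) hb.ne', ← div_mul_cancel₀ (volume.real E₃) hb.ne'] at hadm
  exact hadm.norm_sum_quartileTerm_le hb.le (div_pos ha hb) (div_le_one_of_le₀ hab hb.le)
    (div_pos hc hb) (div_le_one_of_le₀ hcb hb.le) hPP (sizesLE_packetAverage h₁ h₂ h₃ E₂ L PP)
    hθ₁ hθ₃ hα₁ hα₃ hθ

lemma mul_div_rpow_mul_div_rpow {a b c α₁ α₂ α₃ : ℝ} (ha : 0 ≤ a) (hb : 0 < b) (hc : 0 ≤ c)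
    (hα : α₁ + α₂ + α₃ = 1) :
    b * (a / b) ^ α₁ * (c / b) ^ α₃ = a ^ α₁ * b ^ α₂ * c ^ α₃ := by
  have hb' : b = b ^ α₁ * b ^ α₂ * b ^ α₃ := by
    rw [← Real.rpow_add hb, ← Real.rpow_add hb, hα, Real.rpow_one]
  have := Real.rpow_pos_of_pos hb α₁
  have := Real.rpow_pos_of_pos hb α₃
  rw [Real.div_rpow ha hb.le, Real.div_rpow hc hb.le]
  nth_rw 1 [hb']
  field_simp

theorem exists_nnnorm_quartileForm_le {α₁ α₂ α₃ : ℝ} (hα₁ : α₁ < 1) (hα₃ : α₃ < 1)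
    (hα₂ : -(1 / 2) < α₂) (hα : α₁ + α₂ + α₃ = 1) :
    ∃ C : ℝ≥0, ∀ E₁ E₂ E₃ : Set ℝ, MeasurableSet E₂ → volume E₂ < ∞ →
      volume E₁ ≤ volume E₂ → volume E₃ ≤ volume E₂ →
      ∀ f₁ f₂ f₃ : ℝ → ℂ, IsDominatedBy f₁ E₁ →
        IsDominatedBy f₂ (E₂ \ exceptionalSet E₁ E₂ E₃) → IsDominatedBy f₃ E₃ → ∀ L N : ℕ,
        (‖quartileForm (L + 1) N f₁ f₂ f₃‖₊ : ℝ≥0∞) ≤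
          C * volume E₁ ^ α₁ * volume E₂ ^ α₂ * volume E₃ ^ α₃ := by
  obtain ⟨θ₁, hθ₁, θ₃, hθ₃, hαθ₁, hαθ₃, hθ⟩ :=
    exists_decay_exponents hα₁ hα₃ (by linarith : α₁ + α₃ < 3 / 2)
  set C := 540 * 512 / (1 - 2 * (1 / 4 : ℝ) ^ (θ₁ + θ₃)) with hC
  have hC₀ : 0 ≤ C := div_nonneg (by norm_num) (by linarith [two_mul_quarter_rpow_lt_one hθ])
  refine ⟨C.toNNReal, fun E₁ E₂ E₃ mE₂ hE₂ h₁₂ h₃₂ f₁ f₂ f₃ h₁ h₂ h₃ L N => ?_⟩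
  by_cases h₀ : volume E₁ = 0 ∨ volume E₃ = 0
  · simp [quartileForm_succ_eq_zero h₁ h₂ h₃ h₀]
  obtain ⟨hE₁₀, hE₃₀⟩ := not_or.1 h₀
  have hE₂₀ : volume E₂ ≠ 0 := ((pos_iff_ne_zero.2 hE₁₀).trans_le h₁₂).ne'
  have ha : 0 < volume.real E₁ := ENNReal.toReal_pos hE₁₀ h₁.volume_lt_top.ne
  have hb : 0 < volume.real E₂ := ENNReal.toReal_pos hE₂₀ hE₂.ne
  have hc : 0 < volume.real E₃ := ENNReal.toReal_pos hE₃₀ h₃.volume_lt_top.ne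
  have hle := norm_quartileForm_succ_le_mul_rpow h₁ h₂ h₃ mE₂ hE₂ hE₁₀ hE₃₀ h₁₂ h₃₂ hθ₁ hθ₃
    hαθ₁ hαθ₃ hθ L N
  rw [mul_div_rpow_mul_div_rpow ha.le hb hc.le hα, ← hC, ← mul_assoc, ← mul_assoc] at hle
  rw [← ofReal_measureReal h₁.volume_lt_top.ne, ← ofReal_measureReal hE₂.ne,
    ← ofReal_measureReal h₃.volume_lt_top.ne, ← enorm_eq_nnnorm, ← ofReal_norm,
    ENNReal.ofReal_rpow_of_pos ha, ENNReal.ofReal_rpow_of_pos hb, ENNReal.ofReal_rpow_of_pos hc,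
    ← ENNReal.ofReal, ← ENNReal.ofReal_mul hC₀, ← ENNReal.ofReal_mul (by positivity),
    ← ENNReal.ofReal_mul (by positivity)]
  exact ENNReal.ofReal_le_ofReal hle

end RestrictedType

theorem quartileForm_restricted_type_general {α₁ α₂ α₃ : ℝ} (hα₁ : α₁ < 1) (hα₃ : α₃ < 1)
    (hα₂ : -(1 / 2) < α₂) (hα : α₁ + α₂ + α₃ = 1) :
    ∃ C : ℝ≥0, ∀ E₁ E₂ E₃ : Set ℝ, MeasurableSet E₁ → MeasurableSet E₂ → MeasurableSet E₃ →
      volume E₂ < ∞ → volume E₁ ≤ volume E₂ → volume E₃ ≤ volume E₂ →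
      ∃ E₂' : Set ℝ, MeasurableSet E₂' ∧ E₂' ⊆ E₂ ∧ volume E₂ / 2 ≤ volume E₂' ∧
        ∀ L N : ℕ, 1 ≤ L →
        ∀ f₁ f₂ f₃ : ℝ → ℂ, Measurable f₁ → Measurable f₂ → Measurable f₃ →
          (∀ x, ‖f₁ x‖ ≤ E₁.indicator 1 x) →
          (∀ x, ‖f₂ x‖ ≤ E₂'.indicator 1 x) →
          (∀ x, ‖f₃ x‖ ≤ E₃.indicator 1 x) →
          (‖quartileForm L N f₁ f₂ f₃‖₊ : ℝ≥0∞) ≤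
            C * volume E₁ ^ α₁ * volume E₂ ^ α₂ * volume E₃ ^ α₃ := by
  obtain ⟨C, hC⟩ := exists_nnnorm_quartileForm_le hα₁ hα₃ hα₂ hα
  refine ⟨C, fun E₁ E₂ E₃ mE₁ mE₂ mE₃ hE₂ h₁₂ h₃₂ => ?_⟩
  have hE₁ : volume E₁ < ∞ := h₁₂.trans_lt hE₂
  have hE₃ : volume E₃ < ∞ := h₃₂.trans_lt hE₂
  have mE₂' : MeasurableSet (E₂ \ exceptionalSet E₁ E₂ E₃) :=
    mE₂.diff (measurableSet_exceptionalSet E₁ E₂ E₃)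
  refine ⟨E₂ \ exceptionalSet E₁ E₂ E₃, mE₂', sdiff_subset,
    half_volume_le_volume_diff_exceptionalSet mE₁ mE₃ hE₁ hE₂ hE₃,
    fun L N hL f₁ f₂ f₃ mf₁ mf₂ mf₃ hf₁ hf₂ hf₃ => ?_⟩
  obtain ⟨L, rfl⟩ := Nat.exists_eq_add_of_le' hL
  exact hC E₁ E₂ E₃ mE₂ hE₂ h₁₂ h₃₂ f₁ f₂ f₃ ⟨mf₁, mE₁, hE₁, hf₁⟩
    ⟨mf₂, mE₂', (measure_mono sdiff_subset).trans_lt hE₂, hf₂⟩ ⟨mf₃, mE₃, hE₃, hf₃⟩ L N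

/-- Theorem 2 (uniform restricted type bounds with one negative exponent). -/
theorem quartileForm_restricted_type :
    ∀ α1 α2 α3 : ℝ, 0 < α1 → α1 < 1 → 0 < α3 → α3 < 1 → -(1/2) < α2 → α2 ≤ 0 →
      α1 + α2 + α3 = 1 →
    ∃ C : ℝ≥0, ∀ E1 E2 E3 : Set ℝ,
      MeasurableSet E1 → MeasurableSet E2 → MeasurableSet E3 →
      E1 ⊆ Ici 0 → E2 ⊆ Ici 0 → E3 ⊆ Ici 0 →
      volume E1 < ∞ → volume E2 < ∞ → volume E3 < ∞ →
      volume E1 ≤ volume E2 → volume E3 ≤ volume E2 →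
      ∃ E2' : Set ℝ, MeasurableSet E2' ∧ E2' ⊆ E2 ∧ volume E2 / 2 ≤ volume E2' ∧
        ∀ (L N : ℕ), 2 ≤ L →
        ∀ f1 f2 f3 : ℝ → ℂ, Measurable f1 → Measurable f2 → Measurable f3 →
          (∀ x, ‖f1 x‖ ≤ E1.indicator 1 x) →
          (∀ x, ‖f2 x‖ ≤ E2'.indicator 1 x) →
          (∀ x, ‖f3 x‖ ≤ E3.indicator 1 x) →
          (‖quartileForm L N f1 f2 f3‖₊ : ℝ≥0∞) ≤
            C * volume E1 ^ α1 * volume E2 ^ α2 * volume E3 ^ α3 := by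
  intro α1 α2 α3 _ hα1 _ hα3 hα2 _ hα
  obtain ⟨C, hC⟩ := quartileForm_restricted_type_general hα1 hα3 hα2 hα
  refine ⟨C, fun E1 E2 E3 mE1 mE2 mE3 _ _ _ _ hE2 _ h12 h32 => ?_⟩
  obtain ⟨E2', mE2', hsub, hhalf, hbound⟩ := hC E1 E2 E3 mE1 mE2 mE3 hE2 h12 h32
  exact ⟨E2', mE2', hsub, hhalf, fun L N hL => hbound L N (one_le_two.trans hL)⟩

end Quartile
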